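/- Let σ > 0, μ ∈ {1, −1} and T₀ > 0. Let u : ℝ × [−T₀,T₀] → ℝ be a smooth solution of the mKdV equation ∂_t u + ∂_x³ u + μ u² ∂_x u = 0 such that for every t ∈ [−T₀,T₀] the function U(·,t) defined by the spatial Fourier multiplier U(x,t) = (1/(2π)) ∫_ℝ e^{ixξ} cosh(σ|ξ|) 𝓕_x u(ξ,t) dξ is well defined and Schwartz in x, uniformly enough in t to differentiate under the integral sign. Define A_σ(t) = ∫_ℝ U(x,t)² dx + ∫_ℝ (∂_x U(x,t))² dx + ∫_ℝ (∂_x² U(x,t))² dx − (μ/6) ∫_ℝ U(x,t)⁴ dx − (5μ/3) ∫_ℝ U(x,t)² (∂_x U(x,t))² dx + (1/18) ∫_ℝ U(x,t)⁶ dx. Then there exist b ∈ (1/2, 1) and a constant C > 0, independent of u, σ and T₀, such that for every t ∈ [0,T₀] and every Schwartz function v : ℝ² → ℝ with v(x,t′) = u(x,t′) for all (x,t′) ∈ ℝ × [−T₀,T₀], one has A_σ(t) ≤ A_σ(0) + C σ² N⁴ (1 + N² + N⁴), where N = ( ∫_{ℝ²} cosh²(σ|ξ|) (1+|ξ|)⁴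 (1+|τ−ξ³|)^{2b} |v̂(ξ,τ)|² dξ dτ )^{1/2}. -/

import Mathlib

open MeasureTheory ENNReal

namespace MK

open Complex FourierTransform Filter Topology SchwartzMap

/-- Fourier transform with the `e^{-iyξ}` convention. -/
noncomputable def ft (f : ℝ → ℂ) (ξ : ℝ) : ℂ := ∫ y : ℝ, cexp (-I * y * ξ) * f y

/-- Unnormalised inverse Fourier transform. -/
noncomputable def ift (g : ℝ → ℂ) (x : ℝ) : ℂ := ∫ ξ : ℝ, cexp (I * x * ξ) * g ξ

lemma norm_exp1 (x ξ : ℝ) : ‖cexp (I * x * ξ)‖ = 1 := by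
  have : I * x * ξ = ((x * ξ : ℝ) : ℂ) * I := by push_cast; ring
  rw [this, Complex.norm_exp_ofReal_mul_I]

lemma norm_exp2 (x ξ : ℝ) : ‖cexp (-I * x * ξ)‖ = 1 := by
  have : -I * x * ξ = ((-(x * ξ) : ℝ) : ℂ) * I := by push_cast; ring
  rw [this, Complex.norm_exp_ofReal_mul_I]

lemma ft_eq (f : ℝ → ℂ) (ξ : ℝ) : ft f ξ = 𝓕 f (ξ / (2 * Real.pi)) := by
  rw [Real.fourier_real_eq_integral_exp_smul]
  unfold ft
  congr 1; ext y
  rw [smul_eq_mul]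
  congr 2
  have : (Real.pi : ℂ) ≠ 0 := by exact_mod_cast Real.pi_ne_zero
  push_cast
  field_simp

lemma ift_eq_ft (g : ℝ → ℂ) (x : ℝ) : ift g x = ft g (-x) := by
  unfold ift ft
  congr 1; ext y
  congr 2
  push_cast; ring

lemma pi2_pos : (0 : ℝ) < 2 * Real.pi := by positivity

lemma integrable_ft_iff (f : ℝ → ℂ) : Integrable (ft f) ↔ Integrable (𝓕 f) := by
  have : ft f = fun ξ => 𝓕 f (ξ / (2 * Real.pi)) := funext (ft_eq f)
  rw [this]
  exact integrable_comp_div_iff (𝓕 f) pi2_pos.ne'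

lemma ft_inversion {f : ℝ → ℂ} (hc : Continuous f) (hf : Integrable f) (hF : Integrable (ft f))
    (x : ℝ) : f x = (1 / (2 * Real.pi) : ℂ) * ift (ft f) x := by
  have h := congrFun (hc.fourierInv_fourier_eq hf ((integrable_ft_iff f).1 hF)) x
  rw [← h, Real.fourierInv_eq' ]
  have : ift (ft f) x = ∫ ξ : ℝ, (fun η : ℝ => cexp (I * x * (2 * Real.pi * η : ℝ)) * 𝓕 f η)
      (ξ / (2 * Real.pi)) := by
    unfold ift
    congr 1; ext ξ
    simp only [ft_eq]
    congr 3
    have := pi2_pos.ne'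
    field_simp
  rw [this, Measure.integral_comp_div (fun η : ℝ => cexp (I * x * (2 * Real.pi * η : ℝ)) * 𝓕 f η)
    (2 * Real.pi), abs_of_pos pi2_pos, Complex.real_smul, ← mul_assoc]
  have hp : (Real.pi : ℂ) ≠ 0 := by exact_mod_cast Real.pi_ne_zero
  have : (1 / (2 * Real.pi) : ℂ) * ((2 * Real.pi : ℝ) : ℂ) = 1 := by push_cast; field_simp
  rw [this, one_mul]
  congr 1; ext η
  rw [smul_eq_mul]
  congr 2
  simp only [RCLike.inner_apply, conj_trivial]
  push_cast; ring

lemma ft_of_ift {f g : ℝ → ℂ} (hc : Continuous g) (hg : Integrable g) (hf : Integrable f)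
    (h : ∀ x, f x = (1 / (2 * Real.pi) : ℂ) * ift g x) (ξ : ℝ) : ft f ξ = g ξ := by
  have hp : (Real.pi : ℂ) ≠ 0 := by exact_mod_cast Real.pi_ne_zero
  have h1 : ∀ x, ft g x = (2 * Real.pi) * f (-x) := by
    intro x
    rw [h, ift_eq_ft, neg_neg]
    field_simp
  have h2 : Integrable (ft g) := by
    have : ft g = fun x => (2 * Real.pi : ℂ) * f (-x) := funext h1
    rw [this]
    exact hf.comp_neg.const_mul _
  rw [ft_inversion hc hg h2 ξ]
  unfold ift
  rw [← integral_neg_eq_self, ← integral_const_mul]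
  unfold ft
  congr 1; ext x
  have := h1 (-x)
  unfold ft at this
  rw [this, neg_neg]
  have e : -I * x * ξ = I * ξ * ((-x : ℝ) : ℂ) := by push_cast; ring
  rw [e]
  field_simp

lemma continuous_fourier {g : ℝ → ℂ} (h1 : Integrable g) : Continuous (𝓕 g) :=
  VectorFourier.fourierIntegral_continuous Real.continuous_fourierChar
      (by exact continuous_inner) h1

lemma fourier_selfadj {g : ℝ → ℂ} (h1 : Integrable g) (Φ : 𝓢(ℝ, ℂ)) :
    ∫ x, (𝓕 (Φ : ℝ → ℂ)) x * g x = ∫ x, Φ x * 𝓕 g x := by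
  have e5 := VectorFourier.integral_bilin_fourierIntegral_eq_flip (ContinuousLinearMap.mul ℂ ℂ)
    (L := innerₗ ℝ) (μ := (volume : Measure ℝ)) (ν := (volume : Measure ℝ))
    Real.continuous_fourierChar (by exact continuous_inner) Φ.integrable h1
  simp only [ContinuousLinearMap.mul_apply', flip_innerₗ] at e5
  exact e5

lemma fourier_ae_L2_aux {g : ℝ → ℂ} (h1 : Integrable g) (h2 : MemLp g 2) (Φ : 𝓢(ℝ, ℂ)) :
    ∫ x, Φ x * (𝓕 (h2.toLp g) : Lp (α := ℝ) ℂ 2) x = ∫ x, Φ x * 𝓕 g x := by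
  have e1 := Lp.fourier_toTemperedDistribution_eq (h2.toLp g)
  have e2 := congrArg (fun T : 𝓢'(ℝ, ℂ) => T Φ) e1
  simp only [TemperedDistribution.fourier_apply, Lp.toTemperedDistribution_apply,
    smul_eq_mul] at e2
  rw [← e2, ← fourier_selfadj h1 Φ]
  apply integral_congr_ae
  filter_upwards [h2.coeFn_toLp] with x hx
  rw [hx, SchwartzMap.fourier_coe]

lemma schw_aux1 {φ : ℝ → ℝ} (hφ : ContDiff ℝ (⊤ : ℕ∞) φ) : ContDiff ℝ (⊤ : ℕ∞) (fun x => (φ x : ℂ)) := Complex.ofRealCLM.contDiff.comp hφ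
lemma schw_aux2 {φ : ℝ → ℝ} (hφc : HasCompactSupport φ) : HasCompactSupport (fun x => (φ x : ℂ)) := hφc.comp_left (g := Complex.ofReal) (by simp)
lemma schw_aux3 {φ : ℝ → ℂ}  (hφ : ContDiff ℝ (⊤ : ℕ∞) φ) (hφc : HasCompactSupport φ) : ∃ Φ : 𝓢(ℝ, ℂ), ∀ x, Φ x = (φ x : ℂ) := 
  ⟨hφc.toSchwartzMap hφ, fun x => HasCompactSupport.toSchwartzMap_toFun hφc hφ x⟩ 

lemma ae_eq_of_schwartz {T F : ℝ → ℂ} (hT : LocallyIntegrable T) (hF : Continuous F)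
    (h : ∀ Φ : 𝓢(ℝ, ℂ), ∫ x, Φ x * T x = ∫ x, Φ x * F x) : T =ᵐ[volume] F := by
  refine ae_eq_of_integral_contDiff_smul_eq hT hF.locallyIntegrable ?_
  intro φ hφ hφc
  obtain ⟨Φ, hΦ⟩ := schw_aux3 (schw_aux1 hφ) (schw_aux2 hφc)
  have h := h Φ
  simp only [hΦ] at h
  simp only [Complex.real_smul]
  exact h

lemma fourier_ae_L2 {g : ℝ → ℂ} (h1 : Integrable g) (h2 : MemLp g 2) :
    ((𝓕 (h2.toLp g) : Lp (α := ℝ) ℂ 2) : ℝ → ℂ) =ᵐ[volume] 𝓕 g :=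
  ae_eq_of_schwartz ((Lp.memLp _).locallyIntegrable (by norm_num)) (continuous_fourier h1)
    (fourier_ae_L2_aux h1 h2)

lemma plancherel_1d {g : ℝ → ℂ} (h1 : Integrable g) :
    ∫⁻ x, ‖ift g x‖ₑ ^ 2 ≤ ENNReal.ofReal (2 * Real.pi) * ∫⁻ ξ, ‖g ξ‖ₑ ^ 2 := by
  by_cases hfin : ∫⁻ ξ, ‖g ξ‖ₑ ^ 2 = ∞
  · rw [hfin, ENNReal.mul_top (by simp [Real.pi_pos])]; exact le_top
  have h2 : MemLp g 2 := by
    refine ⟨h1.1, ?_⟩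
    rw [eLpNorm_lt_top_iff_lintegral_rpow_enorm_lt_top (by norm_num) (by norm_num)]
    simpa using lt_top_iff_ne_top.2 hfin
  have key : ∫⁻ x, ‖𝓕 g x‖ₑ ^ 2 = ∫⁻ ξ, ‖g ξ‖ₑ ^ 2 := by
    have hn := Lp.norm_fourier_eq (h2.toLp g)
    have a1 : eLpNorm (𝓕 g) 2 volume = eLpNorm g 2 volume := by
      rw [← eLpNorm_congr_ae (fourier_ae_L2 h1 h2), ← eLpNorm_congr_ae (h2.coeFn_toLp)]
      rw [← Lp.enorm_def, ← Lp.enorm_def, ← ofReal_norm, ← ofReal_norm, hn]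
    rw [eLpNorm_eq_lintegral_rpow_enorm_toReal (by norm_num) (by norm_num),
      eLpNorm_eq_lintegral_rpow_enorm_toReal (by norm_num) (by norm_num)] at a1
    have := congrArg (fun z : ℝ≥0∞ => z ^ (2 : ℝ)) a1
    simp only [← ENNReal.rpow_mul] at this
    simpa using this
  rw [← key]
  have hm : Measurable (fun x => ‖𝓕 g x‖ₑ ^ 2) := by
    have hcont : Continuous (𝓕 g) := by
      exact VectorFourier.fourierIntegral_continuous Real.continuous_fourierChar
        (by exact continuous_inner) h1
    exact (hcont.measurable.enorm.pow_const 2)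
  have e : ∀ x, ‖ift g x‖ₑ ^ 2 = (fun y => ‖𝓕 g y‖ₑ ^ 2) ((-(2 * Real.pi)⁻¹) * x) := by
    intro x
    simp only [ift_eq_ft, ft_eq]
    congr 3; field_simp
  simp_rw [e]
  have hne : -(2 * Real.pi)⁻¹ ≠ 0 := by
    simp
  have := lintegral_map (μ := (volume : Measure ℝ)) hm
    (measurable_const_mul (-(2 * Real.pi)⁻¹))
  rw [← this, Real.map_volume_mul_left hne, lintegral_smul_measure]
  apply le_of_eq
  rw [smul_eq_mul]
  congr 2
  rw [inv_neg, inv_inv, abs_neg, abs_of_pos pi2_pos]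

end MK


namespace MK

/-- The weight `⟨λ⟩^{-3/4}`. -/
noncomputable def rr (l : ℝ) : ℝ≥0∞ := ENNReal.ofReal ((1 + |l|) ^ (-(3 / 4) : ℝ))

/-- The weight `⟨λ⟩^{-3/2}`. -/
noncomputable def om (l : ℝ) : ℝ≥0∞ := ENNReal.ofReal ((1 + |l|) ^ (-(3 / 2) : ℝ))

lemma rr_sq (l : ℝ) : rr l ^ 2 = om l := by
  unfold rr om
  rw [← ENNReal.ofReal_pow (by positivity), ← Real.rpow_natCast, ← Real.rpow_mul (by positivity)]
  norm_num

lemma rr_le_one (l : ℝ) : rr l ≤ 1 := by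
  unfold rr
  rw [← ENNReal.ofReal_one]
  apply ENNReal.ofReal_le_ofReal
  apply Real.rpow_le_one_of_one_le_of_nonpos <;> [skip; norm_num]
  linarith [abs_nonneg l]

lemma om_le_one (l : ℝ) : om l ≤ 1 := by
  rw [← rr_sq]; exact pow_le_one' (rr_le_one l) 2

@[fun_prop]
lemma measurable_rr : Measurable rr := by unfold rr; fun_prop
@[fun_prop]
lemma measurable_om : Measurable om := by unfold om; fun_prop

lemma om_anti {a b : ℝ} (h : |a| ≤ |b|) : om b ≤ om a := by
  unfold om
  apply ENNReal.ofReal_le_ofReal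
  apply Real.rpow_le_rpow_of_nonpos
  · positivity
  · linarith
  · norm_num

lemma om_mul (a b : ℝ) : om a * om b ≤ om ((a + b) / 2) * (om a + om b) := by
  rcases le_total |a| |b| with h | h
  · have : om b ≤ om ((a + b) / 2) := om_anti (by
      rw [abs_div, abs_two]; linarith [abs_add_le a b])
    calc om a * om b ≤ om a * om ((a + b) / 2) := by gcongr
      _ ≤ _ := by rw [mul_comm]; gcongr; exact le_self_add
  · have : om a ≤ om ((a + b) / 2) := om_anti (by
      rw [abs_div, abs_two]; linarith [abs_add_le a b])
    calc om a * om b ≤ om ((a + b) / 2) * om b := by gcongr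
      _ ≤ _ := by gcongr; exact le_add_self

/-- Total mass of the weight. -/
noncomputable def Om : ℝ≥0∞ := ∫⁻ l, om l

lemma Om_lt_top : Om < ∞ := by
  have h := integrable_one_add_norm (E := ℝ) (μ := volume) (r := 3 / 2) (by simp; norm_num)
  have := h.lintegral_lt_top
  simpa [Om, om] using this

lemma lint_om_shift (c : ℝ) : ∫⁻ t, om (t - c) = Om := lintegral_sub_right_eq_self om c
lemma lint_om_shift' (c : ℝ) : ∫⁻ t, om (c - t) = Om := lintegral_sub_left_eq_self om c

lemma lint_om_half (c : ℝ) : ∫⁻ t, om ((c - t) / 2) = 2 * Om := by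
  rw [lintegral_sub_left_eq_self (fun t => om (t / 2)) c]
  have := lintegral_map (μ := (volume : Measure ℝ)) measurable_om
    (measurable_const_mul (2⁻¹ : ℝ))
  rw [Real.map_volume_mul_left (by norm_num), lintegral_smul_measure] at this
  simp only [inv_inv, abs_two, smul_eq_mul, ENNReal.ofReal_ofNat] at this
  rw [Om, this]
  congr 1; ext t; congr 1; ring

lemma cs_lint {α : Type*} [MeasurableSpace α] (μ : Measure α) {f g : α → ℝ≥0∞}
    (hf : AEMeasurable f μ) (hg : AEMeasurable g μ) :
    (∫⁻ a, f a * g a ∂μ) ^ 2 ≤ (∫⁻ a, f a ^ 2 ∂μ) * ∫⁻ a, g a ^ 2 ∂μ := by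
  have := ENNReal.lintegral_mul_le_Lp_mul_Lq μ (p := 2) (q := 2)
    (by constructor <;> norm_num) hf hg
  calc (∫⁻ a, f a * g a ∂μ) ^ 2
      ≤ ((∫⁻ a, f a ^ (2 : ℝ) ∂μ) ^ (1 / 2 : ℝ) * (∫⁻ a, g a ^ (2 : ℝ) ∂μ) ^ (1 / 2 : ℝ)) ^ 2 := by
        gcongr; exact this
    _ = _ := by
        rw [mul_pow, ← ENNReal.rpow_natCast, ← ENNReal.rpow_natCast, ← ENNReal.rpow_mul,
          ← ENNReal.rpow_mul]
        norm_num

lemma cubic_half (ξ τ : ℝ) (hξ : ξ ≠ 0) (s : Set ℝ) (hs : MeasurableSet s)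
    (hinj : ∀ a ∈ s, ∀ b ∈ s, a + b = ξ → a = b) :
    ∫⁻ x in s, ENNReal.ofReal |x ^ 2 - (ξ - x) ^ 2| * om ((τ - (x ^ 3 + (ξ - x) ^ 3)) / 2)
      ≤ 2 * Om := by
  have key := lintegral_image_eq_lintegral_abs_deriv_mul hs
    (f := fun x => x ^ 3 + (ξ - x) ^ 3) (f' := fun x => 3 * (x ^ 2 - (ξ - x) ^ 2))
    (fun x _ => by
      have h1 := (hasDerivAt_id x).pow 3
      have h2 := ((hasDerivAt_const x ξ).sub (hasDerivAt_id x)).pow 3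
      have := (h1.add h2).hasDerivWithinAt (s := s)
      refine HasDerivWithinAt.congr_deriv this ?_
      simp only [id_eq, Pi.sub_apply]
      push_cast
      ring)
    (by
      intro a ha b hb hab
      by_contra hne
      apply hne
      apply hinj a ha b hb
      have : 3 * ξ * ((a - b) * (a + b - ξ)) = 0 := by
        simp only at hab; nlinarith
      have h3 : (a - b) * (a + b - ξ) = 0 := by
        rcases mul_eq_zero.1 this with h | h
        · exact absurd h (by positivity)
        · exact h
      rcases mul_eq_zero.1 h3 with h | h
      · exact absurd (by linarith) hne
      · linarith)
    (fun y => om ((τ - y) / 2))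
  calc _ ≤ ∫⁻ x in s, ENNReal.ofReal |3 * (x ^ 2 - (ξ - x) ^ 2)| *
        om ((τ - (x ^ 3 + (ξ - x) ^ 3)) / 2) := by
        apply lintegral_mono; intro x
        dsimp only
        refine mul_le_mul' (ENNReal.ofReal_le_ofReal ?_) le_rfl
        rw [abs_mul, abs_of_pos (by norm_num : (0:ℝ) < 3)]
        linarith [abs_nonneg (x ^ 2 - (ξ - x) ^ 2)]
    _ = _ := key.symm
    _ ≤ ∫⁻ y, om ((τ - y) / 2) := setLIntegral_le_lintegral _ _
    _ = _ := lint_om_half τ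

lemma cubic_int (ξ τ : ℝ) :
    ∫⁻ x, ENNReal.ofReal |x ^ 2 - (ξ - x) ^ 2| * om ((τ - (x ^ 3 + (ξ - x) ^ 3)) / 2)
      ≤ 4 * Om := by
  by_cases hξ : ξ = 0
  · subst hξ
    simp
  rw [← lintegral_add_compl _ (measurableSet_Ioi (a := ξ / 2))]
  have h1 := cubic_half ξ τ hξ (Set.Ioi (ξ / 2)) measurableSet_Ioi (by
    intro a ha b hb hab; simp only [Set.mem_Ioi] at ha hb; linarith)
  have h2 := cubic_half ξ τ hξ (Set.Ioi (ξ / 2))ᶜ measurableSet_Ioi.compl (by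
    intro a ha b hb hab; simp only [Set.mem_compl_iff, Set.mem_Ioi, not_lt] at ha hb; linarith)
  calc _ ≤ 2 * Om + 2 * Om := add_le_add h1 h2
    _ = _ := by ring

/-- Bourgain phase. -/
def lam (p : ℝ × ℝ) : ℝ := p.2 - p.1 ^ 3

@[fun_prop]
lemma measurable_lam : Measurable lam := by unfold lam; fun_prop

lemma I_bound (p : ℝ × ℝ) :
    ∫⁻ q : ℝ × ℝ, ENNReal.ofReal |q.1 ^ 2 - (p.1 - q.1) ^ 2| * (om (lam q) * om (lam (p - q)))
      ≤ 8 * Om ^ 2 := by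
  rw [Measure.volume_eq_prod, lintegral_prod _ (by fun_prop)]
  have : ∀ x : ℝ, ∫⁻ t : ℝ, ENNReal.ofReal |x ^ 2 - (p.1 - x) ^ 2| *
      (om (lam (x, t)) * om (lam (p - (x, t)))) ≤ (2 * Om) *
      (ENNReal.ofReal |x ^ 2 - (p.1 - x) ^ 2| * om ((p.2 - (x ^ 3 + (p.1 - x) ^ 3)) / 2)) := by
    intro x
    calc _ ≤ ∫⁻ t : ℝ, ENNReal.ofReal |x ^ 2 - (p.1 - x) ^ 2| *
          (om ((p.2 - (x ^ 3 + (p.1 - x) ^ 3)) / 2) *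
            (om (t - x ^ 3) + om ((p.2 - (p.1 - x) ^ 3) - t))) := by
          apply lintegral_mono; intro t
          dsimp only
          refine mul_le_mul' le_rfl ?_
          refine (om_mul _ _).trans (le_of_eq ?_)
          simp only [lam, Prod.fst_sub, Prod.snd_sub]
          congr 2
          · ring
          · congr 1; ring
      _ = _ := by
          rw [lintegral_const_mul _ (by fun_prop), lintegral_const_mul _ (by fun_prop),
            lintegral_add_left (by fun_prop), lint_om_shift, lint_om_shift']
          ring
  calc _ ≤ ∫⁻ x : ℝ, (2 * Om) *
      (ENNReal.ofReal |x ^ 2 - (p.1 - x) ^ 2| * om ((p.2 - (x ^ 3 + (p.1 - x) ^ 3)) / 2)) :=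
        lintegral_mono this
    _ = (2 * Om) * _ := lintegral_const_mul _ (by fun_prop)
    _ ≤ (2 * Om) * (4 * Om) := by gcongr; exact cubic_int _ _
    _ = _ := by ring

lemma lint_conv {f g : ℝ × ℝ → ℝ≥0∞} (hf : Measurable f) (hg : Measurable g) :
    ∫⁻ p, ∫⁻ q, f q * g (p - q) = (∫⁻ p, f p) * ∫⁻ p, g p := by
  rw [lintegral_lintegral_swap (by
    apply Measurable.aemeasurable
    exact (hf.comp measurable_snd).mul (hg.comp (measurable_fst.sub measurable_snd)))]
  have : ∀ q, ∫⁻ p, f q * g (p - q) = f q * ∫⁻ p, g p := by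
    intro q
    rw [lintegral_const_mul _ (by fun_prop), lintegral_sub_right_eq_self g q]
  simp_rw [this]
  rw [lintegral_mul_const _ hf]

lemma bil1 {k1 k2 : ℝ × ℝ → ℝ≥0∞} (h1 : Measurable k1) (h2 : Measurable k2) :
    ∫⁻ p : ℝ × ℝ, (∫⁻ q : ℝ × ℝ, ENNReal.ofReal (Real.sqrt |q.1 ^ 2 - (p.1 - q.1) ^ 2|) *
      ((rr (lam q) * k1 q) * (rr (lam (p - q)) * k2 (p - q)))) ^ 2 ≤
    8 * Om ^ 2 * ((∫⁻ p, k1 p ^ 2) * ∫⁻ p, k2 p ^ 2) := by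
  have : ∀ p : ℝ × ℝ, (∫⁻ q : ℝ × ℝ, ENNReal.ofReal (Real.sqrt |q.1 ^ 2 - (p.1 - q.1) ^ 2|) *
      ((rr (lam q) * k1 q) * (rr (lam (p - q)) * k2 (p - q)))) ^ 2 ≤
      8 * Om ^ 2 * ∫⁻ q, (k1 q ^ 2) * (k2 (p - q) ^ 2) := by
    intro p
    calc _ = (∫⁻ q : ℝ × ℝ, (ENNReal.ofReal (Real.sqrt |q.1 ^ 2 - (p.1 - q.1) ^ 2|) *
            (rr (lam q) * rr (lam (p - q)))) * (k1 q * k2 (p - q))) ^ 2 := by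
          congr 2; ext q; ring
      _ ≤ _ := cs_lint _ (by fun_prop) (by fun_prop)
      _ ≤ _ := by
        gcongr
        · refine le_trans (le_of_eq ?_) (I_bound p)
          congr 1; ext q
          rw [mul_pow, mul_pow, rr_sq, rr_sq, ← ENNReal.ofReal_pow (by positivity),
            Real.sq_sqrt (by positivity)]
        · apply le_of_eq; ring
  calc _ ≤ ∫⁻ p : ℝ × ℝ, 8 * Om ^ 2 * ∫⁻ q : ℝ × ℝ, (k1 q ^ 2) * (k2 (p - q) ^ 2) :=
        lintegral_mono this
    _ = 8 * Om ^ 2 * ∫⁻ p : ℝ × ℝ, ∫⁻ q : ℝ × ℝ, (k1 q ^ 2) * (k2 (p - q) ^ 2) :=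
        lintegral_const_mul' _ _ (by finiteness [Om_lt_top.ne])
    _ = _ := by rw [lint_conv (h1.pow_const 2) (h2.pow_const 2)]

/-- The region where frequencies nearly agree up to sign. -/
def SS : Set (ℝ × ℝ) := {z | |z.1 + z.2| ≤ 1 ∨ |z.1 - z.2| ≤ 1}

lemma measurableSet_SS : MeasurableSet SS := by
  apply MeasurableSet.union
  · exact measurableSet_le (f := fun z : ℝ × ℝ => |z.1 + z.2|) (g := fun _ => 1)
      (by fun_prop) (by fun_prop)
  · exact measurableSet_le (f := fun z : ℝ × ℝ => |z.1 - z.2|) (g := fun _ => 1)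
      (by fun_prop) (by fun_prop)

/-- Indicator of `SS`. -/
noncomputable def iS (x y : ℝ) : ℝ≥0∞ := SS.indicator (fun _ => 1) (x, y)

@[fun_prop]
lemma measurable_iS {α : Type*} [MeasurableSpace α] {f g : α → ℝ} (hf : Measurable f)
    (hg : Measurable g) : Measurable (fun a => iS (f a) (g a)) := by
  unfold iS
  exact (measurable_const.indicator measurableSet_SS).comp (hf.prodMk hg)

lemma iS_sq (x y : ℝ) : iS x y ^ 2 = iS x y := by
  unfold iS; by_cases h : (x, y) ∈ SS <;> simp [h]

lemma lint_iS (y : ℝ) : ∫⁻ x, iS x y ≤ 4 := by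
  have h1 : ∀ x, iS x y ≤ (Set.Icc (-y - 1) (-y + 1)).indicator (fun _ => 1) x +
      (Set.Icc (y - 1) (y + 1)).indicator (fun _ => 1) x := by
    intro x
    unfold iS
    by_cases h : (x, y) ∈ SS
    · simp only [h, Set.indicator_of_mem]
      rcases h with h | h <;> simp only [abs_le] at h
      · have : x ∈ Set.Icc (-y - 1) (-y + 1) := ⟨by linarith, by linarith⟩
        simp [this]
      · have : x ∈ Set.Icc (y - 1) (y + 1) := ⟨by linarith, by linarith⟩
        simp [this]
    · simp [h]
  refine (lintegral_mono h1).trans ?_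
  rw [lintegral_add_left (measurable_const.indicator measurableSet_Icc),
    lintegral_indicator measurableSet_Icc, lintegral_indicator measurableSet_Icc]
  simp only [lintegral_const, one_mul, MeasurableSet.univ, Measure.restrict_apply, Set.univ_inter,
    Real.volume_Icc]
  rw [← ENNReal.ofReal_add (by linarith) (by linarith)]
  have : -y + 1 - (-y - 1) + (y + 1 - (y - 1)) = 4 := by ring
  rw [this]; simp

lemma bil2 {k1 k2 : ℝ × ℝ → ℝ≥0∞} (h1 : Measurable k1) (h2 : Measurable k2) :
    ∫⁻ p : ℝ × ℝ, (∫⁻ q : ℝ × ℝ, iS q.1 (p.1 - q.1) *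
      ((rr (lam q) * k1 q) * (rr (lam (p - q)) * k2 (p - q)))) ^ 2 ≤
    4 * Om * ((∫⁻ p, k1 p ^ 2) * ∫⁻ p, k2 p ^ 2) := by
  by_cases htop : ∫⁻ p, k1 p ^ 2 = ∞
  · by_cases hz : ∫⁻ p, k2 p ^ 2 = 0
    · have hk2 : k2 =ᵐ[volume] 0 := by
        rw [lintegral_eq_zero_iff (h2.pow_const 2)] at hz
        filter_upwards [hz] with p hp
        simpa using hp
      have : ∀ p : ℝ × ℝ, (∫⁻ q : ℝ × ℝ, iS q.1 (p.1 - q.1) *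
        ((rr (lam q) * k1 q) * (rr (lam (p - q)) * k2 (p - q)))) = 0 := by
        intro p
        have hq : ∀ᵐ q : ℝ × ℝ, k2 (p - q) = 0 :=
          (quasiMeasurePreserving_sub_left (volume : Measure (ℝ × ℝ)) p).ae hk2
        rw [← lintegral_zero (μ := (volume : Measure (ℝ × ℝ)))]
        apply lintegral_congr_ae
        filter_upwards [hq] with q hq
        simp [hq]
      simp [this]
    · rw [htop, ENNReal.top_mul hz, ENNReal.mul_top]
      · exact le_top
      · have : Om ≠ 0 := by
          intro h0
          rw [Om, lintegral_eq_zero_iff measurable_om] at h0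
          have : ∀ l, om l ≠ 0 := fun l => by
            unfold om; simp only [ne_eq, ENNReal.ofReal_eq_zero, not_le]; positivity
          have h3 : ∀ᵐ l : ℝ, False := by
            filter_upwards [h0] with l hl using this l hl
          exact h3.exists.choose_spec
        simp [this]
  have : ∀ p : ℝ × ℝ, (∫⁻ q : ℝ × ℝ, iS q.1 (p.1 - q.1) *
      ((rr (lam q) * k1 q) * (rr (lam (p - q)) * k2 (p - q)))) ^ 2 ≤
      (∫⁻ q, k1 q ^ 2) * ∫⁻ q : ℝ × ℝ, iS q.1 (p.1 - q.1) * (om (lam q) * k2 (p - q) ^ 2) := by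
    intro p
    calc _ ≤ (∫⁻ q : ℝ × ℝ, k1 q * (iS q.1 (p.1 - q.1) * (rr (lam q) * k2 (p - q)))) ^ 2 := by
          refine pow_le_pow_left' (lintegral_mono fun q => ?_) 2
          calc _ ≤ iS q.1 (p.1 - q.1) * ((rr (lam q) * k1 q) * (1 * k2 (p - q))) := by
                exact mul_le_mul' le_rfl (mul_le_mul' le_rfl (mul_le_mul' (rr_le_one _) le_rfl))
            _ = _ := by ring
      _ ≤ _ := cs_lint _ (by fun_prop) (by fun_prop)
      _ = _ := by
        congr 2; ext q
        rw [mul_pow, mul_pow, rr_sq, iS_sq]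
  calc _ ≤ ∫⁻ p : ℝ × ℝ, (∫⁻ q, k1 q ^ 2) * ∫⁻ q : ℝ × ℝ, iS q.1 (p.1 - q.1) *
        (om (lam q) * k2 (p - q) ^ 2) := lintegral_mono this
    _ = (∫⁻ q, k1 q ^ 2) * ∫⁻ p : ℝ × ℝ, ∫⁻ q : ℝ × ℝ, iS q.1 (p.1 - q.1) *
        (om (lam q) * k2 (p - q) ^ 2) := lintegral_const_mul' _ _ htop
    _ = (∫⁻ q, k1 q ^ 2) * ∫⁻ q : ℝ × ℝ, ∫⁻ p : ℝ × ℝ, iS q.1 p.1 *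
        (om (lam q) * k2 p ^ 2) := by
        congr 1
        rw [lintegral_lintegral_swap (by apply Measurable.aemeasurable; fun_prop)]
        congr 1; ext q
        rw [← lintegral_sub_right_eq_self (fun p : ℝ × ℝ => iS q.1 p.1 *
          (om (lam q) * k2 p ^ 2)) q]
        rfl
    _ = (∫⁻ q, k1 q ^ 2) * ∫⁻ p : ℝ × ℝ, ∫⁻ q : ℝ × ℝ, iS q.1 p.1 *
        (om (lam q) * k2 p ^ 2) := by
        congr 1
        rw [lintegral_lintegral_swap (by apply Measurable.aemeasurable; fun_prop)]
    _ ≤ (∫⁻ q, k1 q ^ 2) * ∫⁻ p : ℝ × ℝ, (4 * Om) * k2 p ^ 2 := by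
        gcongr with p
        rw [Measure.volume_eq_prod, lintegral_prod _ (by fun_prop)]
        have : ∀ x : ℝ, ∫⁻ t : ℝ, iS x p.1 * (om (lam (x, t)) * k2 p ^ 2) =
            iS x p.1 * (Om * k2 p ^ 2) := by
          intro x
          rw [lintegral_const_mul _ (by fun_prop), lintegral_mul_const _ (by fun_prop)]
          simp only [lam]
          rw [lint_om_shift]
        simp only [this]
        rw [lintegral_mul_const _ (by fun_prop), mul_assoc]
        gcongr
        exact lint_iS _
    _ = _ := by
        rw [lintegral_const_mul _ (by fun_prop)]; ring

/-- Bilinear multiplier. -/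
noncomputable def mm (x y : ℝ) : ℝ≥0∞ := ENNReal.ofReal (Real.sqrt |x ^ 2 - y ^ 2|) + iS x y

lemma add_sq_le' (a b : ℝ≥0∞) : (a + b) ^ 2 ≤ 4 * (a ^ 2 + b ^ 2) := by
  rcases le_total a b with h | h
  · calc (a + b) ^ 2 ≤ (b + b) ^ 2 := by gcongr
      _ = 4 * b ^ 2 := by ring
      _ ≤ _ := by gcongr; exact le_add_self
  · calc (a + b) ^ 2 ≤ (a + a) ^ 2 := by gcongr
      _ = 4 * a ^ 2 := by ring
      _ ≤ _ := by gcongr; exact le_self_add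

/-- The bilinear constant. -/
noncomputable def CB : ℝ≥0∞ := 4 * (8 * Om ^ 2 + 4 * Om)

lemma CB_lt_top : CB < ∞ := by
  unfold CB; have := Om_lt_top.ne; exact lt_top_iff_ne_top.2 (by finiteness)

lemma bilinear {k1 k2 : ℝ × ℝ → ℝ≥0∞} (h1 : Measurable k1) (h2 : Measurable k2) :
    ∫⁻ p : ℝ × ℝ, (∫⁻ q : ℝ × ℝ, mm q.1 (p.1 - q.1) *
      ((rr (lam q) * k1 q) * (rr (lam (p - q)) * k2 (p - q)))) ^ 2 ≤
    CB * ((∫⁻ p, k1 p ^ 2) * ∫⁻ p, k2 p ^ 2) := by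
  have : ∀ p : ℝ × ℝ, (∫⁻ q : ℝ × ℝ, mm q.1 (p.1 - q.1) *
      ((rr (lam q) * k1 q) * (rr (lam (p - q)) * k2 (p - q)))) ^ 2 ≤
      4 * ((∫⁻ q : ℝ × ℝ, ENNReal.ofReal (Real.sqrt |q.1 ^ 2 - (p.1 - q.1) ^ 2|) *
      ((rr (lam q) * k1 q) * (rr (lam (p - q)) * k2 (p - q)))) ^ 2 +
      (∫⁻ q : ℝ × ℝ, iS q.1 (p.1 - q.1) *
      ((rr (lam q) * k1 q) * (rr (lam (p - q)) * k2 (p - q)))) ^ 2) := by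
    intro p
    refine le_trans (le_of_eq ?_) (add_sq_le' _ _)
    rw [← lintegral_add_left (by fun_prop)]
    congr 2; ext q
    rw [mm, add_mul]
  refine (lintegral_mono this).trans ?_
  rw [lintegral_const_mul' _ _ (by norm_num), lintegral_add_left]
  · calc _ ≤ 4 * (8 * Om ^ 2 * ((∫⁻ p, k1 p ^ 2) * ∫⁻ p, k2 p ^ 2) +
        4 * Om * ((∫⁻ p, k1 p ^ 2) * ∫⁻ p, k2 p ^ 2)) := by
          gcongr
          · exact bil1 h1 h2
          · exact bil2 h1 h2
      _ = _ := by unfold CB; ring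
  · apply Measurable.pow_const
    apply Measurable.lintegral_prod_right'
      (f := fun z : (ℝ × ℝ) × (ℝ × ℝ) => ENNReal.ofReal (Real.sqrt |z.2.1 ^ 2 - (z.1.1 - z.2.1) ^ 2|) *
      ((rr (lam z.2) * k1 z.2) * (rr (lam (z.1 - z.2)) * k2 (z.1 - z.2))))
    fun_prop

end MK


namespace MK

open Complex Filter Topology

/-- Unnormalised inverse space-time Fourier transform. -/
noncomputable def E2 (g : ℝ × ℝ → ℂ) (x t : ℝ) : ℂ :=
  ∫ p : ℝ × ℝ, cexp (I * (x * p.1 + t * p.2)) * g p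

lemma norm_exp3 (x t : ℝ) (p : ℝ × ℝ) : ‖cexp (I * (x * p.1 + t * p.2))‖ = 1 := by
  have : I * (x * p.1 + t * p.2) = ((x * p.1 + t * p.2 : ℝ) : ℂ) * I := by push_cast; ring
  rw [this, Complex.norm_exp_ofReal_mul_I]

lemma integrable_E2 {g : ℝ × ℝ → ℂ} (hg : Integrable g) (x t : ℝ) :
    Integrable (fun p : ℝ × ℝ => cexp (I * (x * p.1 + t * p.2)) * g p) := by
  apply hg.bdd_mul (c := 1)
  · apply Continuous.aestronglyMeasurable; fun_prop
  · exact Eventually.of_forall fun p => (norm_exp3 x t p).le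

lemma E2_eq {g : ℝ × ℝ → ℂ} (hg : Integrable g) (x t : ℝ) :
    E2 g x t = ift (fun ξ => ift (fun τ => g (ξ, τ)) t) x := by
  unfold E2 ift
  have h := integrable_E2 hg x t
  rw [Measure.volume_eq_prod] at h ⊢
  rw [integral_prod _ h]
  congr 1; ext ξ
  rw [← integral_const_mul]
  congr 1; ext τ
  rw [mul_add, Complex.exp_add, mul_assoc, mul_assoc, mul_assoc]

lemma measurable_ift_snd {g : ℝ × ℝ → ℂ} (hm : Measurable g) :
    Measurable (fun z : ℝ × ℝ => ift (fun τ => g (z.1, τ)) z.2) := by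
  unfold ift
  have : StronglyMeasurable (fun w : (ℝ × ℝ) × ℝ => cexp (I * w.1.2 * w.2) * g (w.1.1, w.2)) := by
    apply Measurable.stronglyMeasurable; fun_prop
  exact this.integral_prod_right'.measurable

lemma plancherel_2d {g : ℝ × ℝ → ℂ} (hm : Measurable g) (hg : Integrable g) :
    ∫⁻ t, ∫⁻ x, ‖E2 g x t‖ₑ ^ 2 ≤ ENNReal.ofReal (2 * Real.pi) ^ 2 * ∫⁻ p, ‖g p‖ₑ ^ 2 := by
  have hg' : Integrable g (volume.prod volume) := hg
  have hitg : ∀ t : ℝ, Integrable (fun ξ => ift (fun τ => g (ξ, τ)) t) := by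
    intro t
    have h := integrable_E2 hg 0 t
    rw [Measure.volume_eq_prod] at h
    have := h.integral_prod_left
    refine this.congr (Eventually.of_forall fun ξ => ?_)
    unfold ift
    dsimp only
    congr 1; ext τ
    simp only [Complex.ofReal_zero, zero_mul, zero_add, mul_assoc]
  have hmz := measurable_ift_snd hm
  calc ∫⁻ t, ∫⁻ x, ‖E2 g x t‖ₑ ^ 2
      ≤ ∫⁻ t, ENNReal.ofReal (2 * Real.pi) * ∫⁻ ξ, ‖ift (fun τ => g (ξ, τ)) t‖ₑ ^ 2 := by
        apply lintegral_mono; intro t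
        simp only [E2_eq hg]
        exact plancherel_1d (hitg t)
    _ = ENNReal.ofReal (2 * Real.pi) * ∫⁻ t, ∫⁻ ξ, ‖ift (fun τ => g (ξ, τ)) t‖ₑ ^ 2 :=
        lintegral_const_mul' _ _ ENNReal.ofReal_ne_top
    _ = ENNReal.ofReal (2 * Real.pi) * ∫⁻ ξ, ∫⁻ t, ‖ift (fun τ => g (ξ, τ)) t‖ₑ ^ 2 := by
        congr 1
        rw [lintegral_lintegral_swap]
        apply Measurable.aemeasurable
        exact (hmz.comp measurable_swap).enorm.pow_const 2
    _ ≤ ENNReal.ofReal (2 * Real.pi) * ∫⁻ ξ, ENNReal.ofReal (2 * Real.pi) *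
          ∫⁻ τ, ‖g (ξ, τ)‖ₑ ^ 2 := by
        refine mul_le_mul' le_rfl (lintegral_mono_ae ?_)
        filter_upwards [hg'.prod_right_ae] with ξ hξ
        exact plancherel_1d hξ
    _ = _ := by
        rw [lintegral_const_mul' _ _ ENNReal.ofReal_ne_top, Measure.volume_eq_prod,
          lintegral_prod _ (by fun_prop)]
        ring

open scoped Convolution in
lemma E2_mul {g1 g2 : ℝ × ℝ → ℂ} (h1 : Integrable g1) (h2 : Integrable g2) (x t : ℝ) :
    E2 g1 x t * E2 g2 x t = E2 (fun p => ∫ q, g1 q * g2 (p - q)) x t := by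
  have := integral_convolution (ContinuousLinearMap.mul ℂ ℂ) (integrable_E2 h1 x t)
    (integrable_E2 h2 x t)
  simp only [convolution, ContinuousLinearMap.mul_apply'] at this
  unfold E2
  rw [← this]
  congr 1; ext p
  rw [← integral_const_mul]
  congr 1; ext q
  have e : cexp (I * (x * p.1 + t * p.2)) = cexp (I * (x * q.1 + t * q.2)) *
      cexp (I * (x * (p - q).1 + t * (p - q).2)) := by
    rw [← Complex.exp_add]; congr 1; simp only [Prod.fst_sub, Prod.snd_sub]; push_cast; ring
  rw [e]; ring

lemma prod_L2 {g1 g2 : ℝ × ℝ → ℂ} (m1 : Measurable g1) (m2 : Measurable g2)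
    (h1 : Integrable g1) (h2 : Integrable g2) :
    ∫⁻ t, ∫⁻ x, ‖E2 g1 x t * E2 g2 x t‖ₑ ^ 2 ≤ ENNReal.ofReal (2 * Real.pi) ^ 2 *
      ∫⁻ p : ℝ × ℝ, (∫⁻ q : ℝ × ℝ, ‖g1 q‖ₑ * ‖g2 (p - q)‖ₑ) ^ 2 := by
  have hI : Integrable (fun p => ∫ q, g1 q * g2 (p - q)) := by
    have := h1.integrable_convolution (ContinuousLinearMap.mul ℂ ℂ) h2
    exact this
  have hM : Measurable (fun p => ∫ q, g1 q * g2 (p - q)) := by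
    have : StronglyMeasurable (fun w : (ℝ × ℝ) × (ℝ × ℝ) => g1 w.2 * g2 (w.1 - w.2)) := by
      apply Measurable.stronglyMeasurable; fun_prop
    exact this.integral_prod_right'.measurable
  simp only [E2_mul h1 h2]
  refine (plancherel_2d hM hI).trans (mul_le_mul' le_rfl (lintegral_mono fun p => ?_))
  refine pow_le_pow_left' ((enorm_integral_le_lintegral_enorm _).trans (le_of_eq ?_)) 2
  simp

lemma one_le_mm (x y : ℝ) : 1 ≤ mm x y := by
  unfold mm iS
  by_cases h : (x, y) ∈ SS
  · simp [h]
  · simp only [h, not_false_eq_true, Set.indicator_of_notMem, add_zero]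
    simp only [SS, Set.mem_ofPred_eq, not_or, not_le] at h
    rw [← ENNReal.ofReal_one]
    apply ENNReal.ofReal_le_ofReal
    apply Real.le_sqrt_of_sq_le
    have : x ^ 2 - y ^ 2 = (x + y) * (x - y) := by ring
    rw [this, abs_mul]
    nlinarith [h.1, h.2]
    

lemma le_mm (x y : ℝ) : ENNReal.ofReal |x| ≤ 2 * ENNReal.ofReal (1 + |y|) * mm x y := by
  by_cases h : |x| ≤ 2 * (1 + |y|)
  · calc ENNReal.ofReal |x| ≤ ENNReal.ofReal (2 * (1 + |y|)) := ENNReal.ofReal_le_ofReal h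
      _ = 2 * ENNReal.ofReal (1 + |y|) * 1 := by
          rw [ENNReal.ofReal_mul (by norm_num), mul_one]; simp
      _ ≤ _ := mul_le_mul' le_rfl (one_le_mm x y)
  · push Not at h
    have h2 : |x| ≤ 2 * Real.sqrt |x ^ 2 - y ^ 2| := by
      have : |x| / 2 ≤ Real.sqrt |x ^ 2 - y ^ 2| := by
        apply Real.le_sqrt_of_sq_le
        refine le_trans ?_ (le_abs_self _)
        rw [← sq_abs x, ← sq_abs y]
        nlinarith [abs_nonneg x, abs_nonneg y]
      linarith
    calc ENNReal.ofReal |x| ≤ ENNReal.ofReal (2 * Real.sqrt |x ^ 2 - y ^ 2|) :=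
          ENNReal.ofReal_le_ofReal h2
      _ = 2 * 1 * ENNReal.ofReal (Real.sqrt |x ^ 2 - y ^ 2|) := by
          rw [ENNReal.ofReal_mul (by norm_num)]; simp
      _ ≤ _ := by
          refine mul_le_mul' (mul_le_mul' le_rfl ?_) ?_
          · rw [← ENNReal.ofReal_one]; apply ENNReal.ofReal_le_ofReal; linarith [abs_nonneg y]
          · unfold mm; exact le_self_add

lemma mm_symm (x y : ℝ) : mm x y = mm y x := by
  unfold mm iS SS
  have h1 : |x ^ 2 - y ^ 2| = |y ^ 2 - x ^ 2| := abs_sub_comm _ _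
  have h2 : |x - y| = |y - x| := abs_sub_comm _ _
  have h3 : |x + y| = |y + x| := by rw [add_comm]
  rw [h1]
  congr 1
  simp only [Set.indicator, Set.mem_ofPred_eq, h2, h3]

lemma weight_aux (x y : ℝ) (m : ℕ) (hm : m ≤ 1) :
    ENNReal.ofReal (|x| ^ 3) * ENNReal.ofReal (|y| ^ m) ≤
      2 * (ENNReal.ofReal ((1 + |x|) ^ 2) * ENNReal.ofReal ((1 + |y|) ^ 2)) * mm x y := by
  calc ENNReal.ofReal (|x| ^ 3) * ENNReal.ofReal (|y| ^ m)
      = ENNReal.ofReal (|x| ^ 2) * ENNReal.ofReal (|y| ^ m) * ENNReal.ofReal |x| := by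
        rw [pow_succ, ENNReal.ofReal_mul (by positivity)]; ring
    _ ≤ ENNReal.ofReal ((1 + |x|) ^ 2) * ENNReal.ofReal (1 + |y|) *
        (2 * ENNReal.ofReal (1 + |y|) * mm x y) := by
        refine mul_le_mul' (mul_le_mul' ?_ ?_) (le_mm x y)
        · apply ENNReal.ofReal_le_ofReal; gcongr; linarith
        · apply ENNReal.ofReal_le_ofReal
          interval_cases m
          · simp
          · simp
    _ = _ := by
        rw [ENNReal.ofReal_pow (p := 1 + |y|) (by positivity)]; ring

lemma weight (x y : ℝ) (n m : ℕ) (hn : n ≤ 3) (hm : m ≤ 3) (hnm : n + m ≤ 4) :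
    ENNReal.ofReal (|x| ^ n) * ENNReal.ofReal (|y| ^ m) ≤
      2 * (ENNReal.ofReal ((1 + |x|) ^ 2) * ENNReal.ofReal ((1 + |y|) ^ 2)) * mm x y := by
  by_cases h3 : n = 3
  · subst h3; exact weight_aux x y m (by omega)
  by_cases h4 : m = 3
  · subst h4
    rw [mm_symm, mul_comm, mul_comm (ENNReal.ofReal ((1 + |x|) ^ 2))]
    exact weight_aux y x n (by omega)
  have aux : ∀ (z : ℝ) (j : ℕ), j ≤ 2 → ENNReal.ofReal (|z| ^ j) ≤ ENNReal.ofReal ((1 + |z|) ^ 2) := by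
    intro z j hj
    apply ENNReal.ofReal_le_ofReal
    calc |z| ^ j ≤ (1 + |z|) ^ j := by gcongr; linarith
      _ ≤ _ := by gcongr; linarith [abs_nonneg z]
  calc _ ≤ 1 * (ENNReal.ofReal ((1 + |x|) ^ 2) * ENNReal.ofReal ((1 + |y|) ^ 2)) * 1 := by
        rw [one_mul, mul_one]
        exact mul_le_mul' (aux x n (by omega)) (aux y m (by omega))
    _ ≤ _ := mul_le_mul' (mul_le_mul' (by norm_num) le_rfl) (one_le_mm x y)

end MK


namespace MK

open Complex Filter Topology

/-- The weighted space-time Fourier transform. -/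
noncomputable def kk (σ : ℝ) (V : ℝ × ℝ → ℂ) (p : ℝ × ℝ) : ℝ≥0∞ :=
  ENNReal.ofReal ((1 + |p.1|) ^ 2 * Real.cosh (σ * p.1) * (1 + |lam p|) ^ (3 / 4 : ℝ)) * ‖V p‖ₑ

/-- The square of the Bourgain norm. -/
noncomputable def MM (σ : ℝ) (V : ℝ × ℝ → ℂ) : ℝ≥0∞ := ∫⁻ p, kk σ V p ^ 2

lemma measurable_kk {σ : ℝ} {V : ℝ × ℝ → ℂ} (hV : Measurable V) : Measurable (kk σ V) := by
  unfold kk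
  have : Measurable (fun x : ℝ => Real.cosh (σ * x)) :=
    (Real.continuous_cosh.comp (continuous_const.mul continuous_id)).measurable
  have h2 : Measurable (fun p : ℝ × ℝ => Real.cosh (σ * p.1)) := this.comp measurable_fst
  fun_prop

lemma kk_rr (σ : ℝ) (V : ℝ × ℝ → ℂ) (p : ℝ × ℝ) :
    ENNReal.ofReal ((1 + |p.1|) ^ 2) * ENNReal.ofReal (Real.cosh (σ * p.1)) * ‖V p‖ₑ =
      rr (lam p) * kk σ V p := by
  have hc := Real.cosh_pos (σ * p.1)
  unfold rr kk
  rw [← mul_assoc, ← ENNReal.ofReal_mul (by positivity), ← ENNReal.ofReal_mul (by positivity)]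
  congr 2
  have : (1 + |lam p|) ^ (-(3 / 4) : ℝ) * (1 + |lam p|) ^ (3 / 4 : ℝ) = 1 := by
    rw [← Real.rpow_add (by positivity)]; norm_num
  calc _ = (1 + |p.1|) ^ 2 * Real.cosh (σ * p.1) * 
      ((1 + |lam p|) ^ (-(3 / 4) : ℝ) * (1 + |lam p|) ^ (3 / 4 : ℝ)) := by rw [this]; ring
    _ = _ := by ring

/-- Constant in the `L¹` bound. -/
noncomputable def C1 : ℝ≥0∞ := (∫⁻ x : ℝ, ENNReal.ofReal ((1 + |x|) ^ (-2 : ℝ))) * Om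

lemma C1_lt_top : C1 < ∞ := by
  have h := integrable_one_add_norm (E := ℝ) (μ := volume) (r := 2) (by simp)
  have h2 := h.lintegral_lt_top
  simp only [Real.norm_eq_abs] at h2
  exact ENNReal.mul_lt_top h2 Om_lt_top

lemma L1_bound {σ : ℝ} {V : ℝ × ℝ → ℂ} (hV : Measurable V) :
    (∫⁻ p : ℝ × ℝ, ENNReal.ofReal (1 + |p.1|) * ENNReal.ofReal (Real.cosh (σ * p.1)) * ‖V p‖ₑ) ^ 2 ≤
      C1 * MM σ V := by
  have e : ∀ p : ℝ × ℝ, ENNReal.ofReal (1 + |p.1|) * ENNReal.ofReal (Real.cosh (σ * p.1)) * ‖V p‖ₑ =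
      (ENNReal.ofReal ((1 + |p.1|) ^ (-1 : ℝ)) * rr (lam p)) * kk σ V p := by
    intro p
    rw [mul_assoc (ENNReal.ofReal ((1 + |p.1|) ^ (-1 : ℝ))), ← kk_rr, ← mul_assoc, ← mul_assoc,
      ← ENNReal.ofReal_mul (p := (1 + |p.1|) ^ (-1 : ℝ)) (by positivity)]
    congr 3
    rw [Real.rpow_neg_one]
    field_simp
  simp_rw [e]
  refine (cs_lint _ (by fun_prop) (measurable_kk hV).aemeasurable).trans (le_of_eq ?_)
  unfold MM C1
  congr 1
  rw [Measure.volume_eq_prod, lintegral_prod _ (by fun_prop)]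
  rw [← lintegral_mul_const _ (by fun_prop)]
  congr 1; ext x
  calc _ = ∫⁻ t : ℝ, ENNReal.ofReal ((1 + |x|) ^ (-2 : ℝ)) * om (t - x ^ 3) := by
        congr 1; ext t
        simp only [lam]
        rw [mul_pow, rr_sq, ← ENNReal.ofReal_pow (by positivity), ← Real.rpow_natCast,
          ← Real.rpow_mul (by positivity)]
        norm_num
    _ = _ := by rw [lintegral_const_mul _ (by fun_prop), lint_om_shift]

/-- Frequency truncation. -/
noncomputable def trunc (R : ℝ) (κ : ℝ → ℂ) (V : ℝ × ℝ → ℂ) (p : ℝ × ℝ) : ℂ :=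
  (Set.Icc (-R) R).indicator κ p.1 * V p

lemma measurable_trunc {R : ℝ} {κ : ℝ → ℂ} {V : ℝ × ℝ → ℂ} (hκ : Measurable κ)
    (hV : Measurable V) : Measurable (trunc R κ V) := by
  unfold trunc
  exact ((hκ.indicator measurableSet_Icc).comp measurable_fst).mul hV

lemma enorm_trunc_le {σ R c : ℝ} {o : ℕ} {κ : ℝ → ℂ} {V : ℝ × ℝ → ℂ}
    (hc : 0 ≤ c) (hb : ∀ ξ, ‖κ ξ‖ ≤ c * |ξ| ^ o * Real.cosh (σ * ξ)) (p : ℝ × ℝ) :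
    ‖trunc R κ V p‖ₑ ≤ ENNReal.ofReal c * ENNReal.ofReal (|p.1| ^ o) *
      ENNReal.ofReal (Real.cosh (σ * p.1)) * ‖V p‖ₑ := by
  unfold trunc
  rw [enorm_mul]
  refine mul_le_mul' ?_ le_rfl
  refine (enorm_indicator_le_enorm_self _ _).trans ?_
  rw [← ofReal_norm, ← ENNReal.ofReal_mul hc, ← ENNReal.ofReal_mul (by positivity)]
  exact ENNReal.ofReal_le_ofReal (hb _)

lemma L1_fin {σ : ℝ} {V : ℝ × ℝ → ℂ} (hV : Measurable V) (hM : MM σ V < ∞) :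
    ∫⁻ p : ℝ × ℝ, ENNReal.ofReal (1 + |p.1|) * ENNReal.ofReal (Real.cosh (σ * p.1)) * ‖V p‖ₑ < ∞ := by
  have h := (L1_bound (σ := σ) hV).trans_lt (ENNReal.mul_lt_top C1_lt_top hM)
  by_contra hn
  rw [not_lt, top_le_iff] at hn
  rw [hn] at h; simp at h

lemma integrable_trunc {σ R c : ℝ} {o : ℕ} {κ : ℝ → ℂ} {V : ℝ × ℝ → ℂ} (hκ : Measurable κ)
    (hV : Measurable V) (hM : MM σ V < ∞)
    (hc : 0 ≤ c) (hb : ∀ ξ, ‖κ ξ‖ ≤ c * |ξ| ^ o * Real.cosh (σ * ξ)) :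
    Integrable (trunc R κ V) := by
  refine ⟨(measurable_trunc hκ hV).aestronglyMeasurable, ?_⟩
  have : ∀ p : ℝ × ℝ, ‖trunc R κ V p‖ₑ ≤ ENNReal.ofReal (c * |R| ^ o) *
      (ENNReal.ofReal (1 + |p.1|) * ENNReal.ofReal (Real.cosh (σ * p.1)) * ‖V p‖ₑ) := by
    intro p
    by_cases hp : p.1 ∈ Set.Icc (-R) R
    · refine (enorm_trunc_le hc hb p).trans ?_
      rw [← mul_assoc]
      refine mul_le_mul' ?_ le_rfl
      rw [ENNReal.ofReal_mul hc, mul_assoc, mul_assoc]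
      refine mul_le_mul' le_rfl (mul_le_mul' ?_ ?_)
      · apply ENNReal.ofReal_le_ofReal
        have : |p.1| ≤ |R| := (abs_le.2 ⟨hp.1, hp.2⟩).trans (le_abs_self R)
        gcongr
      · have : (1 : ℝ≥0∞) ≤ ENNReal.ofReal (1 + |p.1|) := by
          rw [← ENNReal.ofReal_one]; apply ENNReal.ofReal_le_ofReal; linarith [abs_nonneg p.1]
        exact le_mul_of_one_le_left' this
    · simp [trunc, hp]
  refine (lintegral_mono this).trans_lt ?_
  rw [lintegral_const_mul' _ _ ENNReal.ofReal_ne_top]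
  exact ENNReal.mul_lt_top ENNReal.ofReal_lt_top (L1_fin hV hM)

/-- Constant in the bilinear product estimate. -/
noncomputable def C2 : ℝ≥0∞ := ENNReal.ofReal (2 * Real.pi) ^ 2 * (4 * CB)

lemma C2_lt_top : C2 < ∞ := by
  unfold C2; have := CB_lt_top.ne; exact lt_top_iff_ne_top.2 (by finiteness)

lemma trunc_prod {σ R c d : ℝ} {o r : ℕ} {κ χ : ℝ → ℂ} {V : ℝ × ℝ → ℂ} (hκ : Measurable κ)
    (hχ : Measurable χ) (hV : Measurable V) (hM : MM σ V < ∞) (hc : 0 ≤ c) (hd : 0 ≤ d)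
    (hb : ∀ ξ, ‖κ ξ‖ ≤ c * |ξ| ^ o * Real.cosh (σ * ξ))
    (hb' : ∀ ξ, ‖χ ξ‖ ≤ d * |ξ| ^ r * Real.cosh (σ * ξ))
    (ho : o ≤ 3) (hr : r ≤ 3) (hor : o + r ≤ 4) :
    ∫⁻ t, ∫⁻ x, ‖E2 (trunc R κ V) x t * E2 (trunc R χ V) x t‖ₑ ^ 2 ≤
      C2 * ENNReal.ofReal (c * d) ^ 2 * MM σ V ^ 2 := by
  refine (prod_L2 (measurable_trunc hκ hV) (measurable_trunc hχ hV)
    (integrable_trunc hκ hV hM hc hb) (integrable_trunc hχ hV hM hd hb')).trans ?_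
  have key : ∀ p q : ℝ × ℝ, ‖trunc R κ V q‖ₑ * ‖trunc R χ V (p - q)‖ₑ ≤
      (2 * ENNReal.ofReal (c * d)) * (mm q.1 (p.1 - q.1) * ((rr (lam q) * kk σ V q) *
        (rr (lam (p - q)) * kk σ V (p - q)))) := by
    intro p q
    have hw := weight q.1 (p - q).1 o r ho hr hor
    calc _ ≤ (ENNReal.ofReal c * ENNReal.ofReal (|q.1| ^ o) *
          ENNReal.ofReal (Real.cosh (σ * q.1)) * ‖V q‖ₑ) *
          (ENNReal.ofReal d * ENNReal.ofReal (|(p - q).1| ^ r) *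
          ENNReal.ofReal (Real.cosh (σ * (p - q).1)) * ‖V (p - q)‖ₑ) :=
          mul_le_mul' (enorm_trunc_le hc hb q) (enorm_trunc_le hd hb' (p - q))
      _ = (ENNReal.ofReal (|q.1| ^ o) * ENNReal.ofReal (|(p - q).1| ^ r)) *
          (ENNReal.ofReal c * ENNReal.ofReal d * (ENNReal.ofReal (Real.cosh (σ * q.1)) * ‖V q‖ₑ) *
          (ENNReal.ofReal (Real.cosh (σ * (p - q).1)) * ‖V (p - q)‖ₑ)) := by ring
      _ ≤ _ := mul_le_mul' hw le_rfl
      _ = _ := by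
          rw [← kk_rr, ← kk_rr, ENNReal.ofReal_mul hc]
          simp only [Prod.fst_sub]
          ring
  calc _ ≤ ENNReal.ofReal (2 * Real.pi) ^ 2 * ∫⁻ p : ℝ × ℝ, (2 * ENNReal.ofReal (c * d)) ^ 2 *
      (∫⁻ q : ℝ × ℝ, mm q.1 (p.1 - q.1) * ((rr (lam q) * kk σ V q) *
        (rr (lam (p - q)) * kk σ V (p - q)))) ^ 2 := by
        refine mul_le_mul' le_rfl (lintegral_mono fun p => ?_)
        rw [← mul_pow]
        refine pow_le_pow_left' ?_ 2
        rw [← lintegral_const_mul' _ _ (by finiteness)]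
        exact lintegral_mono (key p)
    _ = ENNReal.ofReal (2 * Real.pi) ^ 2 * ((2 * ENNReal.ofReal (c * d)) ^ 2 * _) := by
        rw [lintegral_const_mul' _ _ (by finiteness)]
    _ ≤ _ := mul_le_mul' le_rfl (mul_le_mul' le_rfl (bilinear (measurable_kk hV) (measurable_kk hV)))
    _ = _ := by unfold C2 MM; ring

lemma measurable_E2 {g : ℝ × ℝ → ℂ} (hg : Measurable g) :
    Measurable (fun z : ℝ × ℝ => E2 g z.1 z.2) := by
  unfold E2
  have : StronglyMeasurable (fun w : (ℝ × ℝ) × (ℝ × ℝ) =>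
      cexp (I * (w.1.1 * w.2.1 + w.1.2 * w.2.2)) * g w.2) := by
    apply Measurable.stronglyMeasurable; fun_prop
  exact this.integral_prod_right'.measurable

lemma fatou_prod {G : ℕ → ℝ → ℝ → ℂ} {L : ℝ → ℝ → ℂ} {s : Set ℝ} {K : ℝ≥0∞}
    (hs : MeasurableSet s)
    (hm : ∀ n, Measurable (fun z : ℝ × ℝ => G n z.1 z.2))
    (hK : ∀ n, ∫⁻ t, ∫⁻ x, ‖G n x t‖ₑ ^ 2 ≤ K)
    (hlim : ∀ t ∈ s, ∀ x, Tendsto (fun n => G n x t) atTop (𝓝 (L x t))) :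
    ∫⁻ t in s, ∫⁻ x, ‖L x t‖ₑ ^ 2 ≤ K := by
  have hm1 : ∀ n t, Measurable (fun x => ‖G n x t‖ₑ ^ 2) := fun n t =>
    ((hm n).comp (measurable_id.prodMk measurable_const)).enorm.pow_const 2
  have hm2 : ∀ n, Measurable (fun t => ∫⁻ x, ‖G n x t‖ₑ ^ 2) := fun n => by
    have : Measurable (fun w : ℝ × ℝ => ‖G n w.2 w.1‖ₑ ^ 2) :=
      ((hm n).comp measurable_swap).enorm.pow_const 2
    exact this.lintegral_prod_right'
  calc ∫⁻ t in s, ∫⁻ x, ‖L x t‖ₑ ^ 2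
      ≤ ∫⁻ t in s, liminf (fun n => ∫⁻ x, ‖G n x t‖ₑ ^ 2) atTop := by
        apply setLIntegral_mono' hs
        intro t ht
        calc _ = ∫⁻ x, liminf (fun n => ‖G n x t‖ₑ ^ 2) atTop := by
              congr 1; ext x
              refine (Tendsto.liminf_eq ?_).symm
              exact ((ENNReal.continuous_pow 2).tendsto _).comp (hlim t ht x).enorm
          _ ≤ _ := lintegral_liminf_le (fun n => hm1 n t)
    _ ≤ liminf (fun n => ∫⁻ t in s, ∫⁻ x, ‖G n x t‖ₑ ^ 2) atTop := lintegral_liminf_le hm2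
    _ ≤ liminf (fun _ : ℕ => K) atTop := by
        refine liminf_le_liminf (Eventually.of_forall fun n => ?_)
        exact (setLIntegral_le_lintegral _ _).trans (hK n)
    _ = K := by simp

lemma lim_trunc {σ c : ℝ} {o : ℕ} {κ : ℝ → ℂ} {V : ℝ × ℝ → ℂ} (hκ : Measurable κ)
    (hV : Measurable V) (hM : MM σ V < ∞) (hc : 0 ≤ c)
    (hb : ∀ ξ, ‖κ ξ‖ ≤ c * |ξ| ^ o * Real.cosh (σ * ξ)) {t : ℝ} {h : ℝ → ℂ}
    (hh : ∀ᵐ ξ, ift (fun τ => V (ξ, τ)) t = (2 * Real.pi : ℂ) * h ξ)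
    (hitg : Integrable (fun ξ => κ ξ * h ξ)) (x : ℝ) :
    Tendsto (fun n : ℕ => E2 (trunc n κ V) x t) atTop
      (𝓝 ((2 * Real.pi : ℂ) * ift (fun ξ => κ ξ * h ξ) x)) := by
  have e : ∀ n : ℕ, E2 (trunc n κ V) x t =
      ∫ ξ : ℝ, (Set.Icc (-(n : ℝ)) n).indicator (fun ξ => (2 * Real.pi : ℂ) *
        (cexp (I * x * ξ) * (κ ξ * h ξ))) ξ := by
    intro n
    rw [E2_eq (integrable_trunc hκ hV hM hc hb)]
    unfold ift
    apply integral_congr_ae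
    filter_upwards [hh] with ξ hξ
    unfold ift at hξ
    simp only [trunc]
    by_cases hm : ξ ∈ Set.Icc (-(n : ℝ)) n
    · simp only [hm, Set.indicator_of_mem]
      calc _ = cexp (I * x * ξ) * (κ ξ * ∫ τ : ℝ, cexp (I * t * τ) * V (ξ, τ)) := by
            congr 1; rw [← integral_const_mul]; congr 1; ext τ; ring
        _ = _ := by rw [hξ]; ring
    · simp [hm]
  simp_rw [e]
  unfold ift
  rw [← integral_const_mul]
  have hitg2 : Integrable (fun ξ : ℝ => (2 * Real.pi : ℂ) * (cexp (I * x * ξ) * (κ ξ * h ξ))) := by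
    refine Integrable.const_mul (hitg.bdd_mul (c := 1) ?_ ?_) _
    · apply Continuous.aestronglyMeasurable; fun_prop
    · exact Eventually.of_forall fun p => (norm_exp1 x p).le
  apply tendsto_integral_of_dominated_convergence
    (fun ξ : ℝ => ‖(2 * Real.pi : ℂ) * (cexp (I * x * ξ) * (κ ξ * h ξ))‖)
  · intro n; exact (hitg2.indicator measurableSet_Icc).1
  · exact hitg2.norm
  · intro n; exact Eventually.of_forall fun ξ => norm_indicator_le_norm_self _ _
  · refine Eventually.of_forall fun ξ => ?_
    apply tendsto_const_nhds.congr'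
    filter_upwards [eventually_ge_atTop ⌈|ξ|⌉₊] with n hn
    have : |ξ| ≤ n := Nat.ceil_le.1 hn
    rw [Set.indicator_of_mem]
    exact abs_le.1 this

/-- The bilinear `L²` estimate for products of Fourier multipliers. -/
lemma prodN {σ c d : ℝ} {o r : ℕ} {κ χ : ℝ → ℂ} {V : ℝ × ℝ → ℂ} (hκ : Measurable κ)
    (hχ : Measurable χ) (hV : Measurable V) (hM : MM σ V < ∞) (hc : 0 ≤ c) (hd : 0 ≤ d)
    (hb : ∀ ξ, ‖κ ξ‖ ≤ c * |ξ| ^ o * Real.cosh (σ * ξ))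
    (hb' : ∀ ξ, ‖χ ξ‖ ≤ d * |ξ| ^ r * Real.cosh (σ * ξ))
    (ho : o ≤ 3) (hr : r ≤ 3) (hor : o + r ≤ 4) {s : Set ℝ} (hs : MeasurableSet s)
    {h : ℝ → ℝ → ℂ}
    (hh : ∀ t ∈ s, ∀ᵐ ξ, ift (fun τ => V (ξ, τ)) t = (2 * Real.pi : ℂ) * h t ξ)
    (hi1 : ∀ t ∈ s, Integrable (fun ξ => κ ξ * h t ξ))
    (hi2 : ∀ t ∈ s, Integrable (fun ξ => χ ξ * h t ξ)) :
    ∫⁻ t in s, ∫⁻ x, (‖ift (fun ξ => κ ξ * h t ξ) x‖ₑ * ‖ift (fun ξ => χ ξ * h t ξ) x‖ₑ) ^ 2 ≤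
      C2 * ENNReal.ofReal (c * d) ^ 2 * MM σ V ^ 2 := by
  have := fatou_prod (G := fun n x t => E2 (trunc n κ V) x t * E2 (trunc n χ V) x t)
    (L := fun x t => ((2 * Real.pi : ℂ) * ift (fun ξ => κ ξ * h t ξ) x) *
      ((2 * Real.pi : ℂ) * ift (fun ξ => χ ξ * h t ξ) x)) (s := s) hs
    (fun n => (measurable_E2 (measurable_trunc hκ hV)).mul
      (measurable_E2 (measurable_trunc hχ hV)))
    (fun n => trunc_prod (R := n) hκ hχ hV hM hc hd hb hb' ho hr hor)
    (fun t ht x => (lim_trunc hκ hV hM hc hb (hh t ht) (hi1 t ht) x).mul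
      (lim_trunc hχ hV hM hd hb' (hh t ht) (hi2 t ht) x))
  refine le_trans (lintegral_mono fun t => lintegral_mono fun x => ?_) this
  refine pow_le_pow_left' ?_ 2
  rw [enorm_mul, enorm_mul (2 * Real.pi : ℂ), enorm_mul (2 * Real.pi : ℂ)]
  have h1 : (1 : ℝ≥0∞) ≤ ‖(2 * Real.pi : ℂ)‖ₑ := by
    rw [← ofReal_norm, ← ENNReal.ofReal_one]
    apply ENNReal.ofReal_le_ofReal
    rw [norm_mul, Complex.norm_real, Real.norm_eq_abs, abs_of_pos Real.pi_pos]
    have := Real.pi_gt_three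
    norm_num; linarith
  exact mul_le_mul' (le_mul_of_one_le_left' h1) (le_mul_of_one_le_left' h1)

/-- The `L¹` bound on frequency side at fixed time. -/
lemma L1_time {σ : ℝ} {V : ℝ × ℝ → ℂ} (hV : Measurable V) {t : ℝ} {h : ℝ → ℂ}
    (hh : ∀ᵐ ξ, ift (fun τ => V (ξ, τ)) t = (2 * Real.pi : ℂ) * h ξ) :
    (∫⁻ ξ, ENNReal.ofReal (1 + |ξ|) * ENNReal.ofReal (Real.cosh (σ * ξ)) * ‖h ξ‖ₑ) ^ 2 ≤
      C1 * MM σ V := by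
  refine le_trans (pow_le_pow_left' ?_ 2) (L1_bound hV)
  have hmeas : Measurable (fun x : ℝ => Real.cosh (σ * x)) :=
    (Real.continuous_cosh.comp (continuous_const.mul continuous_id)).measurable
  have h2 : Measurable (fun p : ℝ × ℝ => Real.cosh (σ * p.1)) := hmeas.comp measurable_fst
  rw [Measure.volume_eq_prod, lintegral_prod _ (by fun_prop)]
  apply lintegral_mono_ae
  filter_upwards [hh] with ξ hξ
  rw [lintegral_const_mul' _ _ (by finiteness)]
  refine mul_le_mul' le_rfl ?_
  have h1 : ‖h ξ‖ₑ ≤ ‖ift (fun τ => V (ξ, τ)) t‖ₑ := by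
    rw [hξ, enorm_mul]
    have h1 : (1 : ℝ≥0∞) ≤ ‖(2 * Real.pi : ℂ)‖ₑ := by
      rw [← ofReal_norm, ← ENNReal.ofReal_one]
      apply ENNReal.ofReal_le_ofReal
      rw [norm_mul, Complex.norm_real, Real.norm_eq_abs, abs_of_pos Real.pi_pos]
      have := Real.pi_gt_three
      norm_num; linarith
    exact le_mul_of_one_le_left' h1
  refine h1.trans ((enorm_integral_le_lintegral_enorm _).trans (lintegral_mono fun τ => ?_))
  rw [enorm_mul]
  have : ‖cexp (I * t * τ)‖ₑ = 1 := by rw [← ofReal_norm, norm_exp1]; simp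
  rw [this, one_mul]

end MK


namespace MK

open Complex Filter Topology

/-- An integrable weight. -/
noncomputable def wt (x : ℝ) : ℝ := (1 + |x|) ^ (-2 : ℝ)

lemma wt_eq (x : ℝ) : wt x = ((1 + |x|) ^ 2)⁻¹ := by
  unfold wt
  rw [Real.rpow_neg (by positivity)]
  norm_num

lemma wt_pos (x : ℝ) : 0 < wt x := by rw [wt_eq]; positivity

lemma wt_le_one (x : ℝ) : wt x ≤ 1 := by
  rw [wt_eq]
  apply inv_le_one_of_one_le₀
  have := abs_nonneg x
  nlinarith

lemma wt_int : Integrable wt := by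
  have h := integrable_one_add_norm (E := ℝ) (μ := volume) (r := 2) (by simp)
  exact h

/-- Smooth functions on the strip, Schwartz in `x` uniformly in time. -/
def Good (T : ℝ) (F : ℝ × ℝ → ℝ) : Prop :=
  ContDiff ℝ (⊤ : ℕ∞) F ∧ ∀ k n : ℕ, ∃ D : ℝ, ∀ x t : ℝ, t ∈ Set.Icc (-T) T →
    (1 + |x|) ^ k * ‖iteratedFDeriv ℝ n F (x, t)‖ ≤ D

/-- Directional derivative. -/
noncomputable def dd (e : ℝ × ℝ) (F : ℝ × ℝ → ℝ) (p : ℝ × ℝ) : ℝ := fderiv ℝ F p e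

/-- Space derivative. -/
noncomputable def dx (F : ℝ × ℝ → ℝ) : ℝ × ℝ → ℝ := dd (1, 0) F

/-- Time derivative. -/
noncomputable def dt (F : ℝ × ℝ → ℝ) : ℝ × ℝ → ℝ := dd (0, 1) F

lemma Good.dd {T : ℝ} {F : ℝ × ℝ → ℝ} (h : Good T F) (e : ℝ × ℝ) : Good T (dd e F) := by
  have hf : ContDiff ℝ (⊤ : ℕ∞) (fderiv ℝ F) := h.1.fderiv_right (by exact le_rfl)
  have he : MK.dd e F = (ContinuousLinearMap.apply ℝ ℝ e) ∘ (fderiv ℝ F) := by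
    ext p; rfl
  refine ⟨?_, fun k n => ?_⟩
  · rw [he]; exact (ContinuousLinearMap.apply ℝ ℝ e).contDiff.comp hf
  · obtain ⟨D, hD⟩ := h.2 k (n + 1)
    refine ⟨‖ContinuousLinearMap.apply ℝ ℝ e‖ * D, fun x t ht => ?_⟩
    have h1 := ContinuousLinearMap.norm_iteratedFDeriv_comp_left
      (ContinuousLinearMap.apply ℝ ℝ e) (f := fderiv ℝ F) (x := (x, t)) (N := (⊤ : ℕ∞)) (n := n)
      hf.contDiffAt (by exact_mod_cast le_top)
    rw [norm_iteratedFDeriv_fderiv] at h1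
    rw [he]
    calc _ ≤ (1 + |x|) ^ k * (‖ContinuousLinearMap.apply ℝ ℝ e‖ *
          ‖iteratedFDeriv ℝ (n + 1) F (x, t)‖) := by gcongr
      _ = ‖ContinuousLinearMap.apply ℝ ℝ e‖ * ((1 + |x|) ^ k *
          ‖iteratedFDeriv ℝ (n + 1) F (x, t)‖) := by ring
      _ ≤ _ := by gcongr; exact hD x t ht

lemma Good.dx {T : ℝ} {F : ℝ × ℝ → ℝ} (h : Good T F) : Good T (dx F) := h.dd _
lemma Good.dt {T : ℝ} {F : ℝ × ℝ → ℝ} (h : Good T F) : Good T (dt F) := h.dd _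

lemma Good.hasDerivAt_x {T : ℝ} {F : ℝ × ℝ → ℝ} (h : Good T F) (x t : ℝ) :
    HasDerivAt (fun y => F (y, t)) (MK.dx F (x, t)) x := by
  have h1 : HasFDerivAt F (fderiv ℝ F (x, t)) (x, t) :=
    (h.1.differentiable (by simp) _).hasFDerivAt
  have h2 : HasDerivAt (fun y : ℝ => (y, t)) (1, 0) x :=
    (hasDerivAt_id x).prodMk (hasDerivAt_const x t)
  exact h1.comp_hasDerivAt x h2

lemma Good.hasDerivAt_t {T : ℝ} {F : ℝ × ℝ → ℝ} (h : Good T F) (x t : ℝ) :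
    HasDerivAt (fun y => F (x, y)) (MK.dt F (x, t)) t := by
  have h1 : HasFDerivAt F (fderiv ℝ F (x, t)) (x, t) :=
    (h.1.differentiable (by simp) _).hasFDerivAt
  have h2 : HasDerivAt (fun y : ℝ => (x, y)) (0, 1) t :=
    (hasDerivAt_const t x).prodMk (hasDerivAt_id t)
  exact h1.comp_hasDerivAt t h2

lemma Good.comm {T : ℝ} {F : ℝ × ℝ → ℝ} (h : Good T F) (p : ℝ × ℝ) :
    MK.dx (MK.dt F) p = MK.dt (MK.dx F) p := by
  have hs : IsSymmSndFDerivAt ℝ F p := by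
    apply h.1.contDiffAt.isSymmSndFDerivAt
    simp only [minSmoothness_of_isRCLikeNormedField]
    exact WithTop.coe_le_coe.2 (le_top : (2 : ℕ∞) ≤ ⊤)
  have hd : DifferentiableAt ℝ (fderiv ℝ F) p :=
    ((h.1.fderiv_right (m := (⊤ : ℕ∞)) (by exact le_rfl)).differentiable (by simp)) p
  have key : ∀ a b : ℝ × ℝ, fderiv ℝ (fun q => fderiv ℝ F q a) p b =
      fderiv ℝ (fderiv ℝ F) p b a := by
    intro a b
    have := (hd.hasFDerivAt.clm_apply (hasFDerivAt_const a p)).fderiv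
    rw [this]; simp
  unfold MK.dx MK.dt MK.dd
  rw [key, key]
  exact hs _ _

lemma Good.bd {T : ℝ} {F : ℝ × ℝ → ℝ} (h : Good T F) :
    ∃ D : ℝ, ∀ x t : ℝ, t ∈ Set.Icc (-T) T → |F (x, t)| ≤ D * wt x := by
  obtain ⟨D, hD⟩ := h.2 2 0
  refine ⟨D, fun x t ht => ?_⟩
  have := hD x t ht
  rw [norm_iteratedFDeriv_zero, Real.norm_eq_abs] at this
  rw [wt_eq, ← div_eq_mul_inv, le_div_iff₀ (by positivity)]
  linarith

lemma Good.cont {T : ℝ} {F : ℝ × ℝ → ℝ} (h : Good T F) : Continuous F := h.1.continuous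

lemma Good.int {T : ℝ} {F : ℝ × ℝ → ℝ} (h : Good T F) {t : ℝ} (ht : t ∈ Set.Icc (-T) T) :
    Integrable (fun x => F (x, t)) := by
  obtain ⟨D, hD⟩ := h.bd
  refine (wt_int.const_mul D).mono' ?_ (Eventually.of_forall fun x => hD x t ht)
  have := h.cont
  apply Continuous.aestronglyMeasurable; fun_prop

lemma good_schwartz (T : ℝ) (v : SchwartzMap (ℝ × ℝ) ℝ) : Good T v := by
  refine ⟨v.smooth _, fun k n => ?_⟩
  refine ⟨2 ^ k * (Finset.Iic (k, n)).sup (fun m => SchwartzMap.seminorm ℝ m.1 m.2) v,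
    fun x t _ => ?_⟩
  have h := SchwartzMap.one_add_le_sup_seminorm_apply (𝕜 := ℝ) (m := (k, n)) le_rfl le_rfl v (x, t)
  refine le_trans ?_ h
  gcongr
  exact le_max_left _ _

/-- Spatial Fourier transform at fixed time. -/
noncomputable def hat (F : ℝ × ℝ → ℝ) (t ξ : ℝ) : ℂ := ft (fun y => (F (y, t) : ℂ)) ξ

lemma Good.intC {T : ℝ} {F : ℝ × ℝ → ℝ} (h : Good T F) {t : ℝ} (ht : t ∈ Set.Icc (-T) T) :
    Integrable (fun x => (F (x, t) : ℂ)) := (h.int ht).ofReal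

lemma continuous_ft {f : ℝ → ℂ} (hf : Integrable f) : Continuous (ft f) := by
  have : ft f = fun ξ => FourierTransform.fourier f (ξ / (2 * Real.pi)) := funext (ft_eq f)
  rw [this]
  exact (continuous_fourier hf).comp (by fun_prop)

lemma Good.cont_hat {T : ℝ} {F : ℝ × ℝ → ℝ} (h : Good T F) {t : ℝ} (ht : t ∈ Set.Icc (-T) T) :
    Continuous (hat F t) := continuous_ft (h.intC ht)

lemma Good.hat_dx {T : ℝ} {F : ℝ × ℝ → ℝ} (h : Good T F) {t : ℝ} (ht : t ∈ Set.Icc (-T) T)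
    (ξ : ℝ) : hat (MK.dx F) t ξ = (I * ξ) * hat F t ξ := by
  have hd : ∀ x, HasDerivAt (fun y => (F (y, t) : ℂ)) (MK.dx F (x, t) : ℂ) x := fun x =>
    (h.hasDerivAt_x x t).ofReal_comp
  have hd' : deriv (fun y => (F (y, t) : ℂ)) = fun x => (MK.dx F (x, t) : ℂ) :=
    funext fun x => (hd x).deriv
  have := congrFun (Real.fourier_deriv (h.intC ht) (fun x => (hd x).differentiableAt)
    (by rw [hd']; exact h.dx.intC ht)) (ξ / (2 * Real.pi))
  rw [hd'] at this
  unfold hat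
  rw [ft_eq, ft_eq, this, smul_eq_mul]
  congr 1
  have hp : (Real.pi : ℂ) ≠ 0 := by exact_mod_cast Real.pi_ne_zero
  push_cast
  field_simp

lemma norm_ft_le (f : ℝ → ℂ) (ξ : ℝ) : ‖ft f ξ‖ ≤ ∫ y, ‖f y‖ := by
  unfold ft
  refine (norm_integral_le_integral_norm _).trans (le_of_eq ?_)
  congr 1; ext y
  rw [norm_mul, norm_exp2, one_mul]

lemma Good.hat_bd {T : ℝ} {F : ℝ × ℝ → ℝ} (h : Good T F) {t : ℝ} (ht : t ∈ Set.Icc (-T) T)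
    (k : ℕ) : ∃ D : ℝ, ∀ ξ, |ξ| ^ k * ‖hat F t ξ‖ ≤ D := by
  induction k generalizing F with
  | zero => exact ⟨_, fun ξ => by rw [pow_zero, one_mul]; exact norm_ft_le _ ξ⟩
  | succ k ih =>
    obtain ⟨D, hD⟩ := ih h.dx
    refine ⟨D, fun ξ => le_trans (le_of_eq ?_) (hD ξ)⟩
    rw [h.hat_dx ht, norm_mul, norm_mul, Complex.norm_I, Complex.norm_real, Real.norm_eq_abs]
    ring

lemma Good.hat_wt {T : ℝ} {F : ℝ × ℝ → ℝ} (h : Good T F) {t : ℝ} (ht : t ∈ Set.Icc (-T) T)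
    (k : ℕ) : ∃ D : ℝ, ∀ ξ, |ξ| ^ k * ‖hat F t ξ‖ ≤ D * wt ξ := by
  obtain ⟨D1, h1⟩ := h.hat_bd ht k
  obtain ⟨D2, h2⟩ := h.hat_bd ht (k + 2)
  refine ⟨2 * D1 + 2 * D2, fun ξ => ?_⟩
  rw [wt_eq, ← div_eq_mul_inv, le_div_iff₀ (by positivity)]
  have e1 := h1 ξ
  have e2 := h2 ξ
  have h0 : 0 ≤ |ξ| ^ k * ‖hat F t ξ‖ := by positivity
  have e3 : (1 + |ξ|) ^ 2 ≤ 2 + 2 * |ξ| ^ 2 := by nlinarith [sq_nonneg (1 - |ξ|)]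
  calc _ ≤ |ξ| ^ k * ‖hat F t ξ‖ * (2 + 2 * |ξ| ^ 2) := by gcongr
    _ = 2 * (|ξ| ^ k * ‖hat F t ξ‖) + 2 * (|ξ| ^ (k + 2) * ‖hat F t ξ‖) := by ring
    _ ≤ _ := by linarith

lemma Good.hat_int {T : ℝ} {F : ℝ × ℝ → ℝ} (h : Good T F) {t : ℝ} (ht : t ∈ Set.Icc (-T) T)
    {κ : ℝ → ℂ} {k : ℕ} {c : ℝ} (hκ : Measurable κ) (hc : 0 ≤ c) (hb : ∀ ξ, ‖κ ξ‖ ≤ c * |ξ| ^ k) :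
    Integrable (fun ξ => κ ξ * hat F t ξ) := by
  obtain ⟨D, hD⟩ := h.hat_wt ht k
  refine (wt_int.const_mul (c * D)).mono'
    (hκ.mul (h.cont_hat ht).measurable).aestronglyMeasurable (Eventually.of_forall fun ξ => ?_)
  rw [norm_mul]
  calc ‖κ ξ‖ * ‖hat F t ξ‖ ≤ c * |ξ| ^ k * ‖hat F t ξ‖ := by gcongr; exact hb ξ
    _ = c * (|ξ| ^ k * ‖hat F t ξ‖) := by ring
    _ ≤ c * (D * wt ξ) := mul_le_mul_of_nonneg_left (hD ξ) hc
    _ = _ := by ring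

lemma Good.hat_int0 {T : ℝ} {F : ℝ × ℝ → ℝ} (h : Good T F) {t : ℝ} (ht : t ∈ Set.Icc (-T) T) :
    Integrable (hat F t) := by
  have := h.hat_int ht (κ := fun _ => 1) (k := 0) (c := 1) measurable_const (by norm_num) (by simp)
  simpa using this

lemma Good.inv {T : ℝ} {F : ℝ × ℝ → ℝ} (h : Good T F) {t : ℝ} (ht : t ∈ Set.Icc (-T) T) (x : ℝ) :
    (F (x, t) : ℂ) = (1 / (2 * Real.pi) : ℂ) * ift (hat F t) x :=
  ft_inversion (f := fun y => (F (y, t) : ℂ)) (by have := h.cont; fun_prop) (h.intC ht)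
    (h.hat_int0 ht) x

lemma Good.hat_dt {T : ℝ} {F : ℝ × ℝ → ℝ} (h : Good T F) {t : ℝ} (ht : t ∈ Set.Ioo (-T) T)
    (ξ : ℝ) : HasDerivAt (fun s => hat F s ξ) (hat (MK.dt F) t ξ) t := by
  obtain ⟨D, hD⟩ := h.dt.bd
  have hc := h.cont
  have hc' := h.dt.cont
  have ht' := Set.Ioo_subset_Icc_self ht
  refine (hasDerivAt_integral_of_dominated_loc_of_deriv_le (μ := volume) (𝕜 := ℝ)
    (F := fun s y => cexp (-I * y * ξ) * (F (y, s) : ℂ))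
    (F' := fun s y => cexp (-I * y * ξ) * (MK.dt F (y, s) : ℂ))
    (bound := fun y => D * wt y)
    (s := Set.Ioo (-T) T) (Ioo_mem_nhds ht.1 ht.2) ?_ ?_ ?_ ?_ (wt_int.const_mul D) ?_).2
  · refine Eventually.of_forall fun s => Continuous.aestronglyMeasurable ?_; fun_prop
  · refine (h.intC ht').bdd_mul (c := 1) (Continuous.aestronglyMeasurable (by fun_prop)) ?_
    exact Eventually.of_forall fun p => (norm_exp2 p ξ).le
  · refine Continuous.aestronglyMeasurable ?_; fun_prop
  · refine Eventually.of_forall fun y s hs => ?_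
    rw [norm_mul, norm_exp2, one_mul, Complex.norm_real]
    exact hD y s (Set.Ioo_subset_Icc_self hs)
  · refine Eventually.of_forall fun y s _ => ?_
    exact ((h.hasDerivAt_t y s).ofReal_comp).const_mul _

end MK


namespace MK

open Complex Filter Topology

/-- Space-time Fourier transform. -/
noncomputable def VV (v : ℝ × ℝ → ℝ) (p : ℝ × ℝ) : ℂ :=
  ∫ q : ℝ × ℝ, cexp (-I * (q.1 * p.1 + q.2 * p.2)) * (v q : ℂ)

lemma measurable_VV (v : SchwartzMap (ℝ × ℝ) ℝ) : Measurable (VV v) := by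
  unfold VV
  have hv := v.continuous
  have : StronglyMeasurable (fun w : (ℝ × ℝ) × (ℝ × ℝ) =>
      cexp (-I * (w.2.1 * w.1.1 + w.2.2 * w.1.2)) * (v w.2 : ℂ)) := by
    apply Continuous.stronglyMeasurable; fun_prop
  exact this.integral_prod_right'.measurable

lemma norm_exp4 (x t : ℝ) (p : ℝ × ℝ) : ‖cexp (-I * (p.1 * x + p.2 * t))‖ = 1 := by
  have : -I * (p.1 * x + p.2 * t) = ((-(p.1 * x + p.2 * t) : ℝ) : ℂ) * I := by push_cast; ring
  rw [this, Complex.norm_exp_ofReal_mul_I]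

lemma VV_eq (v : SchwartzMap (ℝ × ℝ) ℝ) (ξ τ : ℝ) :
    VV v (ξ, τ) = ft (fun t => hat v t ξ) τ := by
  have hi : Integrable (fun q : ℝ × ℝ => cexp (-I * (q.1 * ξ + q.2 * τ)) * (v q : ℂ)) := by
    refine (v.integrable.ofReal).bdd_mul (c := 1) (Continuous.aestronglyMeasurable (by fun_prop)) ?_
    exact Eventually.of_forall fun p => (norm_exp4 ξ τ p).le
  unfold VV hat ft
  rw [Measure.volume_eq_prod] at hi ⊢
  rw [integral_prod_symm _ hi]
  congr 1; ext t
  rw [← integral_const_mul]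
  congr 1; ext y
  dsimp only
  rw [← mul_assoc, ← Complex.exp_add]
  congr 2; ring

lemma hat_int_t (v : SchwartzMap (ℝ × ℝ) ℝ) (ξ : ℝ) : Integrable (fun t => hat v t ξ) := by
  have hi : Integrable (fun q : ℝ × ℝ => cexp (-I * (q.1 * ξ + q.2 * (0 : ℝ))) * (v q : ℂ)) := by
    refine (v.integrable.ofReal).bdd_mul (c := 1) (Continuous.aestronglyMeasurable (by fun_prop)) ?_
    exact Eventually.of_forall fun p => (norm_exp4 ξ 0 p).le
  rw [Measure.volume_eq_prod] at hi
  refine hi.integral_prod_right.congr (Eventually.of_forall fun t => ?_)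
  unfold hat ft
  dsimp only
  congr 1; ext y
  congr 2; simp [mul_assoc]

lemma hat_cont_t (v : SchwartzMap (ℝ × ℝ) ℝ) (ξ : ℝ) : Continuous (fun t => hat v t ξ) := by
  rw [continuous_iff_continuousAt]
  intro t
  have h : t ∈ Set.Ioo (-(|t| + 1)) (|t| + 1) :=
    ⟨by linarith [neg_abs_le t], by linarith [le_abs_self t]⟩
  exact ((good_schwartz (|t| + 1) v).hat_dt h ξ).continuousAt

lemma hh_ae {σ : ℝ} (v : SchwartzMap (ℝ × ℝ) ℝ) (hM : MM σ (VV v) < ∞) (t : ℝ) :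
    ∀ᵐ ξ, ift (fun τ => VV v (ξ, τ)) t = (2 * Real.pi : ℂ) * hat v t ξ := by
  have hm := measurable_VV v
  have hI : Integrable (VV v) := by
    refine ⟨hm.aestronglyMeasurable, lt_of_le_of_lt (lintegral_mono fun p => ?_) (L1_fin hm hM)⟩
    have h1 : (1 : ℝ≥0∞) ≤ ENNReal.ofReal (1 + |p.1|) := by
      rw [← ENNReal.ofReal_one]; apply ENNReal.ofReal_le_ofReal; linarith [abs_nonneg p.1]
    have h2 : (1 : ℝ≥0∞) ≤ ENNReal.ofReal (Real.cosh (σ * p.1)) := by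
      rw [← ENNReal.ofReal_one]; apply ENNReal.ofReal_le_ofReal; exact Real.one_le_cosh _
    exact le_mul_of_one_le_left' (one_le_mul h1 h2)
  rw [Measure.volume_eq_prod] at hI
  filter_upwards [hI.prod_right_ae] with ξ hξ
  have e : (fun τ => VV v (ξ, τ)) = ft (fun t => hat v t ξ) := funext (VV_eq v ξ)
  rw [e] at hξ ⊢
  have := ft_inversion (hat_cont_t v ξ) (hat_int_t v ξ) hξ t
  rw [this]
  have hp : (Real.pi : ℂ) ≠ 0 := by exact_mod_cast Real.pi_ne_zero
  field_simp

lemma measurable_hat (v : SchwartzMap (ℝ × ℝ) ℝ) : Measurable (fun z : ℝ × ℝ => hat v z.1 z.2) := by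
  unfold hat ft
  have hv := v.continuous
  have : StronglyMeasurable (fun w : (ℝ × ℝ) × ℝ =>
      cexp (-I * w.2 * w.1.2) * (v (w.2, w.1.1) : ℂ)) := by
    apply Continuous.stronglyMeasurable; fun_prop
  exact this.integral_prod_right'.measurable

lemma continuous_ch (σ : ℝ) : Continuous (fun ξ : ℝ => ((Real.cosh (σ * ξ) : ℝ) : ℂ)) := by
  have : Continuous (fun ξ : ℝ => Real.cosh (σ * ξ)) :=
    Real.continuous_cosh.comp (continuous_const.mul continuous_id)
  exact Complex.continuous_ofReal.comp this

lemma continuous_sh (σ : ℝ) : Continuous (fun ξ : ℝ => ((Real.sinh (σ * ξ) : ℝ) : ℂ)) := by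
  have : Continuous (fun ξ : ℝ => Real.sinh (σ * ξ)) :=
    Real.continuous_sinh.comp (continuous_const.mul continuous_id)
  exact Complex.continuous_ofReal.comp this

lemma hat_U_eq {σ T : ℝ} {F : ℝ × ℝ → ℝ} (gF : Good T F) (v : SchwartzMap (ℝ × ℝ) ℝ)
    (hM : MM σ (VV v) < ∞) {t : ℝ} (ht : t ∈ Set.Icc (-T) T)
    (h : ∀ x, (F (x, t) : ℂ) = (1 / (2 * Real.pi) : ℂ) *
      ift (fun ξ => ((Real.cosh (σ * ξ) : ℝ) : ℂ) * hat v t ξ) x) (ξ : ℝ) :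
    hat F t ξ = ((Real.cosh (σ * ξ) : ℝ) : ℂ) * hat v t ξ := by
  have hcont : Continuous (fun ξ : ℝ => ((Real.cosh (σ * ξ) : ℝ) : ℂ) * hat v t ξ) :=
    (continuous_ch σ).mul ((good_schwartz T v).cont_hat ht)
  refine ft_of_ift (f := fun x => (F (x, t) : ℂ)) hcont ?_ (gF.intC ht) h ξ
  refine ⟨hcont.aestronglyMeasurable, ?_⟩
  have hb := (L1_time (σ := σ) (measurable_VV v) (hh_ae v hM t)).trans_lt
    (ENNReal.mul_lt_top C1_lt_top hM)
  have hlt : ∫⁻ ξ, ENNReal.ofReal (1 + |ξ|) * ENNReal.ofReal (Real.cosh (σ * ξ)) *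
      ‖hat v t ξ‖ₑ < ∞ := by
    by_contra hn
    rw [not_lt, top_le_iff] at hn
    rw [hn] at hb; simp at hb
  refine lt_of_le_of_lt (lintegral_mono fun ξ => ?_) hlt
  rw [enorm_mul]
  refine mul_le_mul' ?_ le_rfl
  have h1 : (1 : ℝ≥0∞) ≤ ENNReal.ofReal (1 + |ξ|) := by
    rw [← ENNReal.ofReal_one]; apply ENNReal.ofReal_le_ofReal; linarith [abs_nonneg ξ]
  rw [← ofReal_norm, Complex.norm_real, Real.norm_of_nonneg (Real.cosh_pos _).le]
  exact le_mul_of_one_le_left' h1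

/-- Convolution on the frequency side. -/
noncomputable def cv (g1 g2 : ℝ → ℂ) (ξ : ℝ) : ℂ := ∫ η, g1 η * g2 (ξ - η)

lemma integrable_ift {g : ℝ → ℂ} (hg : Integrable g) (x : ℝ) :
    Integrable (fun ξ : ℝ => cexp (I * x * ξ) * g ξ) := by
  apply hg.bdd_mul (c := 1)
  · apply Continuous.aestronglyMeasurable; fun_prop
  · exact Eventually.of_forall fun p => (norm_exp1 x p).le

lemma ift_mul {g1 g2 : ℝ → ℂ} (h1 : Integrable g1) (h2 : Integrable g2) (x : ℝ) :
    ift (cv g1 g2) x = ift g1 x * ift g2 x := by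
  have := integral_convolution (ContinuousLinearMap.mul ℂ ℂ) (integrable_ift h1 x)
    (integrable_ift h2 x)
  simp only [convolution, ContinuousLinearMap.mul_apply'] at this
  unfold ift cv
  rw [← this]
  congr 1; ext p
  rw [← integral_const_mul]
  congr 1; ext q
  have e : cexp (I * x * p) = cexp (I * x * q) * cexp (I * x * ((p - q : ℝ) : ℂ)) := by
    rw [← Complex.exp_add]; congr 1; push_cast; ring
  rw [e]; ring

lemma integrable_cv {g1 g2 : ℝ → ℂ} (h1 : Integrable g1) (h2 : Integrable g2) :
    Integrable (cv g1 g2) := h1.integrable_convolution (ContinuousLinearMap.mul ℂ ℂ) h2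

lemma continuous_cv {g1 g2 : ℝ → ℂ} (h1 : Integrable g1) (hc : Continuous g2)
    (hb : ∃ D, ∀ ξ, ‖g2 ξ‖ ≤ D) : Continuous (cv g1 g2) := by
  obtain ⟨D, hD⟩ := hb
  exact BddAbove.continuous_convolution_right_of_integrable (ContinuousLinearMap.mul ℂ ℂ)
    ⟨D, by rintro _ ⟨ξ, rfl⟩; exact hD ξ⟩ h1 hc

lemma cv_bd {g1 g2 : ℝ → ℂ} (h1 : Integrable g1)
    (hb : ∃ D, ∀ ξ, ‖g2 ξ‖ ≤ D) : ∃ D, ∀ ξ, ‖cv g1 g2 ξ‖ ≤ D := by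
  obtain ⟨D, hD⟩ := hb
  refine ⟨∫ η, ‖g1 η‖ * D, fun ξ => ?_⟩
  unfold cv
  refine norm_integral_le_of_norm_le (h1.norm.mul_const D) (Eventually.of_forall fun η => ?_)
  rw [norm_mul]
  gcongr
  exact hD _

lemma cv_twist {e : ℝ → ℂ} (he : ∀ a b, e a * e (b - a) = e b) (g1 g2 : ℝ → ℂ) :
    cv (fun ξ => e ξ * g1 ξ) (fun ξ => e ξ * g2 ξ) = fun ξ => e ξ * cv g1 g2 ξ := by
  ext ξ
  unfold cv
  rw [← integral_const_mul]
  congr 1; ext η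
  rw [← he η ξ]; ring

lemma ift_add {g1 g2 : ℝ → ℂ} (h1 : Integrable g1) (h2 : Integrable g2) (x : ℝ) :
    ift (fun ξ => g1 ξ + g2 ξ) x = ift g1 x + ift g2 x := by
  unfold ift
  rw [← integral_add (integrable_ift h1 x) (integrable_ift h2 x)]
  congr 1; ext ξ; ring

lemma ift_const_mul (c : ℂ) (g : ℝ → ℂ) (x : ℝ) :
    ift (fun ξ => c * g ξ) x = c * ift g x := by
  unfold ift
  rw [← integral_const_mul]
  congr 1; ext ξ; ring

lemma hasDerivAt_ift {g : ℝ → ℂ} (hg : Integrable g) (hg' : Integrable (fun ξ : ℝ => (I * ξ) * g ξ))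
    (x : ℝ) : HasDerivAt (ift g) (ift (fun ξ => (I * ξ) * g ξ) x) x := by
  refine (hasDerivAt_integral_of_dominated_loc_of_deriv_le (μ := volume) (𝕜 := ℝ)
    (F := fun (y : ℝ) (ξ : ℝ) => cexp (I * y * ξ) * g ξ)
    (F' := fun (y : ℝ) (ξ : ℝ) => cexp (I * y * ξ) * ((I * ξ) * g ξ))
    (bound := fun ξ : ℝ => ‖(I * ξ) * g ξ‖)
    (s := Set.univ) Filter.univ_mem ?_ (integrable_ift hg x) (integrable_ift hg' x).1 ?_ hg'.norm ?_).2
  · exact Eventually.of_forall fun y => (integrable_ift hg y).1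
  · refine Eventually.of_forall fun ξ y _ => ?_
    rw [norm_mul, norm_exp1, one_mul]
  · refine Eventually.of_forall fun ξ y _ => ?_
    have h1 : HasDerivAt (fun y : ℝ => I * y * ξ) (I * 1 * ξ) y :=
      ((Complex.ofRealCLM.hasDerivAt (x := y)).const_mul I).mul_const _
    have := h1.cexp.mul_const (g ξ)
    refine this.congr_deriv ?_
    ring

lemma norm_ift_le (g : ℝ → ℂ) (x : ℝ) : ‖ift g x‖ ≤ ∫ ξ, ‖g ξ‖ := by
  rw [ift_eq_ft]; exact norm_ft_le g _

end MK


namespace MK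

open Complex Filter Topology

/-- Symbol of `∂ₓ^a cosh(σ D)`. -/
noncomputable def Uk (σ : ℝ) (a : ℕ) (ξ : ℝ) : ℂ := (I * ξ) ^ a * ((Real.cosh (σ * ξ) : ℝ) : ℂ)
/-- Symbol of `∂ₓ^a sinh(σ D)`. -/
noncomputable def Yk (σ : ℝ) (a : ℕ) (ξ : ℝ) : ℂ := (I * ξ) ^ a * ((Real.sinh (σ * ξ) : ℝ) : ℂ)

lemma norm_Ipow (a : ℕ) (ξ : ℝ) : ‖(I * ξ : ℂ) ^ a‖ = |ξ| ^ a := by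
  rw [norm_pow, norm_mul, Complex.norm_I, Complex.norm_real, Real.norm_eq_abs, one_mul]

lemma continuous_Uk (σ : ℝ) (a : ℕ) : Continuous (Uk σ a) := by
  unfold Uk
  exact (by fun_prop : Continuous fun ξ : ℝ => (I * ξ : ℂ) ^ a).mul (continuous_ch σ)

lemma continuous_Yk (σ : ℝ) (a : ℕ) : Continuous (Yk σ a) := by
  unfold Yk
  exact (by fun_prop : Continuous fun ξ : ℝ => (I * ξ : ℂ) ^ a).mul (continuous_sh σ)

lemma norm_Uk (σ : ℝ) (a : ℕ) (ξ : ℝ) : ‖Uk σ a ξ‖ ≤ 1 * |ξ| ^ a * Real.cosh (σ * ξ) := by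
  unfold Uk
  rw [norm_mul, norm_Ipow, Complex.norm_real, Real.norm_eq_abs, abs_of_pos (Real.cosh_pos _), one_mul]

lemma abs_sinh_le (y : ℝ) : |Real.sinh y| ≤ |y| * Real.cosh y := by
  have key : ∀ z : ℝ, 0 ≤ z → Real.sinh z ≤ z * Real.cosh z := by
    intro z hz
    have hm : MonotoneOn (fun z => z * Real.cosh z - Real.sinh z) (Set.Ici 0) := by
      apply monotoneOn_of_deriv_nonneg (convex_Ici 0)
      · apply Continuous.continuousOn
        exact (continuous_id.mul Real.continuous_cosh).sub Real.continuous_sinh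
      · intro x _
        exact (((hasDerivAt_id x).mul (Real.hasDerivAt_cosh x)).sub
          (Real.hasDerivAt_sinh x)).differentiableAt.differentiableWithinAt
      · intro x hx
        have hx' : 0 < x := by simpa using hx
        have := (((hasDerivAt_id x).mul (Real.hasDerivAt_cosh x)).sub
          (Real.hasDerivAt_sinh x)).deriv
        have e : deriv (fun z => z * Real.cosh z - Real.sinh z) x = x * Real.sinh x := by
          refine Eq.trans this ?_
          simp
        rw [e]
        exact mul_nonneg hx'.le (Real.sinh_nonneg_iff.2 hx'.le)
    have := hm (Set.mem_Ici.2 le_rfl) (Set.mem_Ici.2 hz) hz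
    simp at this
    linarith
  rcases le_total 0 y with hy | hy
  · rw [abs_of_nonneg hy, abs_of_nonneg (Real.sinh_nonneg_iff.2 hy)]; exact key y hy
  · rw [abs_of_nonpos hy, abs_of_nonpos (Real.sinh_nonpos_iff.2 hy)]
    have := key (-y) (by linarith)
    rwa [Real.sinh_neg, Real.cosh_neg] at this

lemma norm_Yk {σ : ℝ} (hσ : 0 < σ) (a : ℕ) (ξ : ℝ) :
    ‖Yk σ a ξ‖ ≤ σ * |ξ| ^ (a + 1) * Real.cosh (σ * ξ) := by
  unfold Yk
  rw [norm_mul, norm_Ipow, Complex.norm_real, Real.norm_eq_abs]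
  have := abs_sinh_le (σ * ξ)
  rw [abs_mul, abs_of_pos hσ] at this
  calc _ ≤ |ξ| ^ a * (σ * |ξ| * Real.cosh (σ * ξ)) := by gcongr
    _ = _ := by ring

lemma ch_ne (y : ℝ) : ((Real.cosh y : ℝ) : ℂ) ≠ 0 := by
  exact_mod_cast (Real.cosh_pos y).ne'

lemma int_g {σ T t : ℝ} {F : ℝ × ℝ → ℝ} (gF : Good T F) (ht : t ∈ Set.Icc (-T) T) {g : ℝ → ℂ}
    (hg : ∀ ξ, hat F t ξ = ((Real.cosh (σ * ξ) : ℝ) : ℂ) * g ξ) {κ : ℝ → ℂ} (hκ : Measurable κ)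
    {c : ℝ} (hc : 0 ≤ c) {k : ℕ} (hb : ∀ ξ, ‖κ ξ‖ ≤ c * |ξ| ^ k * Real.cosh (σ * ξ)) :
    Integrable (fun ξ => κ ξ * g ξ) := by
  have h := gF.hat_int ht (κ := fun ξ => κ ξ / ((Real.cosh (σ * ξ) : ℝ) : ℂ)) (k := k) (c := c)
    (hκ.div (continuous_ch σ).measurable) hc (by
      intro ξ
      rw [norm_div, Complex.norm_real, Real.norm_eq_abs, abs_of_pos (Real.cosh_pos _),
        div_le_iff₀ (Real.cosh_pos _)]
      exact hb ξ)
  refine h.congr (Eventually.of_forall fun ξ => ?_)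
  simp only [hg ξ]
  have := ch_ne (σ * ξ)
  field_simp

lemma hat_dt_U {σ T t : ℝ} {F : ℝ × ℝ → ℝ} (gF : Good T F) (v : SchwartzMap (ℝ × ℝ) ℝ)
    (ht : t ∈ Set.Ioo (-T) T)
    (hF : ∀ s ∈ Set.Icc (-T) T, ∀ ξ, hat F s ξ = ((Real.cosh (σ * ξ) : ℝ) : ℂ) * hat v s ξ) (ξ : ℝ) :
    hat (dt F) t ξ = ((Real.cosh (σ * ξ) : ℝ) : ℂ) * hat (dt v) t ξ := by
  have h1 := gF.hat_dt ht ξ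
  have h2 := ((good_schwartz T v).hat_dt ht ξ).const_mul ((Real.cosh (σ * ξ) : ℝ) : ℂ)
  refine h1.unique (h2.congr_of_eventuallyEq ?_)
  filter_upwards [Ioo_mem_nhds ht.1 ht.2] with s hs
  exact hF s (Set.Ioo_subset_Icc_self hs) ξ

lemma hat_dx3 {T t : ℝ} {F : ℝ × ℝ → ℝ} (gF : Good T F) (ht : t ∈ Set.Icc (-T) T) (ξ : ℝ) :
    hat (dx (dx (dx F))) t ξ = (I * ξ) ^ 3 * hat F t ξ := by
  rw [gF.dx.dx.hat_dx ht, gF.dx.hat_dx ht, gF.hat_dx ht]; ring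

lemma ift_hat {T t : ℝ} {F : ℝ × ℝ → ℝ} (gF : Good T F) (ht : t ∈ Set.Icc (-T) T) (x : ℝ) :
    ift (hat F t) x = (2 * Real.pi : ℂ) * F (x, t) := by
  rw [gF.inv ht x]
  have hp : (Real.pi : ℂ) ≠ 0 := by exact_mod_cast Real.pi_ne_zero
  field_simp

lemma G_zero {T t μ : ℝ} {v : ℝ × ℝ → ℝ} (gv : Good T v) (ht : t ∈ Set.Icc (-T) T)
    (hp : ∀ x, dt v (x, t) + dx (dx (dx v)) (x, t) + μ * v (x, t) ^ 2 * dx v (x, t) = 0) (ξ : ℝ) :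
    hat (dt v) t ξ + (I * ξ) ^ 3 * hat v t ξ + (μ / (2 * Real.pi) ^ 2 : ℂ) *
      cv (hat v t) (cv (hat v t) (fun η => (I * η) * hat v t η)) ξ = 0 := by
  have e1 : (fun η : ℝ => (I * η) * hat v t η) = hat (dx v) t := by
    ext η; rw [gv.hat_dx ht]
  have hpi : (Real.pi : ℂ) ≠ 0 := by exact_mod_cast Real.pi_ne_zero
  rw [e1, ← hat_dx3 gv ht]
  have i1 := gv.dt.hat_int0 ht
  have i2 := gv.dx.dx.dx.hat_int0 ht
  have i3 := integrable_cv (gv.hat_int0 ht) (gv.dx.hat_int0 ht)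
  have i4 := integrable_cv (gv.hat_int0 ht) i3
  have b1 : ∃ D, ∀ ξ, ‖hat (dx v) t ξ‖ ≤ D := by
    obtain ⟨D, hD⟩ := gv.dx.hat_bd ht 0
    exact ⟨D, fun ξ => by simpa using hD ξ⟩
  have c3 := continuous_cv (gv.hat_int0 ht) (gv.dx.cont_hat ht) b1
  have c4 := continuous_cv (gv.hat_int0 ht) c3 (cv_bd (gv.hat_int0 ht) b1)
  have key := ft_of_ift (f := fun _ => 0)
    (g := fun ξ => hat (dt v) t ξ + hat (dx (dx (dx v))) t ξ + (μ / (2 * Real.pi) ^ 2 : ℂ) *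
      cv (hat v t) (cv (hat v t) (hat (dx v) t)) ξ)
    (((gv.dt.cont_hat ht).add (gv.dx.dx.dx.cont_hat ht)).add (c4.const_smul (μ / (2 * Real.pi) ^ 2 : ℂ)))
    ((i1.add i2).add (i4.const_mul (μ / (2 * Real.pi) ^ 2 : ℂ)))
    (integrable_zero _ _ _) (by
      intro x
      rw [ift_add (g1 := fun ξ => hat (dt v) t ξ + hat (dx (dx (dx v))) t ξ) (i1.add i2)
        (i4.const_mul (μ / (2 * Real.pi) ^ 2 : ℂ)), ift_add i1 i2, ift_const_mul,
        ift_mul (gv.hat_int0 ht) i3, ift_mul (gv.hat_int0 ht) (gv.dx.hat_int0 ht),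
        ift_hat gv ht, ift_hat gv.dx ht, ift_hat gv.dt ht, ift_hat gv.dx.dx.dx ht]
      have := congrArg (fun r : ℝ => (r : ℂ)) (hp x)
      push_cast at this
      field_simp
      linear_combination -this) ξ
  rw [← key]
  simp [ft]

lemma twisted {σ T t μ : ℝ} {F : ℝ × ℝ → ℝ} (gF : Good T F) (v : SchwartzMap (ℝ × ℝ) ℝ)
    (ht : t ∈ Set.Ioo (-T) T)
    (hF : ∀ s ∈ Set.Icc (-T) T, ∀ ξ, hat F s ξ = ((Real.cosh (σ * ξ) : ℝ) : ℂ) * hat v s ξ)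
    (hp : ∀ x, dt v (x, t) + dx (dx (dx v)) (x, t) + μ * v (x, t) ^ 2 * dx v (x, t) = 0)
    {e : ℝ → ℂ} (hm : Measurable e) (he : ∀ a b, e a * e (b - a) = e b)
    (hb : ∀ ξ, ‖e ξ‖ ≤ 2 * Real.cosh (σ * ξ)) (x : ℝ) :
    (1 / (2 * Real.pi) : ℂ) * ift (fun ξ => e ξ * hat (dt v) t ξ) x +
      (1 / (2 * Real.pi) : ℂ) * ift (fun ξ => (e ξ * (I * ξ) ^ 3) * hat v t ξ) x +
      μ * ((1 / (2 * Real.pi) : ℂ) * ift (fun ξ => e ξ * hat v t ξ) x) ^ 2 *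
        ((1 / (2 * Real.pi) : ℂ) * ift (fun ξ => (e ξ * (I * ξ)) * hat v t ξ) x) = 0 := by
  have ht' := Set.Ioo_subset_Icc_self ht
  have hpi : (Real.pi : ℂ) ≠ 0 := by exact_mod_cast Real.pi_ne_zero
  have i0 : Integrable (fun ξ => e ξ * hat v t ξ) :=
    int_g gF ht' (hF t ht') hm (c := 2) (k := 0) (by norm_num) (by simpa using hb)
  have i1 : Integrable (fun ξ : ℝ => (e ξ * (I * ξ)) * hat v t ξ) :=
    int_g gF ht' (hF t ht') (hm.mul (by fun_prop)) (c := 2) (k := 1) (by norm_num) (by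
      intro ξ
      have := norm_Ipow 1 ξ
      simp only [pow_one] at this
      rw [norm_mul, this, pow_one]
      nlinarith [hb ξ, abs_nonneg ξ])
  have i3 : Integrable (fun ξ : ℝ => (e ξ * (I * ξ) ^ 3) * hat v t ξ) :=
    int_g gF ht' (hF t ht') (hm.mul (by fun_prop)) (c := 2) (k := 3) (by norm_num) (by
      intro ξ
      rw [norm_mul, norm_Ipow]
      nlinarith [hb ξ, pow_nonneg (abs_nonneg ξ) 3])
  have it : Integrable (fun ξ => e ξ * hat (dt v) t ξ) :=
    int_g gF.dt ht' (hat_dt_U gF v ht hF) hm (c := 2) (k := 0) (by norm_num) (by simpa using hb)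
  have h0 : (fun ξ => e ξ * hat (dt v) t ξ + (e ξ * (I * ξ) ^ 3) * hat v t ξ +
      (μ / (2 * Real.pi) ^ 2 : ℂ) * cv (fun ξ => e ξ * hat v t ξ)
        (cv (fun ξ => e ξ * hat v t ξ) (fun ξ => (e ξ * (I * ξ)) * hat v t ξ)) ξ) = fun _ => 0 := by
    ext ξ
    have e1 : (fun ξ : ℝ => (e ξ * (I * ξ)) * hat v t ξ) = fun ξ : ℝ => e ξ * ((I * ξ) * hat v t ξ) := by
      ext ξ; ring
    rw [e1, cv_twist he, cv_twist he]
    have := G_zero (good_schwartz T v) ht' hp ξ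
    linear_combination e ξ * this
  have h1 := congrArg (fun g => ift g x) h0
  beta_reduce at h1
  have iA := it.add i3
  have iB := (integrable_cv i0 (integrable_cv i0 i1)).const_mul (μ / (2 * Real.pi) ^ 2 : ℂ)
  have hz : ift (fun _ => 0) x = 0 := by simp [ift]
  rw [ift_add (g1 := fun ξ => e ξ * hat (dt v) t ξ + (e ξ * (I * ξ) ^ 3) * hat v t ξ) iA iB,
    ift_add it i3, ift_const_mul, ift_mul i0 (integrable_cv i0 i1), ift_mul i0 i1, hz] at h1
  field_simp
  field_simp at h1
  linear_combination h1

/-- `Y_a = (∂ₓ^a sinh(σ D) v)(x,t)` up to normalisation. -/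
noncomputable def Y (σ : ℝ) (v : ℝ × ℝ → ℝ) (t : ℝ) (a : ℕ) (x : ℝ) : ℂ :=
  (1 / (2 * Real.pi) : ℂ) * ift (fun ξ => Yk σ a ξ * hat v t ξ) x

lemma int_Uk {σ T t : ℝ} {F : ℝ × ℝ → ℝ} (gF : Good T F) (ht : t ∈ Set.Icc (-T) T) {g : ℝ → ℂ}
    (hg : ∀ ξ, hat F t ξ = ((Real.cosh (σ * ξ) : ℝ) : ℂ) * g ξ) (a : ℕ) :
    Integrable (fun ξ => Uk σ a ξ * g ξ) :=
  int_g gF ht hg (continuous_Uk σ a).measurable zero_le_one (norm_Uk σ a)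

lemma int_Yk {σ T t : ℝ} (hσ : 0 < σ) {F : ℝ × ℝ → ℝ} (gF : Good T F) (ht : t ∈ Set.Icc (-T) T)
    {g : ℝ → ℂ} (hg : ∀ ξ, hat F t ξ = ((Real.cosh (σ * ξ) : ℝ) : ℂ) * g ξ) (a : ℕ) :
    Integrable (fun ξ => Yk σ a ξ * g ξ) :=
  int_g gF ht hg (continuous_Yk σ a).measurable hσ.le (norm_Yk hσ a)

/-- Iterated space derivative. -/
noncomputable def dxn (F : ℝ × ℝ → ℝ) : ℕ → ℝ × ℝ → ℝ
  | 0 => F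
  | n + 1 => dx (dxn F n)

lemma Good.dxn {T : ℝ} {F : ℝ × ℝ → ℝ} (h : Good T F) (n : ℕ) : Good T (dxn F n) := by
  induction n with
  | zero => exact h
  | succ n ih => exact ih.dx

lemma U_eq {σ T t : ℝ} {F : ℝ × ℝ → ℝ} (gF : Good T F) (ht : t ∈ Set.Icc (-T) T) {g : ℝ → ℂ}
    (hg : ∀ ξ, hat F t ξ = ((Real.cosh (σ * ξ) : ℝ) : ℂ) * g ξ) (a : ℕ) (x : ℝ) :
    (dxn F a (x, t) : ℂ) = (1 / (2 * Real.pi) : ℂ) * ift (fun ξ => Uk σ a ξ * g ξ) x := by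
  have : ∀ ξ, hat (dxn F a) t ξ = Uk σ a ξ * g ξ := by
    intro ξ
    have : hat (dxn F a) t ξ = (I * ξ) ^ a * hat F t ξ := by
      induction a with
      | zero => simp [dxn]
      | succ n ih => rw [dxn, (gF.dxn n).hat_dx ht, ih]; ring
    rw [this, hg]; unfold Uk; ring
  rw [(gF.dxn a).inv ht, funext this]

lemma ift_es {σ T t : ℝ} (hσ : 0 < σ) {F : ℝ × ℝ → ℝ} (gF : Good T F) (ht : t ∈ Set.Icc (-T) T)
    {v : ℝ × ℝ → ℝ} (hg : ∀ ξ, hat F t ξ = ((Real.cosh (σ * ξ) : ℝ) : ℂ) * hat v t ξ)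
    (a : ℕ) (x : ℝ) (s : ℂ) :
    (1 / (2 * Real.pi) : ℂ) * ift (fun ξ => (((Real.cosh (σ * ξ) : ℝ) + s * (Real.sinh (σ * ξ) : ℝ)) *
      (I * ξ) ^ a) * hat v t ξ) x = dxn F a (x, t) + s * Y σ v t a x := by
  have i1 := int_Uk gF ht hg a
  have i2 := (int_Yk hσ gF ht hg a).const_mul s
  rw [U_eq gF ht hg a, Y, show (fun ξ : ℝ => ((((Real.cosh (σ * ξ) : ℝ) : ℂ) + s * ((Real.sinh (σ * ξ) : ℝ) : ℂ)) *
      (I * ξ) ^ a) * hat v t ξ) = fun ξ => Uk σ a ξ * hat v t ξ + s * (Yk σ a ξ * hat v t ξ) by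
    ext ξ; unfold Uk Yk; ring, ift_add i1 i2, ift_const_mul]
  ring

lemma pde_es {σ T t μ : ℝ} (hσ : 0 < σ) {F : ℝ × ℝ → ℝ} (gF : Good T F) (v : SchwartzMap (ℝ × ℝ) ℝ)
    (ht : t ∈ Set.Ioo (-T) T)
    (hF : ∀ s ∈ Set.Icc (-T) T, ∀ ξ, hat F s ξ = ((Real.cosh (σ * ξ) : ℝ) : ℂ) * hat v s ξ)
    (hp : ∀ x, dt v (x, t) + dx (dx (dx v)) (x, t) + μ * v (x, t) ^ 2 * dx v (x, t) = 0)
    (s : ℝ) (hs : s = 1 ∨ s = -1) (x : ℝ) :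
    ((dt F (x, t) : ℂ) + s * Y σ (dt v) t 0 x) + (dxn F 3 (x, t) + s * Y σ v t 3 x) +
      μ * (dxn F 0 (x, t) + s * Y σ v t 0 x) ^ 2 * (dxn F 1 (x, t) + s * Y σ v t 1 x) = 0 := by
  have ht' := Set.Ioo_subset_Icc_self ht
  have hx : ∀ ξ : ℝ, ((Real.cosh (σ * ξ) : ℝ) : ℂ) + s * ((Real.sinh (σ * ξ) : ℝ) : ℂ) =
      ((Real.exp (s * (σ * ξ)) : ℝ) : ℂ) := by
    intro ξ
    rcases hs with rfl | rfl
    · rw [one_mul, ← Real.cosh_add_sinh]; push_cast; ring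
    · rw [show (-1 : ℝ) * (σ * ξ) = -(σ * ξ) by ring, ← Real.cosh_sub_sinh]; push_cast; ring
  have h := twisted (μ := μ) gF v ht hF hp
    (e := fun ξ : ℝ => ((Real.cosh (σ * ξ) : ℝ) : ℂ) + s * ((Real.sinh (σ * ξ) : ℝ) : ℂ))
    ((continuous_ch σ).add (continuous_const.mul (continuous_sh σ))).measurable (by
      intro a b
      simp only [hx]
      rw [← Complex.ofReal_mul, ← Real.exp_add]
      congr 3; ring) (by
      intro ξ
      have e1 := Real.cosh_pos (σ * ξ)
      have e2 : |Real.sinh (σ * ξ)| ≤ Real.cosh (σ * ξ) := by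
        rw [abs_le]
        have := Real.cosh_add_sinh (σ * ξ)
        have := Real.cosh_sub_sinh (σ * ξ)
        have := Real.exp_pos (σ * ξ)
        have := Real.exp_pos (-(σ * ξ))
        constructor <;> linarith
      refine (norm_add_le _ _).trans ?_
      rw [norm_mul, Complex.norm_real, Complex.norm_real, Complex.norm_real, Real.norm_eq_abs,
        Real.norm_eq_abs, Real.norm_eq_abs, abs_of_pos e1]
      have : |s| = 1 := by rcases hs with rfl | rfl <;> simp
      rw [this]; linarith) x
  have f0 := ift_es hσ gF ht' (hF t ht') 0 x s
  have f1 := ift_es hσ gF ht' (hF t ht') 1 x s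
  have f3 := ift_es hσ gF ht' (hF t ht') 3 x s
  have ft := ift_es hσ gF.dt ht' (hat_dt_U gF v ht hF) 0 x s
  simp only [pow_zero, pow_one, mul_one] at f0 f1 f3 ft
  rw [f0, f1, f3, ft] at h
  exact h

lemma pde_U {σ T t μ : ℝ} (hσ : 0 < σ) {F : ℝ × ℝ → ℝ} (gF : Good T F) (v : SchwartzMap (ℝ × ℝ) ℝ)
    (ht : t ∈ Set.Ioo (-T) T)
    (hF : ∀ s ∈ Set.Icc (-T) T, ∀ ξ, hat F s ξ = ((Real.cosh (σ * ξ) : ℝ) : ℂ) * hat v s ξ)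
    (hp : ∀ x, dt v (x, t) + dx (dx (dx v)) (x, t) + μ * v (x, t) ^ 2 * dx v (x, t) = 0) (x : ℝ) :
    (dt F (x, t) : ℂ) + dxn F 3 (x, t) + μ * (dxn F 0 (x, t) ^ 2 * dxn F 1 (x, t) +
      Y σ v t 0 x ^ 2 * dxn F 1 (x, t) + 2 * dxn F 0 (x, t) * (Y σ v t 0 x * Y σ v t 1 x)) = 0 := by
  have h1 := pde_es hσ gF v ht hF hp 1 (Or.inl rfl) x
  have h2 := pde_es hσ gF v ht hF hp (-1) (Or.inr rfl) x
  push_cast at h1 h2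
  linear_combination (h1 + h2) / 2

lemma hasDerivAt_Y {σ T t : ℝ} (hσ : 0 < σ) {F : ℝ × ℝ → ℝ} (gF : Good T F)
    (ht : t ∈ Set.Icc (-T) T)
    {v : ℝ × ℝ → ℝ} (hg : ∀ ξ, hat F t ξ = ((Real.cosh (σ * ξ) : ℝ) : ℂ) * hat v t ξ)
    (a : ℕ) (x : ℝ) : HasDerivAt (Y σ v t a) (Y σ v t (a + 1) x) x := by
  have e : ∀ ξ, Yk σ (a + 1) ξ * hat v t ξ = (I * ξ) * (Yk σ a ξ * hat v t ξ) := by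
    intro ξ; unfold Yk; ring
  have i1 := int_Yk hσ gF ht hg (a + 1)
  have := (hasDerivAt_ift (int_Yk hσ gF ht hg a) (by simpa only [e] using i1) x).const_mul
    (1 / (2 * Real.pi) : ℂ)
  unfold Y
  simpa only [e] using this

lemma Y_bd (σ t : ℝ) (v : ℝ × ℝ → ℝ) (a : ℕ) : ∃ D, ∀ x, ‖Y σ v t a x‖ ≤ D := by
  refine ⟨‖(1 / (2 * Real.pi) : ℂ)‖ * ∫ ξ, ‖Yk σ a ξ * hat v t ξ‖, fun x => ?_⟩
  unfold Y
  rw [norm_mul]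
  exact mul_le_mul_of_nonneg_left (norm_ift_le _ x) (norm_nonneg _)

end MK


namespace MK

open Complex Filter Topology

/-- Continuous functions dominated by a multiple of the weight `w` on `S`. -/
def DD {X : Type*} [TopologicalSpace X] (S : Set X) (w : X → ℝ) (f : X → ℝ) : Prop :=
  Continuous f ∧ ∃ D : ℝ, 0 ≤ D ∧ ∀ p ∈ S, |f p| ≤ D * w p

/-- Continuous functions bounded on `S`. -/
def BB {X : Type*} [TopologicalSpace X] (S : Set X) (f : X → ℝ) : Prop := DD S (fun _ => 1) f

section cls
variable {X : Type*} [TopologicalSpace X] {S : Set X} {w : X → ℝ} {f g : X → ℝ}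

lemma DD.add (hf : DD S w f) (hg : DD S w g) : DD S w (fun p => f p + g p) := by
  obtain ⟨c1, D1, h1, b1⟩ := hf
  obtain ⟨c2, D2, h2, b2⟩ := hg
  refine ⟨c1.add c2, D1 + D2, by linarith, fun p hp => ?_⟩
  have := abs_add_le (f p) (g p)
  have := b1 p hp
  have := b2 p hp
  rw [add_mul]; linarith

lemma DD.sub (hf : DD S w f) (hg : DD S w g) : DD S w (fun p => f p - g p) := by
  obtain ⟨c1, D1, h1, b1⟩ := hf
  obtain ⟨c2, D2, h2, b2⟩ := hg
  refine ⟨c1.sub c2, D1 + D2, by linarith, fun p hp => ?_⟩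
  have := abs_sub (f p) (g p)
  have := b1 p hp
  have := b2 p hp
  rw [add_mul]; linarith

lemma DD.mul (hf : BB S f) (hg : DD S w g) : DD S w (fun p => f p * g p) := by
  obtain ⟨c1, D1, h1, b1⟩ := hf
  obtain ⟨c2, D2, h2, b2⟩ := hg
  refine ⟨c1.mul c2, D1 * D2, by positivity, fun p hp => ?_⟩
  rw [abs_mul, mul_assoc]
  have e1 := b1 p hp
  rw [mul_one] at e1
  exact mul_le_mul e1 (b2 p hp) (abs_nonneg _) h1

lemma BB.const (c : ℝ) : BB S (fun _ => c) :=
  ⟨continuous_const, |c|, abs_nonneg _, fun _ _ => by simp⟩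

lemma BB.mul (hf : BB S f) (hg : BB S g) : BB S (fun p => f p * g p) := DD.mul hf hg

lemma BB.add (hf : BB S f) (hg : BB S g) : BB S (fun p => f p + g p) := DD.add hf hg

lemma BB.sub (hf : BB S f) (hg : BB S g) : BB S (fun p => f p - g p) := DD.sub hf hg

lemma BB.pow (hf : BB S f) (n : ℕ) : BB S (fun p => f p ^ n) := by
  induction n with
  | zero => simpa using BB.const 1
  | succ n ih => simpa only [pow_succ] using ih.mul hf

lemma DD.toBB (hw : ∀ p, w p ≤ 1) (hf : DD S w f) : BB S f := by
  obtain ⟨c1, D1, h1, b1⟩ := hf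
  exact ⟨c1, D1, h1, fun p hp => (b1 p hp).trans (mul_le_mul_of_nonneg_left (hw p) h1)⟩

lemma DD.pow (hw : ∀ p, w p ≤ 1) (hf : DD S w f) (n : ℕ) : DD S w (fun p => f p ^ (n + 1)) := by
  simpa only [pow_succ] using DD.mul ((hf.toBB hw).pow n) hf

end cls

lemma DD.integrable {f : ℝ → ℝ} (hf : DD Set.univ wt f) : Integrable f := by
  obtain ⟨c, D, _, hD⟩ := hf
  exact (wt_int.const_mul D).mono' c.aestronglyMeasurable
    (Eventually.of_forall fun x => hD x trivial)

/-- The strip. -/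
def strip (T : ℝ) : Set (ℝ × ℝ) := {p | p.2 ∈ Set.Icc (-T) T}

/-- Class of functions on the strip. -/
def SP (T : ℝ) (f : ℝ × ℝ → ℝ) : Prop := DD (strip T) (fun p => wt p.1) f

lemma Good.SP {T : ℝ} {F : ℝ × ℝ → ℝ} (h : Good T F) : SP T F := by
  obtain ⟨D, hD⟩ := h.bd
  refine ⟨h.cont, |D|, abs_nonneg _, fun p hp => (hD p.1 p.2 hp).trans ?_⟩
  exact mul_le_mul_of_nonneg_right (le_abs_self D) (wt_pos _).le

lemma SP.slice {T : ℝ} {F : ℝ × ℝ → ℝ} (h : SP T F) {t : ℝ} (ht : t ∈ Set.Icc (-T) T) :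
    DD Set.univ wt (fun x => F (x, t)) := by
  obtain ⟨c, D, h0, hD⟩ := h
  exact ⟨by fun_prop, D, h0, fun x _ => hD (x, t) ht⟩

lemma SP.continuousOn {T : ℝ} {f : ℝ × ℝ → ℝ} (h : SP T f) :
    ContinuousOn (fun t => ∫ x, f (x, t)) (Set.Icc (-T) T) := by
  obtain ⟨c, D, h0, hD⟩ := h
  refine continuousOn_of_dominated (bound := fun x => D * wt x) ?_ ?_ (wt_int.const_mul D) ?_
  · exact fun t _ => Continuous.aestronglyMeasurable (by fun_prop)
  · exact fun t ht => Eventually.of_forall fun x => hD (x, t) ht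
  · exact Eventually.of_forall fun x => Continuous.continuousOn (by fun_prop)

lemma SP.hasDerivAt {T t : ℝ} {f g : ℝ × ℝ → ℝ} (hf : SP T f) (hg : SP T g)
    (hd : ∀ x s, HasDerivAt (fun s => f (x, s)) (g (x, s)) s) (ht : t ∈ Set.Ioo (-T) T) :
    HasDerivAt (fun t => ∫ x, f (x, t)) (∫ x, g (x, t)) t := by
  have hi := (hf.slice (Set.Ioo_subset_Icc_self ht)).integrable
  obtain ⟨c, D, h0, hD⟩ := hg
  have cf := hf.1
  refine (hasDerivAt_integral_of_dominated_loc_of_deriv_le (μ := volume) (𝕜 := ℝ)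
    (F := fun s y => f (y, s)) (F' := fun s y => g (y, s)) (bound := fun y => D * wt y)
    (s := Set.Ioo (-T) T) (Ioo_mem_nhds ht.1 ht.2) ?_ hi ?_ ?_ (wt_int.const_mul D) ?_).2
  · exact Eventually.of_forall fun s => Continuous.aestronglyMeasurable (by fun_prop)
  · exact Continuous.aestronglyMeasurable (by fun_prop)
  · exact Eventually.of_forall fun y s hs => hD (y, s) (Set.Ioo_subset_Icc_self hs)
  · exact Eventually.of_forall fun y s _ => hd y s

/-- Energy density. -/
noncomputable def rho (μ a b c : ℝ) : ℝ :=
  a ^ 2 + b ^ 2 + c ^ 2 - μ / 6 * a ^ 4 - 5 * μ / 3 * (a ^ 2 * b ^ 2) + 1 / 18 * a ^ 6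

/-- Time derivative of the energy density. -/
noncomputable def rhot (μ a b c a' b' c' : ℝ) : ℝ :=
  2 * a * a' + 2 * b * b' + 2 * c * c' - 2 * μ / 3 * a ^ 3 * a' -
    10 * μ / 3 * (a * b ^ 2 * a' + a ^ 2 * b * b') + 1 / 3 * a ^ 5 * a'

lemma hasDerivAt_rho {μ s : ℝ} {a b c : ℝ → ℝ} {a' b' c' : ℝ} (ha : HasDerivAt a a' s)
    (hb : HasDerivAt b b' s) (hc : HasDerivAt c c' s) :
    HasDerivAt (fun s => rho μ (a s) (b s) (c s)) (rhot μ (a s) (b s) (c s) a' b' c') s := by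
  unfold rho rhot
  have h := ((((((ha.fun_pow 2).fun_add (hb.fun_pow 2)).fun_add (hc.fun_pow 2)).fun_sub
    ((ha.fun_pow 4).const_mul (μ / 6))).fun_sub
    (((ha.fun_pow 2).fun_mul (hb.fun_pow 2)).const_mul (5 * μ / 3))).fun_add
    ((ha.fun_pow 6).const_mul (1 / 18)))
  refine h.congr_deriv ?_
  push_cast
  ring

lemma DD_rho {X : Type*} [TopologicalSpace X] {S : Set X} {w : X → ℝ} (hw : ∀ p, w p ≤ 1)
    (μ : ℝ) {a b c : X → ℝ} (ha : DD S w a) (hb : DD S w b) (hc : DD S w c) :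
    DD S w (fun p => rho μ (a p) (b p) (c p)) := by
  unfold rho
  have ha' := ha.toBB hw
  have hb' := hb.toBB hw
  have hc' := hc.toBB hw
  repeat' (with_reducible first | exact hw | assumption | apply BB.const | apply BB.mul | apply BB.add | apply BB.sub | apply BB.pow | apply DD.add | apply DD.sub | apply DD.mul | apply DD.pow)

lemma DD_rhot {X : Type*} [TopologicalSpace X] {S : Set X} {w : X → ℝ} (hw : ∀ p, w p ≤ 1)
    (μ : ℝ) {a b c a' b' c' : X → ℝ} (ha : DD S w a) (hb : DD S w b) (hc : DD S w c)
    (ha1 : DD S w a') (hb1 : DD S w b') (hc1 : DD S w c') :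
    DD S w (fun p => rhot μ (a p) (b p) (c p) (a' p) (b' p) (c' p)) := by
  unfold rhot
  have ha' := ha.toBB hw
  have hb' := hb.toBB hw
  have hc' := hc.toBB hw
  repeat' (with_reducible first | exact hw | assumption | apply BB.const | apply BB.mul | apply BB.add | apply BB.sub | apply BB.pow | apply DD.add | apply DD.sub | apply DD.mul | apply DD.pow)

/-- The error density. -/
noncomputable def EE (μ a b c d q0 q1 q2 : ℝ) : ℝ :=
  μ * (2 * a - 2 * c - 2 * μ / 3 * a ^ 3 + 10 * μ / 3 * (a * b ^ 2 + a ^ 2 * c) + 1 / 3 * a ^ 5) *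
    (q0 * b + q1 * a) - 2 * μ * d * (q0 * c + 2 * q1 * b + q2 * a)

set_option maxHeartbeats 1000000 in
lemma energy_id {μ : ℝ} (hμ : μ ^ 2 = 1) {a b c d e p p1 p2 q0 q1 q2 : ℝ → ℝ}
    (ha : DD Set.univ wt a) (hb : DD Set.univ wt b) (hc : DD Set.univ wt c)
    (hd : DD Set.univ wt d) (he : DD Set.univ wt e)
    (hp : DD Set.univ wt p) (hp1 : DD Set.univ wt p1) (hp2 : DD Set.univ wt p2)
    (h0 : BB Set.univ q0) (h1 : BB Set.univ q1) (h2 : BB Set.univ q2)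
    (da : ∀ x, HasDerivAt a (b x) x) (db : ∀ x, HasDerivAt b (c x) x)
    (dc : ∀ x, HasDerivAt c (d x) x) (dD : ∀ x, HasDerivAt d (e x) x)
    (dp : ∀ x, HasDerivAt p (p1 x) x) (dp1 : ∀ x, HasDerivAt p1 (p2 x) x)
    (dq0 : ∀ x, HasDerivAt q0 (q1 x) x) (dq1 : ∀ x, HasDerivAt q1 (q2 x) x)
    (hpde : ∀ x, p x = -d x - μ * (a x ^ 2 * b x) + μ * (q0 x * b x + q1 x * a x)) :
    ∫ x, rhot μ (a x) (b x) (c x) (p x) (p1 x) (p2 x) =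
      ∫ x, EE μ (a x) (b x) (c x) (d x) (q0 x) (q1 x) (q2 x) := by
  have hw := wt_le_one
  have ba := ha.toBB hw
  have bb := hb.toBB hw
  have bc := hc.toBB hw
  have bd := hd.toBB hw
  have be := he.toBB hw
  have iR := (DD_rhot hw μ ha hb hc hp hp1 hp2).integrable
  have iE : Integrable (fun x => EE μ (a x) (b x) (c x) (d x) (q0 x) (q1 x) (q2 x)) := by
    apply DD.integrable
    unfold EE
    repeat' (with_reducible first | exact hw | assumption | apply BB.const | apply BB.mul | apply BB.add | apply BB.sub | apply BB.pow | apply DD.add | apply DD.sub | apply DD.mul | apply DD.pow)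
  have iJ : Integrable (fun x => 2 * b x * p x + 2 * c x * p1 x - 2 * d x * p x -
      10 * μ / 3 * (a x ^ 2 * b x * p x) + (b x ^ 2 - 2 * a x * c x - μ / 2 * a x ^ 4 + c x ^ 2
      - d x ^ 2 - 2 * μ * (a x ^ 2 * b x * d x) + 2 * μ / 3 * (a x ^ 3 * c x) + 1 / 9 * a x ^ 6
      - 2 * μ / 3 * (a x ^ 2 * c x ^ 2) + 2 * μ / 3 * (a x * b x ^ 2 * c x) - μ / 6 * b x ^ 4
      - 5 / 6 * (a x ^ 4 * b x ^ 2) - 1 / 3 * (a x ^ 5 * c x) - μ / 24 * a x ^ 8) +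
      2 * μ * d x * (q0 x * b x + q1 x * a x)) := by
    apply DD.integrable
    repeat' (with_reducible first | exact hw | assumption | apply BB.const | apply BB.mul | apply BB.add | apply BB.sub | apply BB.pow | apply DD.add | apply DD.sub | apply DD.mul | apply DD.pow)
  have key := integral_eq_zero_of_hasDerivAt_of_integrable
    (f' := fun x => rhot μ (a x) (b x) (c x) (p x) (p1 x) (p2 x) -
      EE μ (a x) (b x) (c x) (d x) (q0 x) (q1 x) (q2 x)) (fun x => ?_) (iR.sub iE) iJ
  · rw [integral_sub iR iE] at key
    linarith
  · have a2 := (da x).fun_pow 2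
    have a3 := (da x).fun_pow 3
    have a4 := (da x).fun_pow 4
    have a5 := (da x).fun_pow 5
    have a6 := (da x).fun_pow 6
    have a8 := (da x).fun_pow 8
    have b2 := (db x).fun_pow 2
    have b4 := (db x).fun_pow 4
    have c2 := (dc x).fun_pow 2
    have d2 := (dD x).fun_pow 2
    have hJ1 := (((((db x).const_mul 2).fun_mul (dp x)).fun_add
      (((dc x).const_mul 2).fun_mul (dp1 x))).fun_sub (((dD x).const_mul 2).fun_mul (dp x))).fun_sub
      (((a2.fun_mul (db x)).fun_mul (dp x)).const_mul (10 * μ / 3))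
    have hJ3 := ((dD x).const_mul (2 * μ)).fun_mul
      (((dq0 x).fun_mul (db x)).fun_add ((dq1 x).fun_mul (da x)))
    have hJ2 := ((((((((((((b2.fun_sub (((da x).const_mul 2).fun_mul (dc x))).fun_sub
      (a4.const_mul (μ / 2))).fun_add c2).fun_sub d2).fun_sub
      (((a2.fun_mul (db x)).fun_mul (dD x)).const_mul (2 * μ))).fun_add
      ((a3.fun_mul (dc x)).const_mul (2 * μ / 3))).fun_add (a6.const_mul (1 / 9))).fun_sub
      ((a2.fun_mul c2).const_mul (2 * μ / 3))).fun_add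
      ((((da x).fun_mul b2).fun_mul (dc x)).const_mul (2 * μ / 3))).fun_sub
      (b4.const_mul (μ / 6))).fun_sub ((a4.fun_mul b2).const_mul (5 / 6))).fun_sub
      ((a5.fun_mul (dc x)).const_mul (1 / 3))).fun_sub (a8.const_mul (μ / 24))
    refine ((hJ1.fun_add hJ2).fun_add hJ3).congr_deriv ?_
    unfold rhot EE
    have hx := hpde x
    generalize a x = A at *
    generalize b x = B at *
    generalize c x = C at *
    generalize d x = D at *
    generalize e x = E at *
    generalize p x = P at *
    generalize p1 x = P1 at *
    generalize p2 x = P2 at *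
    generalize q0 x = R0 at *
    generalize q1 x = R1 at *
    generalize q2 x = R2 at *
    push_cast
    have e1 : (μ - 1) * (μ + 1) = 0 := by linear_combination hμ
    rcases mul_eq_zero.1 e1 with h | h
    · obtain rfl : μ = 1 := by linarith
      rw [hx]; ring
    · obtain rfl : μ = -1 := by linarith
      rw [hx]; ring

end MK


namespace MK

open Complex Filter Topology

/-- The quadratic error functions. -/
noncomputable def Q0 (σ : ℝ) (v : ℝ × ℝ → ℝ) (t x : ℝ) : ℝ := -(Y σ v t 0 x ^ 2).re
/-- First derivative of `Q0`. -/
noncomputable def Q1 (σ : ℝ) (v : ℝ × ℝ → ℝ) (t x : ℝ) : ℝ := -(2 * (Y σ v t 0 x * Y σ v t 1 x)).re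
/-- Second derivative of `Q0`. -/
noncomputable def Q2 (σ : ℝ) (v : ℝ × ℝ → ℝ) (t x : ℝ) : ℝ :=
  -(2 * (Y σ v t 1 x * Y σ v t 1 x + Y σ v t 0 x * Y σ v t 2 x)).re

/-- The energy. -/
noncomputable def En (μ : ℝ) (F : ℝ × ℝ → ℝ) (t : ℝ) : ℝ :=
  ∫ x, rho μ (dxn F 0 (x, t)) (dxn F 1 (x, t)) (dxn F 2 (x, t))

/-- Density of the time derivative of the energy. -/
noncomputable def En' (μ : ℝ) (F : ℝ × ℝ → ℝ) (t : ℝ) : ℝ :=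
  ∫ x, rhot μ (dxn F 0 (x, t)) (dxn F 1 (x, t)) (dxn F 2 (x, t)) (dt (dxn F 0) (x, t))
    (dt (dxn F 1) (x, t)) (dt (dxn F 2) (x, t))

/-- The error at a point. -/
noncomputable def Er (σ μ : ℝ) (F v : ℝ × ℝ → ℝ) (t x : ℝ) : ℝ :=
  EE μ (dxn F 0 (x, t)) (dxn F 1 (x, t)) (dxn F 2 (x, t)) (dxn F 3 (x, t))
    (Q0 σ v t x) (Q1 σ v t x) (Q2 σ v t x)

lemma BB_re {f : ℝ → ℂ} (hc : Continuous f) (hb : ∃ D, ∀ x, ‖f x‖ ≤ D) :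
    BB Set.univ (fun x => -(f x).re) := by
  obtain ⟨D, hD⟩ := hb
  refine ⟨(Complex.continuous_re.comp hc).neg, |D|, abs_nonneg _, fun x _ => ?_⟩
  rw [abs_neg, mul_one]
  exact (Complex.abs_re_le_norm _).trans ((hD x).trans (le_abs_self D))

lemma En'_eq {σ T t μ : ℝ} (hσ : 0 < σ) (hμ : μ ^ 2 = 1) {F : ℝ × ℝ → ℝ} (gF : Good T F)
    (v : SchwartzMap (ℝ × ℝ) ℝ) (ht : t ∈ Set.Ioo (-T) T)
    (hF : ∀ s ∈ Set.Icc (-T) T, ∀ ξ, hat F s ξ = ((Real.cosh (σ * ξ) : ℝ) : ℂ) * hat v s ξ)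
    (hp : ∀ x, dt v (x, t) + dx (dx (dx v)) (x, t) + μ * v (x, t) ^ 2 * dx v (x, t) = 0) :
    En' μ F t = ∫ x, Er σ μ F v t x := by
  have ht' := Set.Ioo_subset_Icc_self ht
  have dY := hasDerivAt_Y hσ gF ht' (hF t ht')
  have cY : ∀ a, Continuous (Y σ v t a) := fun a =>
    continuous_iff_continuousAt.2 fun x => (dY a x).continuousAt
  have hD := fun n => ((gF.dxn n).SP).slice ht'
  have hDt := fun n => ((gF.dxn n).dt.SP).slice ht'
  have hre : ∀ {f : ℝ → ℂ} {f' : ℂ} {x : ℝ}, HasDerivAt f f' x →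
      HasDerivAt (fun y => -(f y).re) (-f'.re) x := by
    intro f f' x h
    exact ((Complex.reCLM.hasFDerivAt.comp_hasDerivAt x h)).neg
  have bmul : ∀ a b, ∃ D, ∀ x, ‖Y σ v t a x * Y σ v t b x‖ ≤ D := by
    intro a b
    obtain ⟨D1, h1⟩ := Y_bd σ t v a
    obtain ⟨D2, h2⟩ := Y_bd σ t v b
    refine ⟨D1 * D2, fun x => ?_⟩
    rw [norm_mul]
    exact mul_le_mul (h1 x) (h2 x) (norm_nonneg _) ((norm_nonneg _).trans (h1 x))
  unfold En' Er
  refine energy_id hμ (hD 0) (hD 1) (hD 2) (hD 3) (hD 4) (hDt 0) (hDt 1) (hDt 2)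
    ?_ ?_ ?_ (fun x => (gF.dxn 0).hasDerivAt_x x t) (fun x => (gF.dxn 1).hasDerivAt_x x t)
    (fun x => (gF.dxn 2).hasDerivAt_x x t) (fun x => (gF.dxn 3).hasDerivAt_x x t)
    (fun x => ?_) (fun x => ?_) (fun x => ?_) (fun x => ?_) (fun x => ?_)
  · refine BB_re ((cY 0).pow 2) ?_
    simpa only [pow_two] using bmul 0 0
  · refine BB_re (continuous_const.mul ((cY 0).mul (cY 1))) ?_
    obtain ⟨D, h⟩ := bmul 0 1
    refine ⟨2 * D, fun x => ?_⟩
    have := h x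
    rw [norm_mul]; simp only [Complex.norm_ofNat]; linarith
  · refine BB_re (continuous_const.mul (((cY 1).mul (cY 1)).add ((cY 0).mul (cY 2)))) ?_
    obtain ⟨D, h⟩ := bmul 0 2
    obtain ⟨D', h'⟩ := bmul 1 1
    refine ⟨2 * (D' + D), fun x => ?_⟩
    rw [norm_mul]; simp only [Complex.norm_ofNat]
    have := norm_add_le (Y σ v t 1 x * Y σ v t 1 x) (Y σ v t 0 x * Y σ v t 2 x)
    linarith [h x, h' x]
  · have := (gF.dxn 0).dt.hasDerivAt_x x t
    rw [(gF.dxn 0).comm] at this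
    exact this
  · have := (gF.dxn 1).dt.hasDerivAt_x x t
    rw [(gF.dxn 1).comm] at this
    exact this
  · refine (hre ((dY 0 x).fun_pow 2)).congr_deriv ?_
    unfold Q1
    congr 2; push_cast; ring
  · refine (hre (((dY 0 x).fun_mul (dY 1 x)).const_mul 2)).congr_deriv ?_
    unfold Q2; rfl
  · have h := congrArg Complex.re (pde_U hσ gF v ht hF hp x)
    unfold Q0 Q1
    simp only [Complex.add_re, Complex.ofReal_re, Complex.re_ofReal_mul, Complex.zero_re] at h
    have e1 : ((dxn F 0 (x, t) : ℂ) ^ 2 * (dxn F 1 (x, t) : ℂ)).re =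
        dxn F 0 (x, t) ^ 2 * dxn F 1 (x, t) := by
      rw [← Complex.ofReal_pow, ← Complex.ofReal_mul, Complex.ofReal_re]
    have e2 : (Y σ v t 0 x ^ 2 * (dxn F 1 (x, t) : ℂ)).re = (Y σ v t 0 x ^ 2).re * dxn F 1 (x, t) :=
      Complex.re_mul_ofReal _ _
    have e3 : (2 * (dxn F 0 (x, t) : ℂ) * (Y σ v t 0 x * Y σ v t 1 x)).re =
        dxn F 0 (x, t) * (2 * (Y σ v t 0 x * Y σ v t 1 x)).re := by
      rw [← Complex.re_ofReal_mul]; congr 1; ring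
    rw [e1, e2, e3] at h
    change dt F (x, t) = _
    linear_combination h

lemma increment {σ T t μ : ℝ} (hσ : 0 < σ) (hμ : μ ^ 2 = 1) {F : ℝ × ℝ → ℝ} (gF : Good T F)
    (v : SchwartzMap (ℝ × ℝ) ℝ) (hT : 0 < T) (ht : t ∈ Set.Icc 0 T)
    (hF : ∀ s ∈ Set.Icc (-T) T, ∀ ξ, hat F s ξ = ((Real.cosh (σ * ξ) : ℝ) : ℂ) * hat v s ξ)
    (hp : ∀ t ∈ Set.Ioo (-T) T, ∀ x,
      dt v (x, t) + dx (dx (dx v)) (x, t) + μ * v (x, t) ^ 2 * dx v (x, t) = 0) :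
    ENNReal.ofReal (En μ F t) ≤ ENNReal.ofReal (En μ F 0) +
      ∫⁻ s in Set.Ioo 0 t, ∫⁻ x, ‖Er σ μ F v s x‖ₑ := by
  have hw : ∀ p : ℝ × ℝ, wt p.1 ≤ 1 := fun p => wt_le_one _
  have s1 : SP T (fun p => rho μ (dxn F 0 p) (dxn F 1 p) (dxn F 2 p)) :=
    DD_rho hw μ (gF.dxn 0).SP (gF.dxn 1).SP (gF.dxn 2).SP
  have s2 : SP T (fun p => rhot μ (dxn F 0 p) (dxn F 1 p) (dxn F 2 p) (dt (dxn F 0) p)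
      (dt (dxn F 1) p) (dt (dxn F 2) p)) :=
    DD_rhot hw μ (gF.dxn 0).SP (gF.dxn 1).SP (gF.dxn 2).SP (gF.dxn 0).dt.SP
      (gF.dxn 1).dt.SP (gF.dxn 2).dt.SP
  have c1 : ContinuousOn (En μ F) (Set.Icc (-T) T) := s1.continuousOn
  have c2 : ContinuousOn (En' μ F) (Set.Icc (-T) T) := s2.continuousOn
  have d1 : ∀ s ∈ Set.Ioo (-T) T, HasDerivAt (En μ F) (En' μ F s) s := fun s hs =>
    SP.hasDerivAt s1 s2 (fun x r => hasDerivAt_rho ((gF.dxn 0).hasDerivAt_t x r)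
      ((gF.dxn 1).hasDerivAt_t x r) ((gF.dxn 2).hasDerivAt_t x r)) hs
  have hsub : Set.Icc 0 t ⊆ Set.Icc (-T) T := Set.Icc_subset_Icc (by linarith) ht.2
  have hsub' : Set.Ioo 0 t ⊆ Set.Ioo (-T) T := Set.Ioo_subset_Ioo (by linarith) ht.2
  have ftc := intervalIntegral.integral_eq_sub_of_hasDerivAt_of_le ht.1 (c1.mono hsub)
    (fun s hs => d1 s (hsub' hs)) ((c2.mono hsub).intervalIntegrable_of_Icc ht.1)
  have e : En μ F t = En μ F 0 + ∫ s in (0:ℝ)..t, En' μ F s := by rw [ftc]; ring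
  rw [e]
  refine (ENNReal.ofReal_add_le).trans ?_
  gcongr
  rw [intervalIntegral.integral_of_le ht.1, integral_Ioc_eq_integral_Ioo]
  calc ENNReal.ofReal (∫ s in Set.Ioo 0 t, En' μ F s) ≤ ‖∫ s in Set.Ioo 0 t, En' μ F s‖ₑ := by
        rw [← ofReal_norm]; exact ENNReal.ofReal_le_ofReal (Real.le_norm_self _)
    _ ≤ ∫⁻ s in Set.Ioo 0 t, ‖En' μ F s‖ₑ := enorm_integral_le_lintegral_enorm _
    _ ≤ _ := by
      refine setLIntegral_mono' measurableSet_Ioo fun s hs => ?_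
      rw [En'_eq hσ hμ gF v (hsub' hs) hF (hp s (hsub' hs))]
      exact enorm_integral_le_lintegral_enorm _

end MK


namespace MK

open Complex Filter Topology

/-- Admissible symbols. -/
def Sym (σ : ℝ) (o : ℕ) (c : ℝ) (κ : ℝ → ℂ) : Prop :=
  Measurable κ ∧ 0 ≤ c ∧ ∀ ξ, ‖κ ξ‖ ≤ c * |ξ| ^ o * Real.cosh (σ * ξ)

lemma Sym_U (σ : ℝ) (a : ℕ) : Sym σ a 1 (Uk σ a) :=
  ⟨(continuous_Uk σ a).measurable, zero_le_one, norm_Uk σ a⟩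

lemma Sym_Y {σ : ℝ} (hσ : 0 < σ) (a : ℕ) : Sym σ (a + 1) σ (Yk σ a) :=
  ⟨(continuous_Yk σ a).measurable, hσ.le, norm_Yk hσ a⟩

/-- Size of the multiplier applied to `v`. -/
noncomputable def zz (κ : ℝ → ℂ) (v : ℝ × ℝ → ℝ) (t x : ℝ) : ℝ≥0∞ :=
  ‖ift (fun ξ => κ ξ * hat v t ξ) x‖ₑ

lemma measurable_zz {κ : ℝ → ℂ} (hκ : Measurable κ) (v : SchwartzMap (ℝ × ℝ) ℝ) :
    Measurable (fun z : ℝ × ℝ => zz κ v z.1 z.2) := by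
  unfold zz ift
  apply Measurable.enorm
  have h1 : Measurable (fun w : (ℝ × ℝ) × ℝ => hat v w.1.1 w.2) :=
    (measurable_hat v).comp (by fun_prop : Measurable fun w : (ℝ × ℝ) × ℝ => (w.1.1, w.2))
  have h2 : Measurable (fun w : (ℝ × ℝ) × ℝ => cexp (I * (w.1.2 : ℂ) * (w.2 : ℂ)) * (κ w.2 * hat v w.1.1 w.2)) := by
    refine Measurable.mul ?_ ((hκ.comp measurable_snd).mul h1)
    apply Continuous.measurable; fun_prop
  exact (h2.stronglyMeasurable.integral_prod_right').measurable

section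
variable {σ T : ℝ} {F : ℝ × ℝ → ℝ}

lemma pair (gF : Good T F) (v : SchwartzMap (ℝ × ℝ) ℝ) (hM : MM σ (VV v) < ∞)
    (hF : ∀ s ∈ Set.Icc (-T) T, ∀ ξ, hat F s ξ = ((Real.cosh (σ * ξ) : ℝ) : ℂ) * hat v s ξ)
    {s : Set ℝ} (hs : MeasurableSet s) (hsT : s ⊆ Set.Icc (-T) T)
    {o r o' r' : ℕ} {c d c' d' : ℝ} {κ χ κ' χ' : ℝ → ℂ} (h1 : Sym σ o c κ) (h2 : Sym σ r d χ)
    (h3 : Sym σ o' c' κ') (h4 : Sym σ r' d' χ')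
    (ho : o ≤ 3) (hr : r ≤ 3) (hor : o + r ≤ 4) (ho' : o' ≤ 3) (hr' : r' ≤ 3) (hor' : o' + r' ≤ 4)
    (hcd : c * d * (c' * d') = σ ^ 2) :
    ∫⁻ z, (zz κ v z.1 z.2 * zz χ v z.1 z.2) * (zz κ' v z.1 z.2 * zz χ' v z.1 z.2)
      ∂((volume.restrict s).prod volume) ≤ C2 * ENNReal.ofReal (σ ^ 2) * MM σ (VV v) ^ 2 := by
  have m1 := measurable_zz h1.1 v
  have m2 := measurable_zz h2.1 v
  have m3 := measurable_zz h3.1 v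
  have m4 := measurable_zz h4.1 v
  have hitg : ∀ {o : ℕ} {c : ℝ} {κ : ℝ → ℂ}, Sym σ o c κ → ∀ t ∈ s,
      Integrable (fun ξ => κ ξ * hat v t ξ) := fun h t ht =>
    int_g gF (hsT ht) (hF t (hsT ht)) h.1 h.2.1 h.2.2
  have hh : ∀ t ∈ s, ∀ᵐ ξ, ift (fun τ => VV v (ξ, τ)) t = (2 * Real.pi : ℂ) * hat v t ξ :=
    fun t _ => hh_ae v hM t
  have p1 := prodN h1.1 h2.1 (measurable_VV v) hM h1.2.1 h2.2.1 h1.2.2 h2.2.2 ho hr hor hs hh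
    (hitg h1) (hitg h2)
  have p2 := prodN h3.1 h4.1 (measurable_VV v) hM h3.2.1 h4.2.1 h3.2.2 h4.2.2 ho' hr' hor' hs hh
    (hitg h3) (hitg h4)
  have q1 : ∫⁻ z, (zz κ v z.1 z.2 * zz χ v z.1 z.2) ^ 2 ∂((volume.restrict s).prod volume) ≤
      C2 * ENNReal.ofReal (c * d) ^ 2 * MM σ (VV v) ^ 2 := by
    rw [lintegral_prod _ (by fun_prop)]; exact p1
  have q2 : ∫⁻ z, (zz κ' v z.1 z.2 * zz χ' v z.1 z.2) ^ 2 ∂((volume.restrict s).prod volume) ≤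
      C2 * ENNReal.ofReal (c' * d') ^ 2 * MM σ (VV v) ^ 2 := by
    rw [lintegral_prod _ (by fun_prop)]; exact p2
  have key := cs_lint ((volume.restrict s).prod volume)
    (f := fun z : ℝ × ℝ => zz κ v z.1 z.2 * zz χ v z.1 z.2)
    (g := fun z : ℝ × ℝ => zz κ' v z.1 z.2 * zz χ' v z.1 z.2)
    (m1.mul m2).aemeasurable (m3.mul m4).aemeasurable
  have fin := key.trans (mul_le_mul' q1 q2)
  have e : C2 * ENNReal.ofReal (c * d) ^ 2 * MM σ (VV v) ^ 2 *
      (C2 * ENNReal.ofReal (c' * d') ^ 2 * MM σ (VV v) ^ 2) =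
      (C2 * ENNReal.ofReal (σ ^ 2) * MM σ (VV v) ^ 2) ^ 2 := by
    rw [← hcd, ENNReal.ofReal_mul (mul_nonneg h1.2.1 h2.2.1)]; ring
  rw [e] at fin
  exact (ENNReal.pow_le_pow_left_iff two_ne_zero).1 fin

lemma norm_const_le : ‖(1 / (2 * Real.pi) : ℂ)‖ ≤ 1 := by
  have : (1 / (2 * Real.pi) : ℂ) = ((1 / (2 * Real.pi) : ℝ) : ℂ) := by push_cast; rfl
  rw [this, Complex.norm_real, Real.norm_eq_abs, abs_of_pos (by positivity), div_le_one (by positivity)]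
  nlinarith [Real.pi_gt_three]

lemma U_le {t : ℝ} (gF : Good T F) (ht : t ∈ Set.Icc (-T) T) {v : ℝ × ℝ → ℝ}
    (hg : ∀ ξ, hat F t ξ = ((Real.cosh (σ * ξ) : ℝ) : ℂ) * hat v t ξ) (a : ℕ) (x : ℝ) :
    |dxn F a (x, t)| ≤ ‖ift (fun ξ => Uk σ a ξ * hat v t ξ) x‖ := by
  have := congrArg norm (U_eq gF ht hg a x)
  rw [Complex.norm_real, Real.norm_eq_abs, norm_mul] at this
  rw [this]
  exact mul_le_of_le_one_left (norm_nonneg _) norm_const_le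

lemma Y_le (t : ℝ) (v : ℝ × ℝ → ℝ) (a : ℕ) (x : ℝ) :
    ‖Y σ v t a x‖ ≤ ‖ift (fun ξ => Yk σ a ξ * hat v t ξ) x‖ := by
  unfold Y
  rw [norm_mul]
  exact mul_le_of_le_one_left (norm_nonneg _) norm_const_le

lemma sup_le {t : ℝ} (gF : Good T F) (v : SchwartzMap (ℝ × ℝ) ℝ) (hM : MM σ (VV v) < ∞)
    (ht : t ∈ Set.Icc (-T) T)
    (hg : ∀ ξ, hat F t ξ = ((Real.cosh (σ * ξ) : ℝ) : ℂ) * hat v t ξ) (a : ℕ) (ha : a ≤ 1) (x : ℝ) :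
    (dxn F a (x, t)) ^ 2 ≤ (C1 * MM σ (VV v)).toReal := by
  have hfin : C1 * MM σ (VV v) ≠ ∞ := (ENNReal.mul_lt_top C1_lt_top hM).ne
  have h1 : ‖ift (fun ξ => Uk σ a ξ * hat v t ξ) x‖ₑ ≤
      ∫⁻ ξ, ENNReal.ofReal (1 + |ξ|) * ENNReal.ofReal (Real.cosh (σ * ξ)) * ‖hat v t ξ‖ₑ := by
    unfold ift
    refine (enorm_integral_le_lintegral_enorm _).trans (lintegral_mono fun ξ => ?_)
    rw [enorm_mul, enorm_mul, ← ofReal_norm (cexp _), norm_exp1, ENNReal.ofReal_one, one_mul]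
    refine mul_le_mul' ?_ le_rfl
    rw [← ofReal_norm, ← ENNReal.ofReal_mul (by positivity)]
    apply ENNReal.ofReal_le_ofReal
    refine (norm_Uk σ a ξ).trans ?_
    refine mul_le_mul_of_nonneg_right ?_ (Real.cosh_pos _).le
    interval_cases a
    · simp
    · simp
  have h2 := (pow_le_pow_left' h1 2).trans (L1_time (measurable_VV v) (hh_ae v hM t))
  rw [← sq_abs, ← ENNReal.ofReal_le_iff_le_toReal hfin]
  refine le_trans ?_ h2
  rw [ENNReal.ofReal_pow (abs_nonneg _), ← ofReal_norm]
  exact pow_le_pow_left' (ENNReal.ofReal_le_ofReal (U_le gF ht hg a x)) 2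

end

set_option maxHeartbeats 1000000 in
lemma EE_le {μ a b c d q0 q1 q2 y0 y1 y2 L A B Cc D Y0 Y1 Y2 : ℝ} (hμ : |μ| = 1)
    (ha : |a| ≤ A) (hb : |b| ≤ B) (hc : |c| ≤ Cc) (hd : |d| ≤ D)
    (h0 : 0 ≤ y0) (h1 : 0 ≤ y1) (h2 : 0 ≤ y2)
    (hy0 : y0 ≤ Y0) (hy1 : y1 ≤ Y1) (hy2 : y2 ≤ Y2)
    (hq0 : |q0| ≤ y0 ^ 2) (hq1 : |q1| ≤ 2 * (y0 * y1)) (hq2 : |q2| ≤ 2 * (y1 * y1 + y0 * y2))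
    (haL : a ^ 2 ≤ L) (hbL : b ^ 2 ≤ L) :
    |EE μ a b c d q0 q1 q2| ≤ 8 * (1 + L + L ^ 2) *
      (A * B * (Y0 * Y0) + A * Y0 * (A * Y1) + Cc * Y0 * (B * Y0) + Cc * Y0 * (A * Y1) +
        D * Y0 * (Cc * Y0) + D * Y0 * (B * Y1) + D * A * (Y1 * Y1) + D * Y0 * (A * Y2)) := by
  have hL : 0 ≤ L := (sq_nonneg a).trans haL
  have hA := (abs_nonneg a).trans ha
  have hB := (abs_nonneg b).trans hb
  have hC := (abs_nonneg c).trans hc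
  have hD := (abs_nonneg d).trans hd
  have hY0 := h0.trans hy0
  have hY1 := h1.trans hy1
  have hY2 := h2.trans hy2
  have k0 : |q0| ≤ Y0 * Y0 := hq0.trans (by rw [sq]; gcongr)
  have k1 : |q1| ≤ 2 * (Y0 * Y1) := hq1.trans (by gcongr)
  have k2 : |q2| ≤ 2 * (Y1 * Y1 + Y0 * Y2) := hq2.trans (by gcongr)
  have w1 : |2 * a - 2 * c - 2 * μ / 3 * a ^ 3 + 10 * μ / 3 * (a * b ^ 2 + a ^ 2 * c) + 1 / 3 * a ^ 5|
      ≤ 4 * (1 + L + L ^ 2) * (A + Cc) := by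
    have e1 : |2 * μ / 3 * a ^ 3| ≤ 2 / 3 * (L * A) := by
      have : 2 * μ / 3 * a ^ 3 = 2 / 3 * (μ * (a ^ 2 * a)) := by ring
      rw [this, abs_mul, abs_mul, hμ, abs_mul, abs_of_nonneg (sq_nonneg a), one_mul,
        abs_of_pos (by norm_num : (0:ℝ) < 2 / 3)]
      gcongr
    have e2 : |10 * μ / 3 * (a * b ^ 2 + a ^ 2 * c)| ≤ 10 / 3 * (L * A + L * Cc) := by
      have : 10 * μ / 3 * (a * b ^ 2 + a ^ 2 * c) = 10 / 3 * (μ * (b ^ 2 * a + a ^ 2 * c)) := by ring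
      rw [this, abs_mul, abs_mul, hμ, one_mul, abs_of_pos (by norm_num : (0:ℝ) < 10 / 3)]
      refine mul_le_mul_of_nonneg_left ((abs_add_le _ _).trans ?_) (by norm_num)
      rw [abs_mul, abs_mul, abs_of_nonneg (sq_nonneg a), abs_of_nonneg (sq_nonneg b)]
      gcongr
    have e3 : |1 / 3 * a ^ 5| ≤ 1 / 3 * (L ^ 2 * A) := by
      have : 1 / 3 * a ^ 5 = 1 / 3 * ((a ^ 2) ^ 2 * a) := by ring
      rw [this, abs_mul, abs_mul, abs_of_nonneg (sq_nonneg (a ^ 2)),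
        abs_of_pos (by norm_num : (0:ℝ) < 1 / 3)]
      gcongr
    have hLA := mul_nonneg hL hA
    have hLC := mul_nonneg hL hC
    have hLA2 := mul_nonneg (mul_nonneg hL hL) hA
    have hLC2 := mul_nonneg (mul_nonneg hL hL) hC
    rw [abs_le] at e1 e2 e3 ha hc ⊢
    constructor <;> linarith [ha.1, ha.2, hc.1, hc.2, e1.1, e1.2, e2.1, e2.2, e3.1, e3.2]
  have w2 : |q0 * b + q1 * a| ≤ Y0 * Y0 * B + 2 * (Y0 * Y1) * A := by
    refine (abs_add_le _ _).trans ?_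
    rw [abs_mul, abs_mul]
    gcongr
  have w3 : |q0 * c + 2 * q1 * b + q2 * a| ≤
      Y0 * Y0 * Cc + 2 * (2 * (Y0 * Y1)) * B + 2 * (Y1 * Y1 + Y0 * Y2) * A := by
    refine (abs_add_le _ _).trans (add_le_add ((abs_add_le _ _).trans (add_le_add ?_ ?_)) ?_)
    · rw [abs_mul]; gcongr
    · rw [abs_mul, abs_mul, abs_two]; gcongr
    · rw [abs_mul]; gcongr
  unfold EE
  have step : |μ * (2 * a - 2 * c - 2 * μ / 3 * a ^ 3 + 10 * μ / 3 * (a * b ^ 2 + a ^ 2 * c) + 1 / 3 * a ^ 5) *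
      (q0 * b + q1 * a) - 2 * μ * d * (q0 * c + 2 * q1 * b + q2 * a)| ≤
      4 * (1 + L + L ^ 2) * (A + Cc) * (Y0 * Y0 * B + 2 * (Y0 * Y1) * A) +
      2 * D * (Y0 * Y0 * Cc + 2 * (2 * (Y0 * Y1)) * B + 2 * (Y1 * Y1 + Y0 * Y2) * A) := by
    refine (abs_sub _ _).trans (add_le_add ?_ ?_)
    · rw [abs_mul, abs_mul, hμ, one_mul]; gcongr
    · rw [abs_mul, abs_mul, abs_mul, hμ, abs_two, mul_one]; gcongr
  refine step.trans ?_
  have K1 : 1 ≤ 1 + L + L ^ 2 := by nlinarith [sq_nonneg L]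
  have f1 : 2 * D * (Y0 * Y0 * Cc + 2 * (2 * (Y0 * Y1)) * B + 2 * (Y1 * Y1 + Y0 * Y2) * A) ≤
      8 * (1 + L + L ^ 2) * (D * Y0 * (Cc * Y0) + D * Y0 * (B * Y1) + D * A * (Y1 * Y1) + D * Y0 * (A * Y2)) := by
    have g1 : 2 * D * (Y0 * Y0 * Cc + 2 * (2 * (Y0 * Y1)) * B + 2 * (Y1 * Y1 + Y0 * Y2) * A) ≤
      8 * (D * Y0 * (Cc * Y0) + D * Y0 * (B * Y1) + D * A * (Y1 * Y1) + D * Y0 * (A * Y2)) := by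
      have t1 : 0 ≤ D * Y0 * (Cc * Y0) := by positivity
      have t2 : 0 ≤ D * A * (Y1 * Y1) := by positivity
      have t3 : 0 ≤ D * Y0 * (A * Y2) := by positivity
      linarith
    refine g1.trans ?_
    have t : 0 ≤ D * Y0 * (Cc * Y0) + D * Y0 * (B * Y1) + D * A * (Y1 * Y1) + D * Y0 * (A * Y2) := by
      positivity
    have := le_mul_of_one_le_left t K1
    linarith
  have f2 : 4 * (1 + L + L ^ 2) * (A + Cc) * (Y0 * Y0 * B + 2 * (Y0 * Y1) * A) ≤
      8 * (1 + L + L ^ 2) * (A * B * (Y0 * Y0) + A * Y0 * (A * Y1) + Cc * Y0 * (B * Y0) + Cc * Y0 * (A * Y1)) := by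
    have g : (A + Cc) * (Y0 * Y0 * B + 2 * (Y0 * Y1) * A) ≤ 2 * (A * B * (Y0 * Y0) + A * Y0 * (A * Y1) + Cc * Y0 * (B * Y0) + Cc * Y0 * (A * Y1)) := by
      have t1 : 0 ≤ A * B * (Y0 * Y0) := by positivity
      have t2 : 0 ≤ Cc * Y0 * (B * Y0) := by positivity
      linarith
    calc _ = 4 * (1 + L + L ^ 2) * ((A + Cc) * (Y0 * Y0 * B + 2 * (Y0 * Y1) * A)) := by ring
      _ ≤ 4 * (1 + L + L ^ 2) * (2 * (A * B * (Y0 * Y0) + A * Y0 * (A * Y1) + Cc * Y0 * (B * Y0) + Cc * Y0 * (A * Y1))) := by gcongr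
      _ = _ := by ring
  linarith

/-- The eight products. -/
noncomputable def PP (σ : ℝ) (v : ℝ × ℝ → ℝ) (t x : ℝ) : ℝ≥0∞ :=
  zz (Uk σ 0) v t x * zz (Uk σ 1) v t x * (zz (Yk σ 0) v t x * zz (Yk σ 0) v t x) +
  zz (Uk σ 0) v t x * zz (Yk σ 0) v t x * (zz (Uk σ 0) v t x * zz (Yk σ 1) v t x) +
  zz (Uk σ 2) v t x * zz (Yk σ 0) v t x * (zz (Uk σ 1) v t x * zz (Yk σ 0) v t x) +
  zz (Uk σ 2) v t x * zz (Yk σ 0) v t x * (zz (Uk σ 0) v t x * zz (Yk σ 1) v t x) +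
  zz (Uk σ 3) v t x * zz (Yk σ 0) v t x * (zz (Uk σ 2) v t x * zz (Yk σ 0) v t x) +
  zz (Uk σ 3) v t x * zz (Yk σ 0) v t x * (zz (Uk σ 1) v t x * zz (Yk σ 1) v t x) +
  zz (Uk σ 3) v t x * zz (Uk σ 0) v t x * (zz (Yk σ 1) v t x * zz (Yk σ 1) v t x) +
  zz (Uk σ 3) v t x * zz (Yk σ 0) v t x * (zz (Uk σ 0) v t x * zz (Yk σ 2) v t x)

lemma Er_le {σ T μ t : ℝ} {F : ℝ × ℝ → ℝ} (hμ : |μ| = 1) (gF : Good T F)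
    (v : SchwartzMap (ℝ × ℝ) ℝ) (hM : MM σ (VV v) < ∞) (ht : t ∈ Set.Icc (-T) T)
    (hg : ∀ ξ, hat F t ξ = ((Real.cosh (σ * ξ) : ℝ) : ℂ) * hat v t ξ) (x : ℝ) :
    ‖Er σ μ F v t x‖ₑ ≤ 8 * (1 + C1 * MM σ (VV v) + (C1 * MM σ (VV v)) ^ 2) * PP σ v t x := by
  have hfin : C1 * MM σ (VV v) ≠ ∞ := (ENNReal.mul_lt_top C1_lt_top hM).ne
  have hre : ∀ z : ℂ, |-z.re| ≤ ‖z‖ := fun z => by rw [abs_neg]; exact Complex.abs_re_le_norm z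
  have h := EE_le hμ (U_le gF ht hg 0 x) (U_le gF ht hg 1 x) (U_le gF ht hg 2 x)
    (U_le gF ht hg 3 x) (norm_nonneg (Y σ v t 0 x)) (norm_nonneg (Y σ v t 1 x))
    (norm_nonneg (Y σ v t 2 x)) (Y_le t v 0 x) (Y_le t v 1 x) (Y_le t v 2 x)
    (q0 := Q0 σ v t x) (q1 := Q1 σ v t x) (q2 := Q2 σ v t x)
    ((hre _).trans (by rw [norm_pow])) ((hre _).trans (by rw [norm_mul, norm_mul]; simp))
    ((hre _).trans (by
      rw [norm_mul, Complex.norm_ofNat]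
      refine mul_le_mul_of_nonneg_left ((norm_add_le _ _).trans ?_) (by norm_num)
      rw [norm_mul, norm_mul]))
    (sup_le gF v hM ht hg 0 (by norm_num) x) (sup_le gF v hM ht hg 1 (by norm_num) x)
  unfold Er
  rw [← ofReal_norm, Real.norm_eq_abs]
  refine (ENNReal.ofReal_le_ofReal h).trans (le_of_eq ?_)
  have hL : 0 ≤ (C1 * MM σ (VV v)).toReal := ENNReal.toReal_nonneg
  rw [ENNReal.ofReal_mul (by positivity)]
  congr 1
  · rw [ENNReal.ofReal_mul (by norm_num), ENNReal.ofReal_add (by positivity) (by positivity),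
      ENNReal.ofReal_add (by positivity) (by positivity), ENNReal.ofReal_pow hL,
      ENNReal.ofReal_toReal hfin]
    simp
  · unfold PP zz
    repeat rw [ENNReal.ofReal_add (by positivity) (by positivity)]
    simp only [ENNReal.ofReal_mul (norm_nonneg _), ENNReal.ofReal_mul (mul_nonneg (norm_nonneg _) (norm_nonneg _)), ofReal_norm]

set_option maxHeartbeats 1000000 in
lemma PP_int {σ T : ℝ} (hσ : 0 < σ) {F : ℝ × ℝ → ℝ} (gF : Good T F) (v : SchwartzMap (ℝ × ℝ) ℝ)
    (hM : MM σ (VV v) < ∞)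
    (hF : ∀ s ∈ Set.Icc (-T) T, ∀ ξ, hat F s ξ = ((Real.cosh (σ * ξ) : ℝ) : ℂ) * hat v s ξ)
    {s : Set ℝ} (hs : MeasurableSet s) (hsT : s ⊆ Set.Icc (-T) T) :
    ∫⁻ t in s, ∫⁻ x, PP σ v t x ≤ 8 * (C2 * ENNReal.ofReal (σ ^ 2) * MM σ (VV v) ^ 2) := by
  have mU := fun a => measurable_zz (continuous_Uk σ a).measurable v
  have mY := fun a => measurable_zz (continuous_Yk σ a).measurable v
  have u := Sym_U σ
  have y := fun a => Sym_Y hσ a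
  have m0 := mU 0
  have m1 := mU 1
  have m2 := mU 2
  have m3 := mU 3
  have n0 := mY 0
  have n1 := mY 1
  have n2 := mY 2
  have p1 := pair gF v hM hF hs hsT (u 0) (u 1) (y 0) (y 0) (by norm_num) (by norm_num) (by norm_num)
    (by norm_num) (by norm_num) (by norm_num) (by ring)
  have p2 := pair gF v hM hF hs hsT (u 0) (y 0) (u 0) (y 1) (by norm_num) (by norm_num) (by norm_num)
    (by norm_num) (by norm_num) (by norm_num) (by ring)
  have p3 := pair gF v hM hF hs hsT (u 2) (y 0) (u 1) (y 0) (by norm_num) (by norm_num) (by norm_num)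
    (by norm_num) (by norm_num) (by norm_num) (by ring)
  have p4 := pair gF v hM hF hs hsT (u 2) (y 0) (u 0) (y 1) (by norm_num) (by norm_num) (by norm_num)
    (by norm_num) (by norm_num) (by norm_num) (by ring)
  have p5 := pair gF v hM hF hs hsT (u 3) (y 0) (u 2) (y 0) (by norm_num) (by norm_num) (by norm_num)
    (by norm_num) (by norm_num) (by norm_num) (by ring)
  have p6 := pair gF v hM hF hs hsT (u 3) (y 0) (u 1) (y 1) (by norm_num) (by norm_num) (by norm_num)
    (by norm_num) (by norm_num) (by norm_num) (by ring)
  have p7 := pair gF v hM hF hs hsT (u 3) (u 0) (y 1) (y 1) (by norm_num) (by norm_num) (by norm_num)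
    (by norm_num) (by norm_num) (by norm_num) (by ring)
  have p8 := pair gF v hM hF hs hsT (u 3) (y 0) (u 0) (y 2) (by norm_num) (by norm_num) (by norm_num)
    (by norm_num) (by norm_num) (by norm_num) (by ring)
  have k1 := (m0.mul m1).mul (n0.mul n0)
  have k2 := k1.add ((m0.mul n0).mul (m0.mul n1))
  have k3 := k2.add ((m2.mul n0).mul (m1.mul n0))
  have k4 := k3.add ((m2.mul n0).mul (m0.mul n1))
  have k5 := k4.add ((m3.mul n0).mul (m2.mul n0))
  have k6 := k5.add ((m3.mul n0).mul (m1.mul n1))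
  have k7 := k6.add ((m3.mul m0).mul (n1.mul n1))
  have k8 := k7.add ((m3.mul n0).mul (m0.mul n2))
  have e : ∫⁻ t in s, ∫⁻ x, PP σ v t x = ∫⁻ z, PP σ v z.1 z.2 ∂((volume.restrict s).prod volume) := by
    exact (lintegral_prod (fun z : ℝ × ℝ => PP σ v z.1 z.2) (Measurable.aemeasurable k8)).symm
  rw [e]
  unfold PP
  refine (lintegral_add_left k7 _).trans_le ((add_le_add ((lintegral_add_left k6 _).trans_le
    (add_le_add ((lintegral_add_left k5 _).trans_le (add_le_add ((lintegral_add_left k4 _).trans_le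
    (add_le_add ((lintegral_add_left k3 _).trans_le (add_le_add ((lintegral_add_left k2 _).trans_le
    (add_le_add ((lintegral_add_left k1 _).trans_le (add_le_add p1 p2)) p3)) p4)) p5)) p6)) p7)) p8).trans
    (le_of_eq (by ring)))

end MK


namespace MK
open Complex Filter Topology

lemma MM_eq (σ : ℝ) (V : ℝ × ℝ → ℂ) :
    (∫⁻ p : ℝ × ℝ, ENNReal.ofReal ((Real.cosh (σ * |p.1|)) ^ 2 * (1 + |p.1|) ^ 4 *
      (1 + |p.2 - p.1 ^ 3|) ^ (2 * (3 / 4 : ℝ))) * (‖V p‖₊ : ℝ≥0∞) ^ 2) = MM σ V := by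
  unfold MM
  refine lintegral_congr fun p => ?_
  unfold kk lam
  have hc : Real.cosh (σ * |p.1|) = Real.cosh (σ * p.1) := by
    rcases abs_choice p.1 with h | h
    · rw [h]
    · rw [h, mul_neg, Real.cosh_neg]
  have h1 : (0 : ℝ) ≤ 1 + |p.2 - p.1 ^ 3| := by positivity
  have hr : (1 + |p.2 - p.1 ^ 3|) ^ (2 * (3 / 4 : ℝ)) = ((1 + |p.2 - p.1 ^ 3|) ^ (3 / 4 : ℝ)) ^ 2 := by
    rw [mul_comm, Real.rpow_mul h1, Real.rpow_two]
  have h2 := Real.cosh_pos (σ * p.1)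
  rw [hc, hr, mul_pow, ← ENNReal.ofReal_pow (by positivity)]
  congr 1
  congr 1
  ring

lemma dxn_deriv {T : ℝ} {F : ℝ × ℝ → ℝ} (gF : Good T F) (t : ℝ) (n : ℕ) (x : ℝ) :
    iteratedDeriv n (fun y => F (y, t)) x = dxn F n (x, t) := by
  induction n generalizing x with
  | zero => simp [dxn]
  | succ n ih =>
    rw [iteratedDeriv_succ, funext ih]
    exact ((gF.dxn n).hasDerivAt_x x t).deriv

lemma pde_v {T μ : ℝ} {u : ℝ → ℝ → ℝ} (v : SchwartzMap (ℝ × ℝ) ℝ)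
    (hu : ∀ x t : ℝ, t ∈ Set.Icc (-T) T →
        deriv (fun τ => u x τ) t + iteratedDeriv 3 (fun y => u y t) x +
          μ * (u x t) ^ 2 * deriv (fun y => u y t) x = 0)
    (hv : ∀ x t' : ℝ, t' ∈ Set.Icc (-T) T → v (x, t') = u x t') :
    ∀ t ∈ Set.Ioo (-T) T, ∀ x,
      dt v (x, t) + dx (dx (dx v)) (x, t) + μ * v (x, t) ^ 2 * dx v (x, t) = 0 := by
  intro t ht x
  have ht' := Set.Ioo_subset_Icc_self ht
  have g := good_schwartz T v
  have h := hu x t ht'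
  have e1 : (fun y => u y t) = fun y => v (y, t) := funext fun y => (hv y t ht').symm
  have e2 : deriv (fun τ => u x τ) t = dt v (x, t) := by
    have : (fun τ => u x τ) =ᶠ[𝓝 t] fun τ => v (x, τ) := by
      filter_upwards [Ioo_mem_nhds ht.1 ht.2] with s hs
      exact (hv x s (Set.Ioo_subset_Icc_self hs)).symm
    rw [this.deriv_eq]
    exact (g.hasDerivAt_t x t).deriv
  rw [e2, e1, (g.hasDerivAt_x x t).deriv, dxn_deriv g, ← hv x t ht'] at h
  exact h

lemma En_eq {T μ t : ℝ} {U : ℝ → ℝ → ℝ} (gF : Good T (Function.uncurry U))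
    (ht : t ∈ Set.Icc (-T) T) :
    (∫ x : ℝ, (U x t) ^ 2) + (∫ x : ℝ, (deriv (fun y => U y t) x) ^ 2) +
          (∫ x : ℝ, (iteratedDeriv 2 (fun y => U y t) x) ^ 2) -
          (μ / 6) * (∫ x : ℝ, (U x t) ^ 4) -
          (5 * μ / 3) * (∫ x : ℝ, (U x t) ^ 2 * (deriv (fun y => U y t) x) ^ 2) +
          (1 / 18) * (∫ x : ℝ, (U x t) ^ 6) = En μ (Function.uncurry U) t := by
  have e0 : ∀ x, U x t = dxn (Function.uncurry U) 0 (x, t) := fun x => rfl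
  have e1 : ∀ x, deriv (fun y => U y t) x = dxn (Function.uncurry U) 1 (x, t) := fun x => by
    rw [← dxn_deriv gF, iteratedDeriv_one]; rfl
  have e2 : ∀ x, iteratedDeriv 2 (fun y => U y t) x = dxn (Function.uncurry U) 2 (x, t) := fun x => by
    rw [← dxn_deriv gF]; rfl
  simp_rw [e1, e2, e0]
  unfold En rho
  have d := fun n => ((gF.dxn n).SP).slice ht
  generalize Function.uncurry U = F at *
  have hw := wt_le_one
  have i1 : Integrable (fun x => dxn F 0 (x, t) ^ 2) := ((d 0).pow hw 1).integrable
  have i2 : Integrable (fun x => dxn F 1 (x, t) ^ 2) := ((d 1).pow hw 1).integrable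
  have i3 : Integrable (fun x => dxn F 2 (x, t) ^ 2) := ((d 2).pow hw 1).integrable
  have i4 : Integrable (fun x => dxn F 0 (x, t) ^ 4) := ((d 0).pow hw 3).integrable
  have i5 : Integrable (fun x => dxn F 0 (x, t) ^ 2 * dxn F 1 (x, t) ^ 2) :=
    (DD.mul (((d 0).toBB hw).pow 2) ((d 1).pow hw 1)).integrable
  have i6 : Integrable (fun x => dxn F 0 (x, t) ^ 6) := ((d 0).pow hw 5).integrable
  have j4 := i4.const_mul (μ / 6)
  have j5 := i5.const_mul (5 * μ / 3)
  have j6 := i6.const_mul (1 / 18)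
  have k2 : Integrable (fun x => dxn F 0 (x, t) ^ 2 + dxn F 1 (x, t) ^ 2) := i1.add i2
  have k3 : Integrable (fun x => dxn F 0 (x, t) ^ 2 + dxn F 1 (x, t) ^ 2 + dxn F 2 (x, t) ^ 2) :=
    k2.add i3
  have k4 : Integrable (fun x => dxn F 0 (x, t) ^ 2 + dxn F 1 (x, t) ^ 2 + dxn F 2 (x, t) ^ 2 -
    μ / 6 * dxn F 0 (x, t) ^ 4) := k3.sub j4
  have k5 : Integrable (fun x => dxn F 0 (x, t) ^ 2 + dxn F 1 (x, t) ^ 2 + dxn F 2 (x, t) ^ 2 -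
    μ / 6 * dxn F 0 (x, t) ^ 4 - 5 * μ / 3 * (dxn F 0 (x, t) ^ 2 * dxn F 1 (x, t) ^ 2)) := k4.sub j5
  rw [integral_add k5 j6, integral_sub k4 j5, integral_sub k3 j4, integral_add k2 i3,
    integral_add i1 i2, integral_const_mul, integral_const_mul, integral_const_mul]

lemma final_const {M s : ℝ≥0∞} :
    8 * (1 + C1 * M + (C1 * M) ^ 2) * (8 * (C2 * s * M ^ 2)) ≤
      (64 * C2 * (1 + C1) ^ 2) * s * M ^ 2 * (1 + M + M ^ 2) := by
  have : 1 + C1 * M + (C1 * M) ^ 2 ≤ (1 + C1) ^ 2 * (1 + M + M ^ 2) := by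
    have : (1 + C1) ^ 2 * (1 + M + M ^ 2) = 1 + C1 * M + (C1 * M) ^ 2 +
      (M + M ^ 2 + 2 * C1 + C1 * M + 2 * C1 * M ^ 2 + C1 ^ 2 + C1 ^ 2 * M) := by ring
    rw [this]
    exact le_self_add
  calc _ = 64 * C2 * s * M ^ 2 * (1 + C1 * M + (C1 * M) ^ 2) := by ring
    _ ≤ 64 * C2 * s * M ^ 2 * ((1 + C1) ^ 2 * (1 + M + M ^ 2)) := mul_le_mul' le_rfl this
    _ = _ := by ring

lemma KC_ne : 64 * C2 * (1 + C1) ^ 2 ≠ ∞ :=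
  ENNReal.mul_ne_top (ENNReal.mul_ne_top (by norm_num) C2_lt_top.ne)
    (ENNReal.pow_ne_top (ENNReal.add_ne_top.2 ⟨ENNReal.one_ne_top, C1_lt_top.ne⟩))

lemma const_bound (σ : ℝ) : (64 * C2 * (1 + C1) ^ 2) * ENNReal.ofReal (σ ^ 2) ≤
    ENNReal.ofReal (((64 * C2 * (1 + C1) ^ 2).toReal + 1) * σ ^ 2) := by
  rw [ENNReal.ofReal_mul (by positivity)]
  refine mul_le_mul' ?_ le_rfl
  conv_lhs => rw [← ENNReal.ofReal_toReal KC_ne]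
  exact ENNReal.ofReal_le_ofReal (by linarith)

lemma main {σ T μ t : ℝ} (hσ : 0 < σ) (hμ : μ = 1 ∨ μ = -1) (hT : 0 < T) {u U : ℝ → ℝ → ℝ}
    (hu : ∀ x t : ℝ, t ∈ Set.Icc (-T) T →
        deriv (fun τ => u x τ) t + iteratedDeriv 3 (fun y => u y t) x +
          μ * (u x t) ^ 2 * deriv (fun y => u y t) x = 0)
    (hU : ∀ x t : ℝ, (U x t : ℂ) = (1 / (2 * Real.pi) : ℂ) *
        ∫ ξ : ℝ, Complex.exp (Complex.I * x * ξ) * ((Real.cosh (σ * |ξ|) : ℝ) : ℂ) *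
          ∫ y : ℝ, Complex.exp (-Complex.I * y * ξ) * (u y t : ℂ))
    (gF : Good T (Function.uncurry U)) (ht : t ∈ Set.Icc 0 T) (v : SchwartzMap (ℝ × ℝ) ℝ)
    (hv : ∀ x t' : ℝ, t' ∈ Set.Icc (-T) T → v (x, t') = u x t') (hM : MM σ (VV v) < ∞) :
    ENNReal.ofReal (En μ (Function.uncurry U) t) ≤ ENNReal.ofReal (En μ (Function.uncurry U) 0) +
      ENNReal.ofReal (((64 * C2 * (1 + C1) ^ 2).toReal + 1) * σ ^ 2) * MM σ (VV v) ^ 2 *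
        (1 + MM σ (VV v) + MM σ (VV v) ^ 2) := by
  have hF : ∀ s ∈ Set.Icc (-T) T, ∀ ξ, hat (Function.uncurry U) s ξ =
      ((Real.cosh (σ * ξ) : ℝ) : ℂ) * hat v s ξ := by
    intro s hs ξ
    refine hat_U_eq gF v hM hs (fun x => ?_) ξ
    refine (hU x s).trans ?_
    congr 1
    unfold ift
    refine integral_congr_ae (Eventually.of_forall fun ξ => ?_)
    beta_reduce
    have hc : Real.cosh (σ * |ξ|) = Real.cosh (σ * ξ) := by
      rcases abs_choice ξ with h | h
      · rw [h]
      · rw [h, mul_neg, Real.cosh_neg]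
    rw [hc, mul_assoc]
    congr 2
    unfold hat ft
    simp only [hv _ s hs]
  have hμ2 : μ ^ 2 = 1 := by rcases hμ with h | h <;> rw [h] <;> norm_num
  have hμ1 : |μ| = 1 := by rcases hμ with h | h <;> rw [h] <;> norm_num
  refine (increment hσ hμ2 gF v hT ht hF (pde_v v hu hv)).trans (add_le_add le_rfl ?_)
  have hsub : Set.Ioo 0 t ⊆ Set.Icc (-T) T := fun s hs =>
    ⟨by linarith [hs.1], by linarith [hs.2, ht.2]⟩
  have hfin : C1 * MM σ (VV v) ≠ ∞ := (ENNReal.mul_lt_top C1_lt_top hM).ne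
  have hK : 8 * (1 + C1 * MM σ (VV v) + (C1 * MM σ (VV v)) ^ 2) ≠ ∞ :=
    ENNReal.mul_ne_top (by norm_num) (ENNReal.add_ne_top.2
      ⟨ENNReal.add_ne_top.2 ⟨ENNReal.one_ne_top, hfin⟩, ENNReal.pow_ne_top hfin⟩)
  calc ∫⁻ s in Set.Ioo 0 t, ∫⁻ x, ‖Er σ μ (Function.uncurry U) v s x‖ₑ
      ≤ ∫⁻ s in Set.Ioo 0 t, 8 * (1 + C1 * MM σ (VV v) + (C1 * MM σ (VV v)) ^ 2) *
          ∫⁻ x, PP σ v s x := by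
        refine setLIntegral_mono' measurableSet_Ioo fun s hs => ?_
        rw [← lintegral_const_mul' _ _ hK]
        exact lintegral_mono fun x => Er_le hμ1 gF v hM (hsub hs) (hF s (hsub hs)) x
    _ = 8 * (1 + C1 * MM σ (VV v) + (C1 * MM σ (VV v)) ^ 2) *
          ∫⁻ s in Set.Ioo 0 t, ∫⁻ x, PP σ v s x := lintegral_const_mul' _ _ hK
    _ ≤ 8 * (1 + C1 * MM σ (VV v) + (C1 * MM σ (VV v)) ^ 2) *
          (8 * (C2 * ENNReal.ofReal (σ ^ 2) * MM σ (VV v) ^ 2)) :=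
        mul_le_mul' le_rfl (PP_int hσ gF v hM hF measurableSet_Ioo hsub)
    _ ≤ _ := final_const
    _ ≤ _ := mul_le_mul' (mul_le_mul' (const_bound σ) le_rfl) le_rfl

end MK

/-- Theorem 1.2 of the paper (almost conservation law): there exist `b ∈ (1/2,1)` and
`C > 0`, independent of `u`, `σ` and `T₀`, such that for any smooth solution `u` of mKdV
on `[-T₀,T₀]` with `U = cosh(σ|Dₓ|)u` well defined and Schwartz in `x` uniformly in `t`,
the modified energy `A_σ` satisfies
`A_σ(t) ≤ A_σ(0) + C σ² N⁴ (1 + N² + N⁴)` for `t ∈ [0,T₀]`, where `N` is the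
`X^{σ,2,b}`-norm (with hyperbolic-cosine weight) of any Schwartz extension `v` of `u`. -/
theorem almost_conservation_law :
    ∃ b ∈ Set.Ioo (1 / 2 : ℝ) 1, ∃ C > 0,
      ∀ σ : ℝ, 0 < σ → ∀ μ : ℝ, (μ = 1 ∨ μ = -1) → ∀ T₀ : ℝ, 0 < T₀ →
      ∀ u U : ℝ → ℝ → ℝ,
      ContDiff ℝ (⊤ : ℕ∞) (Function.uncurry u) →
      (∀ x t : ℝ, t ∈ Set.Icc (-T₀) T₀ →
        deriv (fun τ => u x τ) t + iteratedDeriv 3 (fun y => u y t) x +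
          μ * (u x t) ^ 2 * deriv (fun y => u y t) x = 0) →
      (∀ x t : ℝ, (U x t : ℂ) = (1 / (2 * Real.pi) : ℂ) *
        ∫ ξ : ℝ, Complex.exp (Complex.I * x * ξ) * ((Real.cosh (σ * |ξ|) : ℝ) : ℂ) *
          ∫ y : ℝ, Complex.exp (-Complex.I * y * ξ) * (u y t : ℂ)) →
      ContDiff ℝ (⊤ : ℕ∞) (Function.uncurry U) →
      (∀ k n : ℕ, ∃ D : ℝ, ∀ x t : ℝ, t ∈ Set.Icc (-T₀) T₀ →
        (1 + |x|) ^ k * ‖iteratedFDeriv ℝ n (Function.uncurry U) (x, t)‖ ≤ D) →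
      ∀ t ∈ Set.Icc (0 : ℝ) T₀,
      ∀ v : SchwartzMap (ℝ × ℝ) ℝ, (∀ x t' : ℝ, t' ∈ Set.Icc (-T₀) T₀ → v (x, t') = u x t') →
      ∀ A : ℝ → ℝ,
      (∀ τ : ℝ, A τ =
        (∫ x : ℝ, (U x τ) ^ 2) + (∫ x : ℝ, (deriv (fun y => U y τ) x) ^ 2) +
          (∫ x : ℝ, (iteratedDeriv 2 (fun y => U y τ) x) ^ 2) -
          (μ / 6) * (∫ x : ℝ, (U x τ) ^ 4) -
          (5 * μ / 3) * (∫ x : ℝ, (U x τ) ^ 2 * (deriv (fun y => U y τ) x) ^ 2) +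
          (1 / 18) * (∫ x : ℝ, (U x τ) ^ 6)) →
      ∀ N : ℝ≥0∞,
      N = (∫⁻ p : ℝ × ℝ,
          ENNReal.ofReal ((Real.cosh (σ * |p.1|)) ^ 2 * (1 + |p.1|) ^ 4 *
            (1 + |p.2 - p.1 ^ 3|) ^ (2 * b)) *
          (‖∫ q : ℝ × ℝ, Complex.exp (-Complex.I * (q.1 * p.1 + q.2 * p.2)) * (v q : ℂ)‖₊ :
            ℝ≥0∞) ^ 2) ^ ((1 : ℝ) / 2) →
      ENNReal.ofReal (A t) ≤
        ENNReal.ofReal (A 0) +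
          ENNReal.ofReal (C * σ ^ 2) * N ^ 4 * (1 + N ^ 2 + N ^ 4) := by
  refine ⟨3 / 4, by norm_num, (64 * MK.C2 * (1 + MK.C1) ^ 2).toReal + 1, by positivity, ?_⟩
  intro σ hσ μ hμ T₀ hT u U _ hu hU hUs hUd t ht v hv A hA N hN
  have gF : MK.Good T₀ (Function.uncurry U) := ⟨hUs, hUd⟩
  have hN' : N = (MK.MM σ (MK.VV v)) ^ ((1 : ℝ) / 2) := by
    rw [hN, ← MK.MM_eq]; rfl
  have hN2 : N ^ 2 = MK.MM σ (MK.VV v) := by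
    rw [hN', ← ENNReal.rpow_natCast, ← ENNReal.rpow_mul]; norm_num
  have hN4 : N ^ 4 = MK.MM σ (MK.VV v) ^ 2 := by rw [← hN2]; ring
  have h0 : (0 : ℝ) ∈ Set.Icc (-T₀) T₀ := ⟨by linarith, hT.le⟩
  have h1 : t ∈ Set.Icc (-T₀) T₀ := ⟨by linarith [ht.1], ht.2⟩
  rw [hA t, hA 0, MK.En_eq gF h1, MK.En_eq gF h0, hN2, hN4]
  by_cases hM : MK.MM σ (MK.VV v) < ∞
  · exact MK.main hσ hμ hT hu hU gF ht v hv hM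
  · rw [not_lt, top_le_iff] at hM
    have hc : ENNReal.ofReal (((64 * MK.C2 * (1 + MK.C1) ^ 2).toReal + 1) * σ ^ 2) ≠ 0 := by
      have : 0 < ((64 * MK.C2 * (1 + MK.C1) ^ 2).toReal + 1) * σ ^ 2 := by positivity
      simpa using this
    have h2 : (∞ : ℝ≥0∞) ^ 2 = ∞ := by simp
    rw [hM, h2, ENNReal.mul_top hc, add_top, ENNReal.top_mul_top, add_top]
    exact le_top
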